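/- Let a₀ > 0 and let V : ℝ² → ℝ satisfy |V(w)| ≤ a₀² for all w ∈ ℝ². Assume u : ℝ² → ℝ solves -Δu + Vu = 0 in ℝ² with |u(0)| = 1 and |u(w)| ≤ exp(c₀|w|) for all w ∈ ℝ². Then there exist constants C̄₀ > 0 (depending on a₀ and c₀) and R̄₀ > 0 such that for all R ≥ R̄₀: inf over w₀ with |w₀| = R of sup over B₁(w₀) of |u| is at least exp(-C̄₀ R (log R)^{3/2}). -/

import Mathlib

/-!
Put `ε = σ / √(log R)` with a small constant `σ` and rescale about `w₀`: `U z = u (w₀ + ε z)` satisfies `|ΔU| ≤ δ |U|` with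
`δ ≈ ε²`, lives at scale `ρ ≈ R √(log R)`, and `δ log ρ` is as small as desired.  The claim becomes
`unit_scale`: such a `U`, of size at most `e ^ ρ` on the disc of radius `4ρ` and at least `1`
somewhere on the circle of radius `ρ`, has size at least `exp (-C ρ log ρ)` near `0`, and
`ρ log ρ ≈ R (log R) ^ (3/2)`.

*A positive multiplier.*  One would like to divide `U` by a positive solution `φ` of the same
equation, but on a disc of radius `ρ` this needs `δ ρ²` small.  It is made affordable by changing
the equation near the zeros of `U`.  Fix the lattice `100 ℤ²` and near each lattice point `q` a
probability density `n_q`; every `ζ` is an affine combination `∑ w_q(ζ) bary n_q` of nearby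
barycentres (`exists_comp`).  The kernel `log |z - ζ| - ∑ w_q(ζ) (log * n_q)(z)` has no mass and no
first moment, so it decays like `|z - ζ|⁻²`, and the corresponding Newtonian potential on the disc
costs only `log ρ` (`Comp.N_le`).  As `δ log ρ` is small, Picard iteration gives `φ = 1 + η` with
`|η| ≤ 1/2` and `Δφ ≈ V φ - ∑ A_q n_q`, where `V ≈ ΔU / U` (`exists_mult`).  If `U` vanishes within
`11` of `q`, then `n_q` is chosen concentrated near zeros of `U`, so that `n_q |U|` is negligible,
even after convolution with `1 / |z|`, while the `1/2`-Riesz potential of `n_q` stays bounded.  This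
is possible because `U` vanishes on every small circle about a zero, hence on a set large enough to
carry such densities (`exists_zero_circle`, `exists_dens`).  The remaining lattice points
are the *holes*: those with no zero of `U` within `11`, the origin, and those beyond radius
`3ρ - 50`.

*Reduction to holomorphic functions.*  Off the holes `f = U / φ` satisfies `div (φ² ∇f) ≈ 0`, that
is, `P = φ ∂f` satisfies `∂̄P ≈ -(∂ log φ) conj P`.  Conjugating by `exp (-ω)`, where
`∂̄ω = -(∂ log φ) conj P / P`, makes it close to a function `H₁` holomorphic off the holes.  Here `ω`
is a Cauchy transform whose density is dominated by `δ` times a function of bounded Kato norm, so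
`S = Re ω` varies by at most `1` at unit scale, again because `δ log ρ` is small (`Comp.T_osc`).
This is `reduction`.

*Conclusion.*  Suppose `|U| < exp (-C ρ log ρ)` near `0`.  Let `k ≈ 3Kρ` with a large constant `K`,
and let `M` be the maximum of `|H₁ z / z ^ k|` off the holes; by `max_principle` it is attained on
the outer circle or next to a hole.  Moving towards the origin by unit steps, integrating `∇f` away
from the holes and using the Harnack inequality (`harnack`) inside those where `U` has no zero,
bounds `|U| e ^ (-S)` on the disc of radius `3ρ - 60` by `M |z| ^ k` plus the contribution of the
origin (`descent`).  If the maximum is attained far out, the growth bound for `U` and `|z| ^ k`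
being much larger than `ρ ^ k` make `M ρ ^ k` tiny; if next to the hole at `0`, the smallness of `U` there does; if next to
another hole, one unit step inwards gains `((|z| - 1) / |z|) ^ k ≤ e ^ (-K)`, so that the term with
`M` is absorbed and `M` is controlled by the origin.  In all cases `U` is too small on the circle of
radius `ρ`.
-/

open Metric

/-- The Laplacian of a function on the plane (identified with `ℂ`). -/
noncomputable def lap (u : ℂ → ℝ) (z : ℂ) : ℝ :=
  fderiv ℝ (fun w => fderiv ℝ u w 1) z 1 +
    fderiv ℝ (fun w => fderiv ℝ u w Complex.I) z Complex.I

/-! ### The Cauchy formula -/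

namespace Landis

open MeasureTheory Filter Topology Set
open scoped ContDiff ComplexConjugate Convolution

/-- The Wirtinger derivative `∂f/∂z̄`. -/
noncomputable def dbar (f : ℂ → ℂ) (z : ℂ) : ℂ :=
  (fderiv ℝ f z 1 + Complex.I * fderiv ℝ f z Complex.I) / 2

/-- The Wirtinger derivative `∂u/∂z` of a real-valued function; it encodes the gradient of `u`. -/
noncomputable def gr (u : ℂ → ℝ) (z : ℂ) : ℂ :=
  ((fderiv ℝ u z 1 : ℂ) - Complex.I * (fderiv ℝ u z Complex.I : ℂ)) / 2

/-- The Cauchy transform without its usual normalisation `1 / π`. -/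
noncomputable def T (g : ℂ → ℂ) (z : ℂ) : ℂ := ∫ ζ, g ζ * (z - ζ)⁻¹

/-- The total mass of `(1 + |w|²)⁻²`; it plays the role of `π`, and only its positivity matters. -/
noncomputable def cc : ℝ := ∫ w : ℂ, ((1 + ‖w‖ ^ 2) ^ 2)⁻¹

lemma intOn_rpow {p : ℝ} (hp : p < 2) (R : ℝ) :
    IntegrableOn (fun z : ℂ => ‖z‖ ^ (-p)) (ball 0 R) := by
  rw [integrableOn_fun_norm_addHaar (E := ℂ) volume (f := fun r : ℝ => r ^ (-p))]
  have h1 : IntegrableOn (fun y : ℝ => y ^ (1 - p)) (Ioo 0 R) := by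
    by_cases hR : 0 ≤ R
    · have := (intervalIntegral.intervalIntegrable_rpow' (a := 0) (b := R) (r := 1 - p) (by linarith))
      rw [intervalIntegrable_iff_integrableOn_Ioo_of_le hR] at this
      exact this
    · rw [Ioo_eq_empty (by linarith)]; simp
  refine h1.congr_fun ?_ measurableSet_Ioo
  intro y hy
  simp only [Complex.finrank_real_complex, smul_eq_mul]
  rw [sub_eq_add_neg, Real.rpow_add hy.1]; simp

lemma locInt_of_bound {E : Type*} [NormedAddCommGroup E] {f : ℂ → E} (hm : AEStronglyMeasurable f)
    {p : ℝ} (hp : p < 2) (hb : ∀ R : ℝ, ∃ C : ℝ, ∀ z ∈ ball (0 : ℂ) R, ‖f z‖ ≤ C * ‖z‖ ^ (-p)) :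
    LocallyIntegrable f := by
  rw [locallyIntegrable_iff]
  intro k hk
  obtain ⟨R, hR⟩ := hk.isBounded.subset_ball 0
  obtain ⟨C, hC⟩ := hb R
  refine IntegrableOn.mono_set ?_ hR
  refine Integrable.mono' (((intOn_rpow hp R).const_mul C)) hm.restrict ?_
  filter_upwards [ae_restrict_mem measurableSet_ball] with z hz
  exact hC z hz

lemma locInt_inv : LocallyIntegrable (fun z : ℂ => z⁻¹) := by
  refine locInt_of_bound (by fun_prop) (p := 1) (by norm_num) fun R => ⟨1, fun z hz => ?_⟩
  rw [norm_inv, Real.rpow_neg_one, one_mul]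

lemma abs_log_le {r R : ℝ} (hr : 0 ≤ r) (hR : r < R) : |Real.log r| ≤ (1 + R ^ 2) * r⁻¹ := by
  rcases hr.eq_or_lt with rfl | hr
  · simp
  have h1 : Real.log r ≤ r := (Real.log_le_sub_one_of_pos hr).trans (by linarith)
  have h2 : -Real.log r ≤ r⁻¹ := by
    rw [← Real.log_inv]
    exact (Real.log_le_sub_one_of_pos (by positivity)).trans (by linarith)
  have h3 : r ≤ R ^ 2 * r⁻¹ := by
    rw [← div_eq_mul_inv, le_div_iff₀ hr]; nlinarith
  have h4 : 0 < r⁻¹ := by positivity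
  rw [abs_le]; constructor <;> nlinarith [sq_nonneg R]

lemma locInt_log : LocallyIntegrable (fun z : ℂ => Real.log ‖z‖) := by
  refine locInt_of_bound (Real.measurable_log.comp measurable_norm).aestronglyMeasurable
    (p := 1) (by norm_num) fun R => ⟨1 + R ^ 2, fun z hz => ?_⟩
  rw [Real.rpow_neg_one, Real.norm_eq_abs]
  exact abs_log_le (norm_nonneg _) (by simpa using hz)

lemma integrable_sq_kernel : Integrable (fun w : ℂ => ((1 + ‖w‖ ^ 2) ^ 2)⁻¹) := by
  have := integrable_rpow_neg_one_add_norm_sq (E := ℂ) (μ := volume) (r := 4)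
    (by rw [Complex.finrank_real_complex]; norm_num)
  refine this.congr (Eventually.of_forall fun w => ?_)
  simp only
  rw [show (-4 / 2 : ℝ) = -(2 : ℕ) by norm_num, Real.rpow_neg (by positivity), Real.rpow_natCast]

lemma cc_pos : 0 < cc := by
  unfold cc
  rw [integral_pos_iff_support_of_nonneg (fun w => by positivity) integrable_sq_kernel]
  have : Function.support (fun w : ℂ => ((1 + ‖w‖ ^ 2) ^ 2)⁻¹) = univ := by
    ext w; simp; positivity
  rw [this]; simp

/-- The derivative of the regularised Cauchy kernel `ȳ / (|y|² + e²)`. -/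
lemma hasFDerivAt_regker {e : ℝ} (he : 0 < e) (y : ℂ) :
    ∃ D : ℂ →L[ℝ] ℂ, HasFDerivAt (fun y : ℂ => conj y / (y * conj y + (e : ℂ) ^ 2)) D y ∧
      ∀ v, D v = (conj v * (y * conj y + (e : ℂ) ^ 2) - conj y * (v * conj y + y * conj v)) /
        (y * conj y + (e : ℂ) ^ 2) ^ 2 := by
  have hne : y * conj y + (e : ℂ) ^ 2 ≠ 0 := by
    rw [Complex.mul_conj]
    have : (0 : ℝ) < Complex.normSq y + e ^ 2 := by have := Complex.normSq_nonneg y; positivity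
    exact_mod_cast this.ne'
  have h1 : HasFDerivAt (fun y : ℂ => conj y) (Complex.conjCLE : ℂ →L[ℝ] ℂ) y :=
    Complex.conjCLE.hasFDerivAt
  have h2 : HasFDerivAt (fun y : ℂ => y) (ContinuousLinearMap.id ℝ ℂ) y := hasFDerivAt_id y
  have h3 := (h2.mul h1).add_const ((e : ℂ) ^ 2)
  have h4 := h1.mul ((((hasDerivAt_inv hne).hasFDerivAt).restrictScalars ℝ).comp y h3)
  refine ⟨_, h4, fun v => ?_⟩
  simp
  field_simp
  ring

/-- Regularised Cauchy formula: integrate by parts against `ȳ / (|y|² + e²)`. -/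
lemma reg_cauchy {h : ℂ → ℂ} (hh : ContDiff ℝ 1 h) (hc : HasCompactSupport h) {e : ℝ} (he : 0 < e) :
    ∫ y, dbar h y * (conj y / (y * conj y + (e : ℂ) ^ 2)) =
      -∫ y, h y * ((e : ℂ) ^ 2 / (y * conj y + (e : ℂ) ^ 2) ^ 2) := by
  set k : ℂ → ℂ := fun y => conj y / (y * conj y + (e : ℂ) ^ 2) with hk
  have hne : ∀ y : ℂ, y * conj y + (e : ℂ) ^ 2 ≠ 0 := by
    intro y
    rw [Complex.mul_conj]
    have : (0 : ℝ) < Complex.normSq y + e ^ 2 := by have := Complex.normSq_nonneg y; positivity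
    exact_mod_cast this.ne'
  have hkd : ∀ y, DifferentiableAt ℝ k y := fun y => by
    obtain ⟨D, hD, -⟩ := hasFDerivAt_regker he y
    exact hD.differentiableAt
  have hkv : ∀ y v, fderiv ℝ k y v = (conj v * (y * conj y + (e : ℂ) ^ 2) -
      conj y * (v * conj y + y * conj v)) / (y * conj y + (e : ℂ) ^ 2) ^ 2 := fun y v => by
    obtain ⟨D, hD, hv⟩ := hasFDerivAt_regker he y
    rw [hD.fderiv, hv]
  have hkc : Continuous k := continuous_iff_continuousAt.2 fun y => (hkd y).continuousAt
  have hkvc : ∀ v, Continuous fun y => fderiv ℝ k y v := fun v => by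
    simp_rw [hkv]
    refine Continuous.div (by fun_prop) (by fun_prop) fun y => pow_ne_zero _ (hne y)
  have hhv : ∀ v, Continuous fun y => fderiv ℝ h y v := fun v =>
    (hh.continuous_fderiv (by simp)).clm_apply continuous_const
  have hhvc : ∀ v, HasCompactSupport fun y => fderiv ℝ h y v := fun v => hc.fderiv_apply ℝ v
  have key : ∀ v, ∫ y, k y * fderiv ℝ h y v = -∫ y, fderiv ℝ k y v * h y := fun v =>
    integral_mul_fderiv_eq_neg_fderiv_mul_of_integrable
      (((hkvc v).mul hh.continuous).integrable_of_hasCompactSupport hc.mul_left)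
      ((hkc.mul (hhv v)).integrable_of_hasCompactSupport (hhvc v).mul_left)
      ((hkc.mul hh.continuous).integrable_of_hasCompactSupport hc.mul_left)
      (fun x _ => hkd x) (fun x _ => hh.differentiable (by simp) x)
  have i1 : ∀ v, Integrable fun y => k y * fderiv ℝ h y v := fun v =>
    ((hkc.mul (hhv v)).integrable_of_hasCompactSupport (hhvc v).mul_left)
  have i2 : ∀ v, Integrable fun y => fderiv ℝ k y v * h y := fun v =>
    (((hkvc v).mul hh.continuous).integrable_of_hasCompactSupport hc.mul_left)
  calc ∫ y, dbar h y * k y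
      = ∫ y, ((1 / 2 : ℂ) * (k y * fderiv ℝ h y 1) +
          (Complex.I / 2) * (k y * fderiv ℝ h y Complex.I)) := by
        congr 1; ext y; unfold dbar; ring
    _ = -∫ y, ((1 / 2 : ℂ) * (fderiv ℝ k y 1 * h y) +
          (Complex.I / 2) * (fderiv ℝ k y Complex.I * h y)) := by
        rw [integral_add ((i1 1).const_mul _) ((i1 _).const_mul _),
          integral_add ((i2 1).const_mul _) ((i2 _).const_mul _), integral_const_mul,
          integral_const_mul, integral_const_mul, integral_const_mul, key, key]
        ring
    _ = _ := by
        congr 2; ext y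
        rw [hkv, hkv]
        have := hne y
        simp only [map_one, Complex.conj_I]
        field_simp
        ring_nf
        simp only [Complex.I_sq]
        ring

/-- The Cauchy formula at the origin, obtained from the regularised one as `e → 0`. -/
lemma integral_inv_dbar {h : ℂ → ℂ} (hh : ContDiff ℝ 1 h) (hc : HasCompactSupport h) :
    ∫ y, dbar h y * y⁻¹ = -(cc * h 0) := by
  have hdc : Continuous (dbar h) := by
    have hhv : ∀ v, Continuous fun y => fderiv ℝ h y v := fun v =>
      (hh.continuous_fderiv (by simp)).clm_apply continuous_const
    exact ((hhv 1).add (continuous_const.mul (hhv _))).div_const _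
  have hds : HasCompactSupport (dbar h) := by
    have h1 : ∀ v, HasCompactSupport fun y => fderiv ℝ h y v := fun v => hc.fderiv_apply ℝ v
    have h2 : dbar h = fun y => (1 / 2 : ℂ) * (fderiv ℝ h y 1 + Complex.I * fderiv ℝ h y Complex.I) := by
      ext y; simp only [dbar]; ring
    rw [h2]
    exact ((h1 1).add ((h1 Complex.I).mul_left (f := fun _ => Complex.I))).mul_left
      (f := fun _ => (1 / 2 : ℂ))
  have hne : ∀ e : ℝ, 0 < e → ∀ y : ℂ, y * conj y + (e : ℂ) ^ 2 = ((‖y‖ ^ 2 + e ^ 2 : ℝ) : ℂ) := by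
    intro e he y
    rw [Complex.mul_conj, Complex.normSq_eq_norm_sq]; push_cast; ring
  have hseq := tendsto_one_div_add_atTop_nhds_zero_nat (𝕜 := ℝ)
  set e : ℕ → ℝ := fun n => 1 / ((n : ℝ) + 1) with he
  have hepos : ∀ n, 0 < e n := fun n => by positivity
  have L1 : Tendsto (fun n => ∫ y, dbar h y * (conj y / (y * conj y + (e n : ℂ) ^ 2))) atTop
      (𝓝 (∫ y, dbar h y * y⁻¹)) := by
    refine tendsto_integral_of_dominated_convergence (fun y => ‖dbar h y * y⁻¹‖) (fun n => ?_) ?_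
      (fun n => ?_) ?_
    · refine (hdc.mul (Continuous.div (by fun_prop) (by fun_prop) fun y => ?_)).aestronglyMeasurable
      rw [hne _ (hepos n)]
      have := hepos n
      exact_mod_cast (show (0 : ℝ) < ‖y‖ ^ 2 + e n ^ 2 by positivity).ne'
    · have := (locInt_inv.integrable_smul_left_of_hasCompactSupport hdc hds)
      exact this.norm
    · refine Eventually.of_forall fun y => ?_
      rw [norm_mul, norm_mul]
      gcongr
      have := hepos n
      rw [hne _ (hepos n), norm_div, Complex.norm_real, RCLike.norm_conj, norm_inv, Real.norm_eq_abs,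
        abs_of_pos (by positivity)]
      rcases (norm_nonneg y).eq_or_lt with h0 | h0
      · simp [← h0]
      · rw [div_le_iff₀ (by positivity), inv_mul_eq_div, le_div_iff₀ h0]
        nlinarith
    · refine Eventually.of_forall fun y => ?_
      by_cases hy : y = 0
      · simp [hy]
      have hy' : conj y ≠ 0 := by simpa using hy
      have : Tendsto (fun n => dbar h y * (conj y / (y * conj y + (e n : ℂ) ^ 2))) atTop
          (𝓝 (dbar h y * (conj y / (y * conj y + ((0 : ℝ) : ℂ) ^ 2)))) := by
        refine Tendsto.const_mul _ (Tendsto.div tendsto_const_nhds ?_ ?_)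
        · refine Tendsto.const_add _ (Tendsto.pow ?_ 2)
          exact (Complex.continuous_ofReal.tendsto 0).comp hseq
        · simp [hy]
      convert this using 2
      simp; field_simp; simp
  have L2 : ∀ n, ∫ y, dbar h y * (conj y / (y * conj y + (e n : ℂ) ^ 2)) =
      -∫ w : ℂ, h (e n • w) * (((1 + ‖w‖ ^ 2) ^ 2 : ℝ) : ℂ)⁻¹ := by
    intro n
    rw [reg_cauchy hh hc (hepos n)]
    congr 1
    have := Measure.integral_comp_smul (volume : Measure ℂ)
      (fun y => h y * ((e n : ℂ) ^ 2 / (y * conj y + (e n : ℂ) ^ 2) ^ 2)) (e n)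
    have hp := hepos n
    have hpc : (e n : ℂ) ≠ 0 := by exact_mod_cast hp.ne'
    rw [Complex.finrank_real_complex, abs_of_pos (by positivity)] at this
    have h2 : ∫ y, h y * ((e n : ℂ) ^ 2 / (y * conj y + (e n : ℂ) ^ 2) ^ 2) =
        (e n ^ 2) • ∫ w : ℂ, h (e n • w) * ((e n : ℂ) ^ 2 / ((e n • w) * conj (e n • w) +
          (e n : ℂ) ^ 2) ^ 2) := by
      rw [this, smul_smul, mul_inv_cancel₀ (by positivity), one_smul]
    rw [h2, ← integral_smul]
    congr 1; ext w
    rw [hne _ hp, norm_smul, Real.norm_eq_abs, abs_of_pos hp, Complex.real_smul]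
    have h3 : ((1 + ‖w‖ ^ 2 : ℝ) : ℂ) ≠ 0 := by
      exact_mod_cast (show (0 : ℝ) < 1 + ‖w‖ ^ 2 by positivity).ne'
    have h4 : ((((e n * ‖w‖) ^ 2 + e n ^ 2 : ℝ)) : ℂ) = (e n : ℂ) ^ 2 * ((1 + ‖w‖ ^ 2 : ℝ) : ℂ) := by
      push_cast; ring
    rw [h4]
    push_cast at h3 ⊢
    field_simp
  have L3 : Tendsto (fun n => ∫ w : ℂ, h (e n • w) * (((1 + ‖w‖ ^ 2) ^ 2 : ℝ) : ℂ)⁻¹) atTop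
      (𝓝 (∫ w : ℂ, h 0 * (((1 + ‖w‖ ^ 2) ^ 2 : ℝ) : ℂ)⁻¹)) := by
    obtain ⟨C, hC⟩ := hc.exists_bound_of_continuous hh.continuous
    refine tendsto_integral_of_dominated_convergence (fun w => C * ((1 + ‖w‖ ^ 2) ^ 2)⁻¹) (fun n => ?_)
      (integrable_sq_kernel.const_mul _) (fun n => ?_) ?_
    · refine ((hh.continuous.comp (continuous_const_smul _)).mul (Continuous.inv₀ (by fun_prop)
        fun w => ?_)).aestronglyMeasurable
      exact_mod_cast (show (0 : ℝ) < (1 + ‖w‖ ^ 2) ^ 2 by positivity).ne'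
    · refine Eventually.of_forall fun w => ?_
      rw [norm_mul, norm_inv, Complex.norm_real, Real.norm_eq_abs, abs_of_pos (by positivity)]
      gcongr
      exact hC _
    · refine Eventually.of_forall fun w => ?_
      refine Tendsto.mul_const _ ?_
      have : Tendsto (fun n => e n • w) atTop (𝓝 ((0 : ℝ) • w)) := hseq.smul_const w
      rw [zero_smul] at this
      exact (hh.continuous.tendsto 0).comp this
  have L4 : ∫ w : ℂ, h 0 * (((1 + ‖w‖ ^ 2) ^ 2 : ℝ) : ℂ)⁻¹ = cc * h 0 := by
    rw [integral_const_mul, mul_comm]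
    congr 1
    unfold cc
    rw [← integral_complex_ofReal]
    congr 1; ext w; push_cast; rfl
  simp_rw [L2] at L1
  rw [L4] at L3
  exact tendsto_nhds_unique L1 L3.neg

end Landis

/-! ### Cauchy transform and logarithmic potential -/

namespace Landis

open MeasureTheory Filter Topology Set
open scoped ContDiff ComplexConjugate Convolution

lemma T_eq_conv (g : ℂ → ℂ) (z : ℂ) :
    T g z = (g ⋆[ContinuousLinearMap.mul ℝ ℂ, volume] (fun y : ℂ => y⁻¹)) z := rfl

lemma T_integrable {g : ℂ → ℂ} (hg : Continuous g) (hc : HasCompactSupport g) (z : ℂ) :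
    Integrable fun ζ => g ζ * (z - ζ)⁻¹ := by
  have h := hc.convolutionExists_left (ContinuousLinearMap.mul ℝ ℂ) (μ := volume) hg
    locInt_inv z
  exact h

lemma T_flip (g : ℂ → ℂ) (z : ℂ) : T g z = ∫ y, g (z - y) * y⁻¹ := by
  unfold T
  rw [← integral_sub_left_eq_self (fun ζ => g ζ * (z - ζ)⁻¹) volume z]
  simp

lemma contDiff_T {g : ℂ → ℂ} (hg : ContDiff ℝ 1 g) (hc : HasCompactSupport g) :
    ContDiff ℝ 1 (T g) :=
  hc.contDiff_convolution_left (ContinuousLinearMap.mul ℝ ℂ) (μ := volume) hg locInt_inv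

lemma fderiv_T {g : ℂ → ℂ} (hg : ContDiff ℝ 1 g) (hc : HasCompactSupport g) (z v : ℂ) :
    fderiv ℝ (T g) z v = T (fun ζ => fderiv ℝ g ζ v) z := by
  have h := hc.hasFDerivAt_convolution_left (ContinuousLinearMap.mul ℝ ℂ) (μ := volume) hg
    locInt_inv z
  have h2 : HasFDerivAt (T g) _ z := h
  rw [h2.fderiv]
  have hi := (hc.fderiv ℝ).convolutionExists_left ((ContinuousLinearMap.mul ℝ ℂ).precompL ℂ)
    (μ := volume) (hg.continuous_fderiv (by simp)) locInt_inv z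
  exact ContinuousLinearMap.integral_apply hi v

lemma T_dbar {h : ℂ → ℂ} (hh : ContDiff ℝ 1 h) (hc : HasCompactSupport h) (z : ℂ) :
    T (dbar h) z = cc * h z := by
  rw [T_flip]
  set k : ℂ → ℂ := fun y => h (z - y) with hk
  have hkd : ContDiff ℝ 1 k := hh.comp (contDiff_const.sub contDiff_id)
  have hkc : HasCompactSupport k := hc.comp_homeomorph (Homeomorph.subLeft z)
  have hkf : ∀ y v, fderiv ℝ k y v = - fderiv ℝ h (z - y) v := by
    intro y v
    have h1 := (hh.differentiable (by simp) (z - y)).hasFDerivAt.comp y ((hasFDerivAt_id y).const_sub z)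
    have h2 : HasFDerivAt k _ y := h1
    rw [h2.fderiv]; simp
  have := integral_inv_dbar hkd hkc
  have h3 : ∀ y, dbar k y = - dbar h (z - y) := by
    intro y; simp only [dbar, hkf]; ring
  simp_rw [h3, neg_mul] at this
  rw [integral_neg, neg_inj] at this
  rw [this, hk]; simp

lemma dbar_T {g : ℂ → ℂ} (hg : ContDiff ℝ 1 g) (hc : HasCompactSupport g) (z : ℂ) :
    dbar (T g) z = cc * g z := by
  rw [← T_dbar hg hc z]
  unfold dbar
  rw [fderiv_T hg hc, fderiv_T hg hc]
  unfold T
  have i := fun v => T_integrable ((hg.continuous_fderiv (by simp)).clm_apply continuous_const)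
    (hc.fderiv_apply ℝ v) z
  rw [← integral_const_mul, ← integral_add (i 1) ((i Complex.I).const_mul _), ← integral_div]
  congr 1; ext ζ; ring

/-- The logarithmic potential without its usual normalisation `1 / (2π)`. -/
noncomputable def Lp (g : ℂ → ℝ) (z : ℂ) : ℝ := ∫ ζ, g ζ * Real.log ‖z - ζ‖

lemma Lp_integrable {g : ℂ → ℝ} (hg : Continuous g) (hc : HasCompactSupport g) (z : ℂ) :
    Integrable fun ζ => g ζ * Real.log ‖z - ζ‖ := by
  have h := hc.convolutionExists_left (ContinuousLinearMap.mul ℝ ℝ) (μ := volume) hg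
    locInt_log z
  exact h

lemma integral_log_fderiv {g : ℂ → ℝ} (hg : ContDiff ℝ 1 g) (hc : HasCompactSupport g) (v : ℂ) :
    ∫ y, fderiv ℝ g y v * Real.log ‖y‖ = -∫ y, g y * (v * y⁻¹).re := by
  have hseq := tendsto_one_div_add_atTop_nhds_zero_nat (𝕜 := ℝ)
  set e : ℕ → ℝ := fun n => 1 / ((n : ℝ) + 1) with he
  have hepos : ∀ n, 0 < e n := fun n => by positivity
  have hele : ∀ n, e n ≤ 1 := fun n => by
    rw [he]; simp only; rw [div_le_one (by positivity)]; linarith [(Nat.cast_nonneg n : (0 : ℝ) ≤ n)]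
  have hgv : Continuous fun y => fderiv ℝ g y v :=
    (hg.continuous_fderiv (by simp)).clm_apply continuous_const
  have hgvc : HasCompactSupport fun y => fderiv ℝ g y v := hc.fderiv_apply ℝ v
  obtain ⟨R, hR⟩ := hgvc.isBounded.subset_ball 0
  have hsupp : ∀ y, R ≤ ‖y‖ → fderiv ℝ g y v = 0 := fun y hy => by
    by_contra h
    have := hR (subset_tsupport _ h)
    simp at this; linarith
  have hpos : ∀ n (y : ℂ), 0 < ‖y‖ ^ 2 + e n ^ 2 := fun n y => by have := hepos n; positivity
  have hkd : ∀ n y, ∃ D : ℂ →L[ℝ] ℝ, HasFDerivAt (fun y : ℂ => Real.log (‖y‖ ^ 2 + e n ^ 2) / 2) D y ∧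
      ∀ w, D w = (w * conj y).re / (‖y‖ ^ 2 + e n ^ 2) := by
    intro n y
    have h1 : HasFDerivAt (fun y : ℂ => ‖y‖ ^ 2 + e n ^ 2) (2 • (innerSL ℝ y)) y :=
      ((hasStrictFDerivAt_norm_sq y).hasFDerivAt).add_const _
    have h2 := (h1.log (hpos n y).ne').mul_const (2⁻¹ : ℝ)
    refine ⟨_, by simpa only [div_eq_mul_inv] using h2, fun w => ?_⟩
    simp [Complex.inner]
    field_simp
  have hkv : ∀ n y, fderiv ℝ (fun y : ℂ => Real.log (‖y‖ ^ 2 + e n ^ 2) / 2) y v =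
      (v * conj y).re / (‖y‖ ^ 2 + e n ^ 2) := fun n y => by
    obtain ⟨D, hD, hv⟩ := hkd n y
    rw [hD.fderiv, hv]
  have hkc : ∀ n, Continuous fun y : ℂ => Real.log (‖y‖ ^ 2 + e n ^ 2) / 2 := fun n =>
    continuous_iff_continuousAt.2 fun y => (hkd n y).choose_spec.1.continuousAt
  have hkvc : ∀ n, Continuous fun y : ℂ => (v * conj y).re / (‖y‖ ^ 2 + e n ^ 2) := fun n =>
    Continuous.div (by fun_prop) (by fun_prop) fun y => (hpos n y).ne'
  have key : ∀ n, ∫ y, fderiv ℝ g y v * (Real.log (‖y‖ ^ 2 + e n ^ 2) / 2) =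
      -∫ y, g y * ((v * conj y).re / (‖y‖ ^ 2 + e n ^ 2)) := by
    intro n
    have := integral_mul_fderiv_eq_neg_fderiv_mul_of_integrable (μ := (volume : Measure ℂ))
      (f := g) (g := fun y : ℂ => Real.log (‖y‖ ^ 2 + e n ^ 2) / 2) (v := v)
      ((hgv.mul (hkc n)).integrable_of_hasCompactSupport hgvc.mul_right)
      (by simp_rw [hkv n]
          exact (hg.continuous.mul (hkvc n)).integrable_of_hasCompactSupport hc.mul_right)
      ((hg.continuous.mul (hkc n)).integrable_of_hasCompactSupport hc.mul_right)
      (fun x _ => hg.differentiable (by simp) x) (fun x _ => (hkd n x).choose_spec.1.differentiableAt)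
    simp_rw [hkv n] at this
    rw [this, neg_neg]
  have L1 : Tendsto (fun n => ∫ y, fderiv ℝ g y v * (Real.log (‖y‖ ^ 2 + e n ^ 2) / 2)) atTop
      (𝓝 (∫ y, fderiv ℝ g y v * Real.log ‖y‖)) := by
    refine tendsto_integral_of_dominated_convergence
      (fun y => ‖fderiv ℝ g y v * Real.log ‖y‖‖ + ‖fderiv ℝ g y v * Real.log (R ^ 2 + 1)‖) (fun n => ?_) ?_
      (fun n => ?_) ?_
    · exact (hgv.mul (hkc n)).aestronglyMeasurable
    · have h1 := (locInt_log.integrable_smul_left_of_hasCompactSupport hgv hgvc)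
      have h2 := (hgv.mul (continuous_const (y := Real.log (R ^ 2 + 1)))).integrable_of_hasCompactSupport
        (μ := (volume : Measure ℂ)) hgvc.mul_right
      exact h1.norm.add h2.norm
    · have : ∀ᵐ y : ℂ, y ≠ 0 := by simp [ae_iff, measure_singleton]
      filter_upwards [this] with y hy
      by_cases hyR : R ≤ ‖y‖
      · simp [hsupp y hyR]
      push Not at hyR
      rw [norm_mul, norm_mul, norm_mul, ← mul_add]
      gcongr
      have hy0 : 0 < ‖y‖ := by simpa using hy
      have h1 : Real.log ‖y‖ ≤ Real.log (‖y‖ ^ 2 + e n ^ 2) / 2 := by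
        have : Real.log ‖y‖ = Real.log (‖y‖ ^ 2) / 2 := by rw [Real.log_pow]; simp
        rw [this]
        gcongr
        nlinarith [hepos n]
      have h2 : Real.log (‖y‖ ^ 2 + e n ^ 2) ≤ Real.log (R ^ 2 + 1) := by
        refine Real.log_le_log (hpos n y) ?_
        have := hele n
        have := hepos n
        nlinarith
      have h3 : 0 ≤ Real.log (R ^ 2 + 1) := Real.log_nonneg (by nlinarith [sq_nonneg R])
      rw [Real.norm_eq_abs, Real.norm_eq_abs, Real.norm_eq_abs, abs_of_nonneg h3, abs_le]
      constructor
      · have := neg_abs_le (Real.log ‖y‖); linarith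
      · have := abs_nonneg (Real.log ‖y‖); linarith
    · have : ∀ᵐ y : ℂ, y ≠ 0 := by simp [ae_iff, measure_singleton]
      filter_upwards [this] with y hy
      refine Tendsto.const_mul _ ?_
      have h1 : Tendsto (fun n => Real.log (‖y‖ ^ 2 + e n ^ 2) / 2) atTop
          (𝓝 (Real.log (‖y‖ ^ 2 + 0 ^ 2) / 2)) := by
        refine Tendsto.div_const (Tendsto.log (Tendsto.const_add _ (hseq.pow 2)) ?_) 2
        simpa using hy
      convert h1 using 2
      simp
  have L2 : Tendsto (fun n => ∫ y, g y * ((v * conj y).re / (‖y‖ ^ 2 + e n ^ 2))) atTop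
      (𝓝 (∫ y, g y * (v * y⁻¹).re)) := by
    refine tendsto_integral_of_dominated_convergence
      (fun y => ‖v‖ * ‖g y * ‖y⁻¹‖‖) (fun n => ?_) ?_ (fun n => ?_) ?_
    · exact (hg.continuous.mul (hkvc n)).aestronglyMeasurable
    · have hl : LocallyIntegrable (fun y : ℂ => ‖y⁻¹‖) := by
        intro x; obtain ⟨U, hU, h⟩ := locInt_inv x; exact ⟨U, hU, h.norm⟩
      exact (hl.integrable_smul_left_of_hasCompactSupport hg.continuous hc).norm.const_mul _
    · refine Eventually.of_forall fun y => ?_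
      rw [norm_mul, norm_mul, norm_norm, mul_left_comm]
      gcongr
      rw [norm_div, Real.norm_eq_abs, Real.norm_eq_abs, abs_of_pos (hpos n y), norm_inv]
      rcases (norm_nonneg y).eq_or_lt with h0 | h0
      · rw [norm_eq_zero.1 h0.symm]; simp
      · rw [div_le_iff₀ (hpos n y)]
        have h1 := Complex.abs_re_le_norm (v * conj y)
        rw [norm_mul, RCLike.norm_conj] at h1
        refine h1.trans ?_
        have h2 : ‖y‖ ≤ ‖y‖⁻¹ * (‖y‖ ^ 2 + e n ^ 2) := by
          rw [inv_mul_eq_div, le_div_iff₀ h0]; nlinarith [hepos n]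
        rw [mul_assoc]
        gcongr
    · refine Eventually.of_forall fun y => ?_
      by_cases hy : y = 0
      · simp [hy]
      refine Tendsto.const_mul _ ?_
      have h1 : Tendsto (fun n => (v * conj y).re / (‖y‖ ^ 2 + e n ^ 2)) atTop
          (𝓝 ((v * conj y).re / (‖y‖ ^ 2 + 0 ^ 2))) :=
        Tendsto.div tendsto_const_nhds (Tendsto.const_add _ (hseq.pow 2)) (by simpa using hy)
      convert h1 using 2
      rw [Complex.inv_def, ← mul_assoc, Complex.re_mul_ofReal, Complex.normSq_eq_norm_sq]
      simp [div_eq_mul_inv]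
  simp_rw [key] at L1
  exact tendsto_nhds_unique L1 L2.neg

lemma contDiff_Lp_one {g : ℂ → ℝ} (hg : ContDiff ℝ 1 g) (hc : HasCompactSupport g) :
    ContDiff ℝ 1 (Lp g) :=
  hc.contDiff_convolution_left (ContinuousLinearMap.mul ℝ ℝ) (μ := volume) hg locInt_log

lemma fderiv_Lp {g : ℂ → ℝ} (hg : ContDiff ℝ 1 g) (hc : HasCompactSupport g) (z v : ℂ) :
    fderiv ℝ (Lp g) z v = ∫ ζ, g ζ * (v * (z - ζ)⁻¹).re := by
  have h := hc.hasFDerivAt_convolution_left (ContinuousLinearMap.mul ℝ ℝ) (μ := volume) hg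
    locInt_log z
  have h2 : HasFDerivAt (Lp g) _ z := h
  have h3 : fderiv ℝ (Lp g) z v = ∫ ζ, fderiv ℝ g ζ v * Real.log ‖z - ζ‖ := by
    rw [h2.fderiv]
    have hi := (hc.fderiv ℝ).convolutionExists_left ((ContinuousLinearMap.mul ℝ ℝ).precompL ℂ)
      (μ := volume) (hg.continuous_fderiv (by simp)) locInt_log z
    exact ContinuousLinearMap.integral_apply hi v
  rw [h3, ← integral_sub_left_eq_self (fun ζ => fderiv ℝ g ζ v * Real.log ‖z - ζ‖) volume z]
  set k : ℂ → ℝ := fun y => g (z - y) with hk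
  have hkd : ContDiff ℝ 1 k := hg.comp (contDiff_const.sub contDiff_id)
  have hkc : HasCompactSupport k := hc.comp_homeomorph (Homeomorph.subLeft z)
  have hkf : ∀ y v, fderiv ℝ k y v = - fderiv ℝ g (z - y) v := by
    intro y v
    have h1 := (hg.differentiable (by simp) (z - y)).hasFDerivAt.comp y ((hasFDerivAt_id y).const_sub z)
    have h2 : HasFDerivAt k _ y := h1
    rw [h2.fderiv]; simp
  have := integral_log_fderiv hkd hkc v
  simp_rw [hkf, neg_mul] at this
  rw [integral_neg, neg_inj] at this
  simp only [sub_sub_cancel]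
  rw [this, ← integral_sub_left_eq_self (fun ζ => g ζ * (v * (z - ζ)⁻¹).re) volume z]
  simp [hk]

/-- The logarithmic potential has Wirtinger derivative half the Cauchy transform. -/
lemma gr_Lp {g : ℂ → ℝ} (hg : ContDiff ℝ 1 g) (hc : HasCompactSupport g) (z : ℂ) :
    gr (Lp g) z = T (fun ζ => (g ζ : ℂ)) z / 2 := by
  have hgc : ContDiff ℝ 1 fun ζ => (g ζ : ℂ) := Complex.ofRealCLM.contDiff.comp hg
  have hcc : HasCompactSupport fun ζ => (g ζ : ℂ) := hc.comp_left Complex.ofReal_zero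
  have hi := T_integrable hgc.continuous hcc z
  have hre : ∀ v : ℂ, fderiv ℝ (Lp g) z v = (v * T (fun ζ => (g ζ : ℂ)) z).re := by
    intro v
    rw [fderiv_Lp hg hc]
    unfold T
    rw [← integral_const_mul]
    have := integral_re (hi.const_mul v)
    simp only [RCLike.re_eq_complex_re] at this
    rw [← this]
    congr 1; ext ζ
    rw [mul_left_comm, Complex.re_ofReal_mul]
  unfold gr
  rw [hre, hre]
  congr 1
  apply Complex.ext <;> simp

lemma fderiv_eq_gr (u : ℂ → ℝ) (z v : ℂ) : fderiv ℝ u z v = 2 * (v * gr u z).re := by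
  have h : v = v.re • (1 : ℂ) + v.im • Complex.I := by simp
  conv_lhs => rw [h, map_add, map_smul, map_smul]
  simp [gr]; ring

lemma contDiff_gr {u : ℂ → ℝ} (hu : ContDiff ℝ 2 u) : ContDiff ℝ 1 (gr u) := by
  have h : ∀ v : ℂ, ContDiff ℝ 1 fun z => (fderiv ℝ u z v : ℂ) := fun v =>
    Complex.ofRealCLM.contDiff.comp ((hu.fderiv_right (m := 1) (by norm_num)).clm_apply contDiff_const)
  exact ((h 1).sub (contDiff_const.mul (h Complex.I))).div_const 2

lemma contDiff_two_of_gr {u : ℂ → ℝ} (hu : Differentiable ℝ u) (h : ContDiff ℝ 1 (gr u)) :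
    ContDiff ℝ 2 u := by
  have : (2 : WithTop ℕ∞) = 1 + 1 := by norm_num
  rw [this, contDiff_succ_iff_fderiv]
  refine ⟨hu, by simp, contDiff_clm_apply_iff.2 fun v => ?_⟩
  simp_rw [fderiv_eq_gr]
  exact contDiff_const.mul (Complex.reCLM.contDiff.comp (contDiff_const.mul h))

lemma dbar_gr {u : ℂ → ℝ} (hu : ContDiff ℝ 2 u) (z : ℂ) : dbar (gr u) z = lap u z / 4 := by
  have hd : Differentiable ℝ (fderiv ℝ u) := (hu.fderiv_right (m := 1) (by norm_num)).differentiable (by simp)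
  have h1 : ∀ v w, fderiv ℝ (fun z => fderiv ℝ u z v) z w = fderiv ℝ (fderiv ℝ u) z w v := by
    intro v w
    rw [fderiv_clm_apply (hd z) (by fun_prop)]; simp
  have h2 : ∀ v w, fderiv ℝ (fun z => (fderiv ℝ u z v : ℂ)) z w = (fderiv ℝ (fderiv ℝ u) z w v : ℂ) := by
    intro v w
    have h3 : HasFDerivAt (fun z => fderiv ℝ u z v) (fderiv ℝ (fun z => fderiv ℝ u z v) z) z :=
      ((hd z).clm_apply (by fun_prop)).hasFDerivAt
    have h4 := Complex.ofRealCLM.hasFDerivAt.comp z h3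
    have h5 : HasFDerivAt (fun z => (fderiv ℝ u z v : ℂ)) _ z := h4
    rw [h5.fderiv]
    simp [h1]
  have hdv : ∀ v, DifferentiableAt ℝ (fun z => (fderiv ℝ u z v : ℂ)) z := fun v =>
    Complex.ofRealCLM.differentiableAt.comp z ((hd z).clm_apply (by fun_prop))
  have h6 : ∀ w, fderiv ℝ (gr u) z w = ((fderiv ℝ (fderiv ℝ u) z w 1 : ℂ) -
      Complex.I * (fderiv ℝ (fderiv ℝ u) z w Complex.I : ℂ)) / 2 := by
    intro w
    have h7 := (((hdv 1).hasFDerivAt.sub ((hdv Complex.I).hasFDerivAt.const_mul Complex.I)).mul_const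
      (2⁻¹ : ℂ))
    have h8 : HasFDerivAt (gr u) _ z := h7
    rw [h8.fderiv]
    simp [h2]; ring
  have hsymm : IsSymmSndFDerivAt ℝ u z := hu.contDiffAt.isSymmSndFDerivAt (by simp)
  unfold dbar lap
  rw [h6, h6, h1, h1, hsymm Complex.I 1]
  push_cast
  ring_nf
  simp; ring

lemma contDiff_Lp {g : ℂ → ℝ} (hg : ContDiff ℝ 1 g) (hc : HasCompactSupport g) :
    ContDiff ℝ 2 (Lp g) := by
  have hgc : ContDiff ℝ 1 fun ζ => (g ζ : ℂ) := Complex.ofRealCLM.contDiff.comp hg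
  have hcc : HasCompactSupport fun ζ => (g ζ : ℂ) := hc.comp_left Complex.ofReal_zero
  refine contDiff_two_of_gr ((contDiff_Lp_one hg hc).differentiable (by simp)) ?_
  have : gr (Lp g) = fun z => T (fun ζ => (g ζ : ℂ)) z / 2 := funext (gr_Lp hg hc)
  rw [this]
  exact (contDiff_T hgc hcc).div_const 2

lemma dbar_const_mul {f : ℂ → ℂ} {z : ℂ} (hf : DifferentiableAt ℝ f z) (c : ℂ) :
    dbar (fun w => c * f w) z = c * dbar f z := by
  unfold dbar
  have h : HasFDerivAt (fun w => c * f w) _ z := hf.hasFDerivAt.const_mul c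
  rw [h.fderiv]; simp; ring

lemma lap_Lp {g : ℂ → ℝ} (hg : ContDiff ℝ 1 g) (hc : HasCompactSupport g) (z : ℂ) :
    lap (Lp g) z = 2 * cc * g z := by
  have hgc : ContDiff ℝ 1 fun ζ => (g ζ : ℂ) := Complex.ofRealCLM.contDiff.comp hg
  have hcc : HasCompactSupport fun ζ => (g ζ : ℂ) := hc.comp_left Complex.ofReal_zero
  have h1 := dbar_gr (contDiff_Lp hg hc) z
  have h2 : gr (Lp g) = fun z => (1 / 2 : ℂ) * T (fun ζ => (g ζ : ℂ)) z := by
    ext z; rw [gr_Lp hg hc]; ring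
  rw [h2, dbar_const_mul ((contDiff_T hgc hcc).differentiable (by simp) z), dbar_T hgc hcc] at h1
  have h3 : (lap (Lp g) z : ℂ) = ((2 * cc * g z : ℝ) : ℂ) := by
    push_cast; linear_combination -4 * h1
  exact_mod_cast h3

end Landis

/-! ### The Laplacian: minima, and zeros on small circles -/

namespace Landis

open MeasureTheory Filter Topology Set
open scoped ContDiff ComplexConjugate Convolution

lemma T_holo {g : ℂ → ℂ} (hg : Continuous g) (hc : HasCompactSupport g) {Ω : Set ℂ} (hΩ : IsOpen Ω)
    (h0 : ∀ z ∈ Ω, g z = 0) : DifferentiableOn ℂ (T g) Ω := by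
  intro z₀ hz₀
  obtain ⟨r, hr, hball⟩ := Metric.isOpen_iff.1 hΩ z₀ hz₀
  refine DifferentiableAt.differentiableWithinAt ?_
  have hF := hasDerivAt_integral_of_dominated_loc_of_deriv_le (μ := (volume : Measure ℂ)) (𝕜 := ℂ)
    (F := fun z ζ => g ζ * (z - ζ)⁻¹) (x₀ := z₀) (s := ball z₀ (r / 2))
    (F' := fun z ζ => g ζ * (-((z - ζ) ^ 2)⁻¹)) (bound := fun ζ => ‖g ζ‖ * ((r / 2) ^ 2)⁻¹)
    (ball_mem_nhds z₀ (by positivity)) ?_ ?_ ?_ ?_ ?_ ?_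
  · exact hF.2.differentiableAt
  · exact Eventually.of_forall fun z => (T_integrable hg hc z).aestronglyMeasurable
  · exact T_integrable hg hc z₀
  · exact (hg.measurable.mul (by fun_prop)).aestronglyMeasurable
  · refine Eventually.of_forall fun ζ z hz => ?_
    by_cases hζ : ζ ∈ ball z₀ r
    · simp [h0 ζ (hball hζ)]
    · rw [norm_mul, norm_neg, norm_inv, norm_pow]
      gcongr
      simp only [mem_ball, not_lt, dist_eq_norm] at hζ hz
      have := norm_sub_le_norm_sub_add_norm_sub ζ z z₀
      rw [norm_sub_rev ζ z] at this
      linarith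
  · exact ((hg.integrable_of_hasCompactSupport hc).norm.mul_const _)
  · refine Eventually.of_forall fun ζ z hz => ?_
    by_cases hζ : ζ ∈ ball z₀ r
    · simp only [h0 ζ (hball hζ), zero_mul]; exact hasDerivAt_const _ _
    · have hne : z - ζ ≠ 0 := by
        rintro h
        rw [sub_eq_zero] at h
        subst h
        exact hζ (ball_subset_ball (by linarith) hz)
      have := (((hasDerivAt_id z).sub_const ζ).inv hne).const_mul (g ζ)
      simpa [neg_div] using this

lemma dbar_mul {f g : ℂ → ℂ} {z : ℂ} (hf : DifferentiableAt ℝ f z) (hg : DifferentiableAt ℝ g z) :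
    dbar (fun w => f w * g w) z = f z * dbar g z + dbar f z * g z := by
  unfold dbar
  have h : HasFDerivAt (fun w => f w * g w) _ z := hf.hasFDerivAt.mul hg.hasFDerivAt
  rw [h.fderiv]; simp; ring

lemma fderiv_comp_add_left' {E : Type*} [NormedAddCommGroup E] [NormedSpace ℝ E] (u : ℂ → E) (x y : ℂ) :
    fderiv ℝ (fun y => u (x + y)) y = fderiv ℝ u (x + y) := fderiv_comp_add_left x

lemma lap_shift (u : ℂ → ℝ) (x y : ℂ) : lap (fun y => u (x + y)) y = lap u (x + y) := by
  unfold lap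
  simp_rw [fderiv_comp_add_left']
  rw [fderiv_comp_add_left' (fun w => fderiv ℝ u w 1) x y,
    fderiv_comp_add_left' (fun w => fderiv ℝ u w Complex.I) x y]

lemma gr_shift (u : ℂ → ℝ) (x y : ℂ) : gr (fun y => u (x + y)) y = gr u (x + y) := by
  unfold gr
  simp_rw [fderiv_comp_add_left']

lemma second_dir {u : ℂ → ℝ} (hu : ContDiff ℝ 2 u) {p : ℂ} (hp : IsLocalMin u p) (v : ℂ) :
    0 ≤ fderiv ℝ (fun w => fderiv ℝ u w v) p v := by
  by_contra hneg
  push Not at hneg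
  set φ : ℝ → ℝ := fun t => u (p + t • v) with hφ
  have hl : ∀ t, HasDerivAt (fun t : ℝ => p + t • v) v t := fun t => by
    simpa using ((hasDerivAt_id t).smul_const v).const_add p
  have hd : ∀ t, HasDerivAt φ (fderiv ℝ u (p + t • v) v) t := fun t =>
    (hu.differentiable (by simp) _).hasFDerivAt.comp_hasDerivAt t (hl t)
  have hd' : deriv φ = fun t => fderiv ℝ u (p + t • v) v := funext fun t => (hd t).deriv
  have hdd : Differentiable ℝ (fun w => fderiv ℝ u w v) :=
    ((hu.fderiv_right (m := 1) (by norm_num)).clm_apply contDiff_const).differentiable (by simp)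
  have hd2 : HasDerivAt (deriv φ) (fderiv ℝ (fun w => fderiv ℝ u w v) p v) 0 := by
    rw [hd']
    have := (hdd (p + (0 : ℝ) • v)).hasFDerivAt.comp_hasDerivAt 0 (hl 0)
    simp only [zero_smul, add_zero] at this
    exact this
  have hmin : IsLocalMin φ 0 := by
    have hc : ContinuousAt (fun t : ℝ => p + t • v) 0 := (hl 0).continuousAt
    have : Tendsto (fun t : ℝ => p + t • v) (𝓝 0) (𝓝 p) := by simpa [ContinuousAt] using hc
    have := this.eventually hp
    refine this.mono fun t ht => ?_
    simpa [hφ] using ht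
  have hmax : IsLocalMax φ 0 := by
    refine isLocalMax_of_deriv_deriv_neg (by rw [hd2.deriv]; exact hneg) hmin.deriv_eq_zero
      (hd 0).continuousAt
  have hconst : φ =ᶠ[𝓝 0] fun _ => φ 0 := by
    filter_upwards [hmin, hmax] with t h1 h2
    exact le_antisymm h2 h1
  have : deriv φ =ᶠ[𝓝 0] fun _ => 0 := by
    have := hconst.deriv
    simpa using this
  have := this.deriv_eq
  rw [hd2.deriv] at this
  simp at this
  linarith

lemma lap_nonneg_of_min {u : ℂ → ℝ} (hu : ContDiff ℝ 2 u) {p : ℂ} (hp : IsLocalMin u p) :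
    0 ≤ lap u p :=
  add_nonneg (second_dir hu hp 1) (second_dir hu hp Complex.I)

lemma lap_sub_quad {u : ℂ → ℝ} (hu : ContDiff ℝ 2 u) (a κ : ℝ) (z₀ p : ℂ) :
    lap (fun z => u z - a - κ * ‖z - z₀‖ ^ 2) p = lap u p - 4 * κ := by
  have h1 : ∀ z v, fderiv ℝ (fun z => u z - a - κ * ‖z - z₀‖ ^ 2) z v =
      fderiv ℝ u z v - κ * (2 * ((z - z₀) * conj v).re) := by
    intro z v
    have h2 : HasFDerivAt (fun z : ℂ => ‖z - z₀‖ ^ 2) _ z :=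
      HasFDerivAt.comp (g := fun x : ℂ => ‖x‖ ^ 2) z ((hasStrictFDerivAt_norm_sq (z - z₀)).hasFDerivAt) ((hasFDerivAt_id z).sub_const z₀)
    have h3 : HasFDerivAt (fun z => u z - a - κ * ‖z - z₀‖ ^ 2) _ z :=
      ((hu.differentiable (by simp) z).hasFDerivAt.sub_const a).sub (h2.const_mul κ)
    rw [h3.fderiv]
    simp [Complex.inner]; left; ring
  have hdd : ∀ v, Differentiable ℝ (fun w => fderiv ℝ u w v) := fun v =>
    ((hu.fderiv_right (m := 1) (by norm_num)).clm_apply contDiff_const).differentiable (by simp)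
  have h4 : ∀ v, fderiv ℝ (fun z => fderiv ℝ (fun z => u z - a - κ * ‖z - z₀‖ ^ 2) z v) p v =
      fderiv ℝ (fun z => fderiv ℝ u z v) p v - κ * (2 * (v * conj v).re) := by
    intro v
    simp_rw [h1]
    have h5 : HasFDerivAt (fun z : ℂ => (z - z₀) * conj v) _ p :=
      ((hasFDerivAt_id (𝕜 := ℝ) p).sub_const z₀).mul_const (conj v)
    have h6 : HasFDerivAt (fun z : ℂ => ((z - z₀) * conj v).re) _ p :=
      Complex.reCLM.hasFDerivAt.comp p h5
    have h7 : HasFDerivAt (fun z => fderiv ℝ u z v - κ * (2 * ((z - z₀) * conj v).re)) _ p :=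
      (hdd v p).hasFDerivAt.sub ((h6.const_mul 2).const_mul κ)
    rw [h7.fderiv]
    simp
  unfold lap
  rw [h4, h4]
  simp; ring

lemma lap_neg (u : ℂ → ℝ) (z : ℂ) : lap (fun z => -u z) z = -lap u z := by
  unfold lap
  have : ∀ v, (fun w => fderiv ℝ (fun z => -u z) w v) = fun w => -fderiv ℝ u w v := by
    intro v; ext w; rw [fderiv_fun_neg]; rfl
  rw [this, this, fderiv_fun_neg, fderiv_fun_neg]
  simp; ring

lemma exists_zero_circle_aux {u : ℂ → ℝ} (hu : ContDiff ℝ 2 u) {δ : ℝ}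
    (hδ : ∀ z, |lap u z| ≤ δ * |u z|) {z₀ : ℂ} (hz : u z₀ = 0) {t : ℝ} (ht : 0 < t)
    (hδt : δ * t ^ 2 < 1) (hpos : ∀ z ∈ sphere z₀ t, 0 < u z) : False := by
  have hcu := hu.continuous
  have hne : (sphere z₀ t).Nonempty := NormedSpace.sphere_nonempty.2 ht.le
  obtain ⟨y, hy, hymin⟩ := (isCompact_sphere z₀ t).exists_isMinOn hne hcu.continuousOn
  set a := u y / 2 with ha
  have ha0 : 0 < a := by have := hpos y hy; positivity
  have hsph : ∀ z ∈ sphere z₀ t, 2 * a ≤ u z := fun z hz => by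
    have : u y ≤ u z := hymin hz
    rw [ha]; linarith
  obtain ⟨p, hp, hpmin⟩ := (isCompact_closedBall z₀ t).exists_isMinOn
    ⟨z₀, mem_closedBall_self ht.le⟩ hcu.continuousOn
  have hpu : u p ≤ 0 := by rw [← hz]; exact hpmin (mem_closedBall_self ht.le)
  set b := a - u p with hb
  have hb0 : a ≤ b := by linarith
  have hvb : ∀ z ∈ closedBall z₀ t, -b ≤ u z - a := fun z hz => by
    have : u p ≤ u z := hpmin hz
    linarith
  -- Subtracting `a + κ |z - z₀|²` forces an interior minimum. There the Laplacian of `u` is at least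
  -- `4κ`, which contradicts the smallness of `δ |u|`.
  set κ := b / t ^ 2 with hκ
  have hκt : κ * t ^ 2 = b := by rw [hκ]; field_simp
  set w : ℂ → ℝ := fun z => u z - a - κ * ‖z - z₀‖ ^ 2 with hw
  have hwc : Continuous w := by fun_prop
  obtain ⟨p', hp', hp'min⟩ := (isCompact_closedBall z₀ t).exists_isMinOn
    ⟨z₀, mem_closedBall_self ht.le⟩ hwc.continuousOn
  have hκ0 : 0 < κ := div_pos (by linarith) (by positivity)
  have hwp : w p ≤ -b := by
    have : 0 ≤ κ * ‖p - z₀‖ ^ 2 := by positivity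
    simp only [hw]; linarith
  have hwp' : w p' ≤ -b := le_trans (hp'min hp) hwp
  have hint : p' ∈ ball z₀ t := by
    rcases (mem_closedBall.1 hp').lt_or_eq with h | h
    · exact h
    · exfalso
      have h1 := hsph p' h
      have h2 : ‖p' - z₀‖ = t := by rw [← dist_eq_norm]; exact h
      simp only [hw, h2, hκt] at hwp'
      linarith
  have hlm : IsLocalMin w p' := by
    filter_upwards [isOpen_ball.mem_nhds hint] with z hz
    exact hp'min (ball_subset_closedBall hz)
  have hw2 : ContDiff ℝ 2 w := by
    have : ContDiff ℝ 2 fun z : ℂ => ‖z - z₀‖ ^ 2 := (contDiff_id.sub contDiff_const).norm_sq ℝ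
    exact (hu.sub contDiff_const).sub (contDiff_const.mul this)
  have hL := lap_nonneg_of_min hw2 hlm
  rw [lap_sub_quad hu] at hL
  have h3 : ‖p' - z₀‖ ^ 2 ≤ t ^ 2 := by
    have : ‖p' - z₀‖ ≤ t := by rw [← dist_eq_norm]; exact hp'
    gcongr
  have h4 : u p' ≤ b := by
    have : κ * ‖p' - z₀‖ ^ 2 ≤ b := by rw [← hκt]; gcongr
    simp only [hw] at hwp'; linarith
  have h5 : -b ≤ u p' := by have := hvb p' hp'; linarith
  have h6 : |u p'| ≤ b := abs_le.2 ⟨h5, h4⟩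
  have h7 := (le_abs_self _).trans (hδ p')
  have hbp : 0 < b := by linarith
  by_cases hδ0 : 0 ≤ δ
  · have h8 : 4 * κ ≤ δ * b := by
      have : δ * |u p'| ≤ δ * b := by gcongr
      linarith
    have h9 : 4 * b ≤ δ * t ^ 2 * b := by
      calc 4 * b = 4 * κ * t ^ 2 := by rw [mul_assoc, hκt]
        _ ≤ δ * b * t ^ 2 := by gcongr
        _ = _ := by ring
    nlinarith
  · push Not at hδ0
    nlinarith [abs_nonneg (u p')]

/-- A solution vanishing at `z₀` vanishes somewhere on each small circle about `z₀`. -/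
lemma exists_zero_circle {u : ℂ → ℝ} (hu : ContDiff ℝ 2 u) {δ : ℝ}
    (hδ : ∀ z, |lap u z| ≤ δ * |u z|) {z₀ : ℂ} (hz : u z₀ = 0) {t : ℝ} (ht : 0 < t)
    (hδt : δ * t ^ 2 < 1) : ∃ z, ‖z - z₀‖ = t ∧ u z = 0 := by
  by_contra hcon
  push Not at hcon
  have hpc : IsPreconnected (sphere z₀ t) :=
    isPreconnected_sphere (by rw [Complex.rank_real_complex]; norm_num) z₀ t
  have hall : (∀ z ∈ sphere z₀ t, 0 < u z) ∨ (∀ z ∈ sphere z₀ t, u z < 0) := by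
    by_contra h
    push Not at h
    obtain ⟨⟨x, hx, hx0⟩, y, hy, hy0⟩ := h
    obtain ⟨w, hw, hw0⟩ := hpc.intermediate_value hx hy hu.continuous.continuousOn
      (show (0 : ℝ) ∈ Icc (u x) (u y) from ⟨hx0, hy0⟩)
    exact hcon w (by rw [← dist_eq_norm]; exact hw) hw0
  rcases hall with h | h
  · exact exists_zero_circle_aux hu hδ hz ht hδt h
  · refine exists_zero_circle_aux (u := fun z => -u z) (z₀ := z₀) hu.neg (δ := δ) (fun z => ?_) (by simp [hz]) ht hδt
      (fun z hz => by have := h z hz; linarith)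
    rw [lap_neg, abs_neg, abs_neg]; exact hδ z

end Landis

/-! ### Disc means and the Harnack inequality -/

namespace Landis

open MeasureTheory Filter Topology Set
open scoped ContDiff ComplexConjugate Convolution

/-- Radial weight `6 (1 - |y|²)₊²`. -/
noncomputable def wk (y : ℂ) : ℝ := 6 * max (1 - ‖y‖ ^ 2) 0 ^ 2

/-- Radial weight `(1 - |y|²)₊³`, a potential of `y ↦ -y * wk y`. -/
noncomputable def wK (y : ℂ) : ℝ := max (1 - ‖y‖ ^ 2) 0 ^ 3

lemma hasDerivAt_pos_cube (x : ℝ) : HasDerivAt (fun x : ℝ => max x 0 ^ 3) (3 * max x 0 ^ 2) x := by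
  rcases lt_trichotomy x 0 with h | h | h
  · have : (fun x : ℝ => max x 0 ^ 3) =ᶠ[𝓝 x] fun _ => 0 := by
      filter_upwards [gt_mem_nhds h] with y hy
      rw [max_eq_right hy.le]; norm_num
    rw [max_eq_right h.le]
    simpa using (hasDerivAt_const x (0 : ℝ)).congr_of_eventuallyEq this
  · subst h
    simp only [max_self]
    have : HasDerivAt (fun x : ℝ => max x 0 ^ 3) 0 0 := by
      rw [hasDerivAt_iff_isLittleO]
      simp only [max_self, sub_zero, smul_zero]
      have h1 : (fun x : ℝ => max x 0 ^ 3 - 0 ^ 3) =O[𝓝 0] fun x : ℝ => x ^ 3 := by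
        refine Asymptotics.IsBigO.of_bound 1 (Eventually.of_forall fun x => ?_)
        rw [one_mul, Real.norm_eq_abs, Real.norm_eq_abs, abs_pow]
        have : |max x 0 ^ 3 - 0 ^ 3| = max x 0 ^ 3 := by
          rw [abs_of_nonneg] <;> simp
        rw [this]
        gcongr
        exact max_le (le_abs_self x) (abs_nonneg x)
      have h2 : (fun x : ℝ => x ^ 3) =o[𝓝 0] fun x : ℝ => x := by
        simpa using Asymptotics.isLittleO_pow_pow (𝕜 := ℝ) (m := 1) (n := 3) (by norm_num)
      exact h1.trans_isLittleO h2
    simpa using this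
  · have : (fun x : ℝ => max x 0 ^ 3) =ᶠ[𝓝 x] fun x => x ^ 3 := by
      filter_upwards [lt_mem_nhds h] with y hy
      rw [max_eq_left hy.le]
    rw [max_eq_left h.le]
    simpa using (hasDerivAt_pow 3 x).congr_of_eventuallyEq this

lemma hasFDerivAt_wK (y : ℂ) : ∃ D : ℂ →L[ℝ] ℝ, HasFDerivAt wK D y ∧ ∀ v, D v = -(v * conj y).re * wk y := by
  have h1 : HasFDerivAt (fun y : ℂ => 1 - ‖y‖ ^ 2) (-(2 • (innerSL ℝ y))) y :=
    ((hasStrictFDerivAt_norm_sq y).hasFDerivAt).const_sub _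
  have h2 := (hasDerivAt_pos_cube (1 - ‖y‖ ^ 2)).comp_hasFDerivAt y h1
  refine ⟨_, h2, fun v => ?_⟩
  simp [Complex.inner, wk]; ring

lemma continuous_wk : Continuous wk := by unfold wk; fun_prop
lemma continuous_wK : Continuous wK := by unfold wK; fun_prop
lemma wk_nonneg (y : ℂ) : 0 ≤ wk y := by unfold wk; positivity
lemma wK_nonneg (y : ℂ) : 0 ≤ wK y := by unfold wK; positivity

lemma wk_eq_zero {y : ℂ} (h : 1 ≤ ‖y‖) : wk y = 0 := by
  unfold wk; rw [max_eq_right (by nlinarith)]; norm_num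
lemma wK_eq_zero {y : ℂ} (h : 1 ≤ ‖y‖) : wK y = 0 := by
  unfold wK; rw [max_eq_right (by nlinarith)]; norm_num

lemma wK_le (y : ℂ) : wK y ≤ wk y / 6 := by
  unfold wK wk
  have h1 : max (1 - ‖y‖ ^ 2) 0 ≤ 1 := max_le (by nlinarith [sq_nonneg ‖y‖]) (by norm_num)
  have h2 : 0 ≤ max (1 - ‖y‖ ^ 2) 0 := le_max_right _ _
  have h3 : 0 ≤ max (1 - ‖y‖ ^ 2) 0 ^ 2 := by positivity
  nlinarith

lemma hcs_of_zero {E : Type*} [Zero E] {f : ℂ → E} {R : ℝ} (h : ∀ y, R ≤ ‖y‖ → f y = 0) : HasCompactSupport f :=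
  HasCompactSupport.intro (isCompact_closedBall (0 : ℂ) R) fun y hy => h y (by
    simp at hy; exact hy.le)

lemma hcs_wk : HasCompactSupport wk := hcs_of_zero fun _ => wk_eq_zero
lemma hcs_wK : HasCompactSupport wK := hcs_of_zero fun _ => wK_eq_zero

/-- The weighted disc mean of `u` over the disc of radius `r` about `x` changes at the rate given by
the Laplacian. -/
lemma hasDerivAt_mean {u : ℂ → ℝ} (hu : ContDiff ℝ 2 u) (x : ℂ) (r : ℝ) :
    HasDerivAt (fun r : ℝ => ∫ y, u (x + r • y) * wk y) (∫ y, r * lap u (x + r • y) * wK y) r := by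
  have hcd : Continuous (fderiv ℝ u) := hu.continuous_fderiv (by simp)
  have hF : HasDerivAt (fun r : ℝ => ∫ y, u (x + r • y) * wk y)
      (∫ y, fderiv ℝ u (x + r • y) y * wk y) r := by
    obtain ⟨M, hM⟩ : ∃ M, ∀ z ∈ closedBall x (|r| + 1), ‖fderiv ℝ u z‖ ≤ M :=
      (isCompact_closedBall x (|r| + 1)).exists_bound_of_continuousOn hcd.continuousOn
    have hM0 : 0 ≤ M := (norm_nonneg _).trans (hM x (mem_closedBall_self (by positivity)))
    refine (hasDerivAt_integral_of_dominated_loc_of_deriv_le (μ := (volume : Measure ℂ)) (𝕜 := ℝ)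
      (F := fun r y => u (x + r • y) * wk y) (x₀ := r) (s := ball r 1)
      (F' := fun r y => fderiv ℝ u (x + r • y) y * wk y)
      (bound := fun y => M * wk y) (ball_mem_nhds r one_pos)
      (Eventually.of_forall fun s => ((hu.continuous.comp (by fun_prop)).mul
        continuous_wk).aestronglyMeasurable)
      (((hu.continuous.comp (by fun_prop)).mul continuous_wk).integrable_of_hasCompactSupport
        hcs_wk.mul_left)
      (((hcd.comp (by fun_prop : Continuous fun y : ℂ => x + r • y)).clm_apply continuous_id).mul
        continuous_wk).aestronglyMeasurable ?_
      ((continuous_wk.integrable_of_hasCompactSupport hcs_wk).const_mul M) ?_).2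
    · refine Eventually.of_forall fun y s hs => ?_
      by_cases hy : 1 ≤ ‖y‖
      · simp [wk_eq_zero hy]
      push Not at hy
      rw [norm_mul, Real.norm_of_nonneg (wk_nonneg y)]
      refine mul_le_mul_of_nonneg_right ?_ (wk_nonneg y)
      refine (ContinuousLinearMap.le_opNorm _ _).trans ?_
      have h1 : x + s • y ∈ closedBall x (|r| + 1) := by
        simp only [mem_closedBall, dist_self_add_left, norm_smul, Real.norm_eq_abs]
        have : |s| ≤ |r| + 1 := by
          have : |s - r| < 1 := by simpa [Real.dist_eq] using hs
          have := abs_sub_abs_le_abs_sub s r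
          linarith
        nlinarith [abs_nonneg s]
      calc _ ≤ M * 1 := by gcongr; exact hM _ h1
        _ = M := mul_one M
    · refine Eventually.of_forall fun y s hs => ?_
      have hl : HasDerivAt (fun s : ℝ => x + s • y) y s := by
        simpa using ((hasDerivAt_id s).smul_const y).const_add x
      exact ((hu.differentiable (by simp) _).hasFDerivAt.comp_hasDerivAt s hl).mul_const _
  convert hF using 1
  -- integration by parts in each coordinate direction
  set G : ℂ → ℂ → ℝ := fun v y => fderiv ℝ u (x + r • y) v with hG
  have hdd : ∀ v, ContDiff ℝ 1 (fun w => fderiv ℝ u w v) := fun v =>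
    ((hu.fderiv_right (m := 1) (by norm_num)).clm_apply contDiff_const)
  have hGd : ∀ v, ContDiff ℝ 1 (G v) := fun v => (hdd v).comp (by fun_prop)
  have hGf : ∀ v y, fderiv ℝ (G v) y v = r * fderiv ℝ (fun w => fderiv ℝ u w v) (x + r • y) v := by
    intro v y
    have h1 : HasFDerivAt (fun y : ℂ => x + r • y) (r • ContinuousLinearMap.id ℝ ℂ) y :=
      ((hasFDerivAt_id y).const_smul r).const_add x
    have h2 : HasFDerivAt (G v) _ y :=
      HasFDerivAt.comp (g := fun w => fderiv ℝ u w v) y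
        ((hdd v).differentiable (by simp) (x + r • y)).hasFDerivAt h1
    rw [h2.fderiv]; simp
  have hKf : ∀ y v, fderiv ℝ wK y v = -(v * conj y).re * wk y := fun y v => by
    obtain ⟨D, hD, hv⟩ := hasFDerivAt_wK y
    rw [hD.fderiv, hv]
  have hKfc : ∀ v, Continuous fun y => fderiv ℝ wK y v := fun v => by
    simp_rw [hKf]; exact Continuous.mul (by fun_prop) continuous_wk
  have hKfs : ∀ v, HasCompactSupport fun y => fderiv ℝ wK y v := fun v => hcs_wK.fderiv_apply ℝ v
  have i1 : ∀ v, Integrable fun y => fderiv ℝ wK y v * G v y := fun v =>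
    ((hKfc v).mul (hGd v).continuous).integrable_of_hasCompactSupport (hKfs v).mul_right
  have i2 : ∀ v, Integrable fun y => wK y * fderiv ℝ (G v) y v := fun v =>
    (continuous_wK.mul (((hGd v).continuous_fderiv (by simp)).clm_apply
      continuous_const)).integrable_of_hasCompactSupport hcs_wK.mul_right
  have key : ∀ v, ∫ y, wK y * fderiv ℝ (G v) y v = -∫ y, fderiv ℝ wK y v * G v y := fun v =>
    integral_mul_fderiv_eq_neg_fderiv_mul_of_integrable (i1 v) (i2 v)
      ((continuous_wK.mul (hGd v).continuous).integrable_of_hasCompactSupport hcs_wK.mul_right)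
      (fun y _ => (hasFDerivAt_wK y).choose_spec.1.differentiableAt)
      (fun y _ => (hGd v).differentiable (by simp) y)
  calc ∫ y, r * lap u (x + r • y) * wK y
      = ∫ y, (wK y * fderiv ℝ (G 1) y 1 + wK y * fderiv ℝ (G Complex.I) y Complex.I) := by
        congr 1; ext y; rw [hGf, hGf]; unfold lap; ring
    _ = -∫ y, (fderiv ℝ wK y 1 * G 1 y + fderiv ℝ wK y Complex.I * G Complex.I y) := by
        rw [integral_add (i2 1) (i2 _), integral_add (i1 1) (i1 _), key, key]; ring
    _ = _ := by
        rw [← integral_neg]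
        congr 1; ext y
        rw [hKf, hKf, fderiv_eq_gr u _ y, hG]
        simp only
        rw [fderiv_eq_gr u _ 1, fderiv_eq_gr u _ Complex.I]
        simp; ring

/-- Two-sided comparison of weighted disc means with the value at the centre. -/
lemma mean_compare {u : ℂ → ℝ} (hu : ContDiff ℝ 2 u) {x : ℂ} {R δ : ℝ} (hR : 0 ≤ R) (hδ : 0 ≤ δ)
    (hpos : ∀ z ∈ ball x R, 0 ≤ u z ∧ |lap u z| ≤ δ * u z) :
    (∫ y, u (x + R • y) * wk y) ≤ u x * (∫ y, wk y) * Real.exp (δ * R ^ 2 / 12) ∧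
    u x * (∫ y, wk y) * Real.exp (-(δ * R ^ 2 / 12)) ≤ ∫ y, u (x + R • y) * wk y := by
  set A : ℝ → ℝ := fun r => ∫ y, u (x + r • y) * wk y with hA
  set A' : ℝ → ℝ := fun r => ∫ y, r * lap u (x + r • y) * wK y with hA'
  have hd : ∀ r, HasDerivAt A (A' r) r := fun r => hasDerivAt_mean hu x r
  have hA0 : A 0 = u x * ∫ y, wk y := by simp [hA, integral_const_mul]
  have hbd : ∀ r ∈ Icc 0 R, |A' r| ≤ r * δ / 6 * A r := by
    intro r hr
    have : r * δ / 6 * A r = ∫ y, r * δ / 6 * (u (x + r • y) * wk y) := by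
      rw [integral_const_mul]
    rw [this]
    refine norm_integral_le_of_norm_le (f := fun y => r * lap u (x + r • y) * wK y)
      ((((hu.continuous.comp (by fun_prop)).mul continuous_wk).integrable_of_hasCompactSupport
      hcs_wk.mul_left).const_mul _) (Eventually.of_forall fun y => ?_)
    by_cases hy : 1 ≤ ‖y‖
    · simp [wK_eq_zero hy, wk_eq_zero hy]
    push Not at hy
    rcases hr.1.eq_or_lt with h0 | h0
    · simp [← h0]
    have hmem : x + r • y ∈ ball x R := by
      simp only [mem_ball, dist_self_add_left, norm_smul, Real.norm_eq_abs, abs_of_pos h0]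
      nlinarith [hr.2]
    obtain ⟨h1, h2⟩ := hpos _ hmem
    rw [norm_mul, norm_mul, Real.norm_of_nonneg (wK_nonneg y), Real.norm_of_nonneg hr.1,
      Real.norm_eq_abs]
    calc r * |lap u (x + r • y)| * wK y ≤ r * (δ * u (x + r • y)) * (wk y / 6) := by
          gcongr
          · exact wK_nonneg y
          · exact wK_le y
      _ = _ := by ring
  have hE : ∀ s r : ℝ, HasDerivAt (fun r : ℝ => A r * Real.exp (s * (δ * r ^ 2 / 12)))
      ((A' r + s * (r * δ / 6 * A r)) * Real.exp (s * (δ * r ^ 2 / 12))) r := by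
    intro s r
    have h1 : HasDerivAt (fun r : ℝ => s * (δ * r ^ 2 / 12)) (s * (δ * (2 * r) / 12)) r := by
      have := (((hasDerivAt_pow 2 r).const_mul δ).div_const 12).const_mul s
      simpa using this
    refine ((hd r).mul h1.exp).congr_deriv ?_
    ring
  have hanti : AntitoneOn (fun r : ℝ => A r * Real.exp ((-1) * (δ * r ^ 2 / 12))) (Icc 0 R) := by
    refine antitoneOn_of_deriv_nonpos (convex_Icc 0 R)
      (fun r _ => (hE _ r).continuousAt.continuousWithinAt)
      (fun r _ => (hE _ r).differentiableAt.differentiableWithinAt) fun r hr => ?_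
    rw [interior_Icc] at hr
    rw [(hE _ r).deriv]
    have := (abs_le.1 (hbd r ⟨hr.1.le, hr.2.le⟩)).2
    exact mul_nonpos_of_nonpos_of_nonneg (by linarith) (Real.exp_pos _).le
  have hmono : MonotoneOn (fun r : ℝ => A r * Real.exp (1 * (δ * r ^ 2 / 12))) (Icc 0 R) := by
    refine monotoneOn_of_deriv_nonneg (convex_Icc 0 R)
      (fun r _ => (hE _ r).continuousAt.continuousWithinAt)
      (fun r _ => (hE _ r).differentiableAt.differentiableWithinAt) fun r hr => ?_
    rw [interior_Icc] at hr
    rw [(hE _ r).deriv]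
    have := (abs_le.1 (hbd r ⟨hr.1.le, hr.2.le⟩)).1
    exact mul_nonneg (by linarith) (Real.exp_pos _).le
  have h1 := hanti (left_mem_Icc.2 hR) (right_mem_Icc.2 hR) hR
  have h2 := hmono (left_mem_Icc.2 hR) (right_mem_Icc.2 hR) hR
  simp only [hA0] at h1 h2
  norm_num at h1 h2
  rw [Real.exp_neg] at h1 ⊢
  have hE0 := Real.exp_pos (δ * R ^ 2 / 12)
  constructor
  · change A R ≤ _
    rw [← div_eq_mul_inv, div_le_iff₀ hE0] at h1
    exact h1
  · change _ ≤ A R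
    rw [← div_eq_mul_inv, div_le_iff₀ hE0]
    exact h2

lemma wk_mass_pos : 0 < ∫ y, wk y := by
  rw [integral_pos_iff_support_of_nonneg wk_nonneg (continuous_wk.integrable_of_hasCompactSupport hcs_wk)]
  have : ball (0 : ℂ) 1 ⊆ Function.support wk := fun y hy => by
    simp only [mem_ball, dist_zero_right] at hy
    have h1 : 0 < 1 - ‖y‖ ^ 2 := by nlinarith [norm_nonneg y]
    rw [Function.mem_support, wk, max_eq_left h1.le]; positivity
  exact (measure_ball_pos volume _ one_pos).trans_le (measure_mono this)

lemma mean_shift (u : ℂ → ℝ) (x : ℂ) {R : ℝ} (hR : 0 < R) :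
    ∫ y, u (x + R • y) * wk y = (R ^ 2)⁻¹ * ∫ z, u z * wk (R⁻¹ • (z - x)) := by
  rw [← integral_add_left_eq_self (fun z => u z * wk (R⁻¹ • (z - x))) x]
  have := Measure.integral_comp_smul (volume : Measure ℂ)
    (fun y => u (x + y) * wk (R⁻¹ • (x + y - x))) R
  rw [Complex.finrank_real_complex, abs_of_pos (by positivity), smul_eq_mul] at this
  rw [← this]
  congr 1; ext y
  rw [add_sub_cancel_left, smul_smul, inv_mul_cancel₀ hR.ne', one_smul]

lemma wk_dom {x y z : ℂ} (hxy : ‖x - y‖ ≤ 6) :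
    wk ((1 : ℝ)⁻¹ • (z - x)) ≤ 19 * wk ((8 : ℝ)⁻¹ • (z - y)) := by
  by_cases h : 1 ≤ ‖z - x‖
  · rw [wk_eq_zero (by simpa using h)]
    have := wk_nonneg ((8 : ℝ)⁻¹ • (z - y)); positivity
  push Not at h
  have h1 : ‖z - y‖ ≤ 7 := by
    have := norm_sub_le_norm_sub_add_norm_sub z x y; linarith
  have h2 : wk ((1 : ℝ)⁻¹ • (z - x)) ≤ 6 := by
    have h1 : max (1 - ‖(1 : ℝ)⁻¹ • (z - x)‖ ^ 2) 0 ≤ 1 :=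
      max_le (by nlinarith [sq_nonneg ‖(1 : ℝ)⁻¹ • (z - x)‖]) (by norm_num)
    have h2 : max (1 - ‖(1 : ℝ)⁻¹ • (z - x)‖ ^ 2) 0 ^ 2 ≤ 1 := pow_le_one₀ (le_max_right _ _) h1
    unfold wk; linarith
  have h3 : 6 * (15 / 64) ^ 2 ≤ wk ((8 : ℝ)⁻¹ • (z - y)) := by
    unfold wk
    have : (15 : ℝ) / 64 ≤ max (1 - ‖(8 : ℝ)⁻¹ • (z - y)‖ ^ 2) 0 := by
      refine le_max_of_le_left ?_
      rw [norm_smul]; norm_num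
      nlinarith [norm_nonneg (z - y)]
    gcongr
  linarith

/-- Comparison of weighted disc means: `u x` is bounded by its mean over a unit disc, hence by the
mean over the larger disc of radius `8` about `y`, hence by `u y`. -/
lemma harnack_pos {u : ℂ → ℝ} (hu : ContDiff ℝ 2 u) {δ : ℝ} (hδ : 0 ≤ δ) (hδ1 : δ ≤ 1 / 100)
    (hl : ∀ z, |lap u z| ≤ δ * |u z|) {q : ℂ} (hpos : ∀ z ∈ ball q 11, 0 < u z) {x y : ℂ}
    (hx : x ∈ closedBall q 3) (hy : y ∈ closedBall q 3) : u x ≤ 10000 * u y := by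
  rw [mem_closedBall] at hx hy
  have hb : ∀ w, dist w q ≤ 3 → ∀ R ≤ 8, ∀ z ∈ ball w R, 0 ≤ u z ∧ |lap u z| ≤ δ * u z := by
    intro w hw R hR z hz
    have : z ∈ ball q 11 := by
      rw [mem_ball] at hz ⊢; linarith [dist_triangle z w q]
    have h := hpos z this
    refine ⟨h.le, ?_⟩
    have := hl z
    rwa [abs_of_pos h] at this
  -- The unit disc about `x` lies well inside the disc of radius `8` about `y`, so the mean of the
  -- positive function `u` over the former is dominated by the mean over the latter.
  have h1 := (mean_compare hu (R := 1) zero_le_one hδ (hb x hx 1 (by norm_num))).2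
  have h2 := (mean_compare hu (R := 8) (by norm_num) hδ (hb y hy 8 le_rfl)).1
  rw [mean_shift _ _ one_pos] at h1
  rw [mean_shift _ _ (by norm_num)] at h2
  have hxy : ‖x - y‖ ≤ 6 := by
    rw [← dist_eq_norm]; linarith [dist_triangle_right x y q]
  have hii : ∀ (w : ℂ) {R : ℝ}, 0 < R → Integrable fun z => u z * wk (R⁻¹ • (z - w)) := by
    intro w R hR
    refine (hu.continuous.mul (continuous_wk.comp (by fun_prop))).integrable_of_hasCompactSupport
      (HasCompactSupport.mul_left ?_)
    refine HasCompactSupport.intro (isCompact_closedBall w R) fun z hz => ?_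
    apply wk_eq_zero
    simp only [mem_closedBall, not_le, dist_eq_norm] at hz
    rw [norm_smul, norm_inv, Real.norm_of_nonneg hR.le, inv_mul_eq_div, le_div_iff₀ hR]
    linarith
  have h3 : ∫ z, u z * wk ((1 : ℝ)⁻¹ • (z - x)) ≤ 19 * ∫ z, u z * wk ((8 : ℝ)⁻¹ • (z - y)) := by
    rw [← integral_const_mul]
    refine integral_mono (hii x one_pos) ((hii y (by norm_num)).const_mul _) fun z => ?_
    simp only
    by_cases hz : z ∈ ball q 11
    · have := wk_dom (z := z) hxy
      have hp := hpos z hz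
      nlinarith
    · rw [mem_ball] at hz
      rw [wk_eq_zero, wk_eq_zero]
      · simp
      · rw [norm_smul, ← dist_eq_norm]; norm_num
        linarith [dist_triangle z y q]
      · rw [norm_smul, ← dist_eq_norm]; norm_num
        linarith [dist_triangle z x q]
  set m := ∫ y, wk y with hm
  have hm0 : 0 < m := wk_mass_pos
  have hux := hpos x (by rw [mem_ball]; linarith)
  have huy := hpos y (by rw [mem_ball]; linarith)
  have he1 : (9 : ℝ) / 10 ≤ Real.exp (-(δ * 1 ^ 2 / 12)) := by
    have := Real.add_one_le_exp (-(δ * 1 ^ 2 / 12)); linarith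
  have he2 : Real.exp (δ * 8 ^ 2 / 12) ≤ 3 := by
    have : Real.exp (δ * 8 ^ 2 / 12) ≤ Real.exp 1 := Real.exp_le_exp.2 (by linarith)
    linarith [Real.exp_one_lt_three]
  have h4 : u x * m * (9 / 10) ≤ u x * m * Real.exp (-(δ * 1 ^ 2 / 12)) := by gcongr
  have h5 : u y * m * Real.exp (δ * 8 ^ 2 / 12) ≤ u y * m * 3 := by gcongr
  have h6 : u x * m ≤ 10000 * u y * m := by nlinarith
  exact le_of_mul_le_mul_right h6 hm0

/-- Harnack inequality for solutions without zeros. -/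
lemma harnack {u : ℂ → ℝ} (hu : ContDiff ℝ 2 u) {δ : ℝ} (hδ : 0 ≤ δ) (hδ1 : δ ≤ 1 / 100)
    (hl : ∀ z, |lap u z| ≤ δ * |u z|) {q : ℂ} (hne : ∀ z ∈ ball q 11, u z ≠ 0) {x y : ℂ}
    (hx : x ∈ closedBall q 3) (hy : y ∈ closedBall q 3) : |u x| ≤ 10000 * |u y| := by
  have hall : (∀ z ∈ ball q 11, 0 < u z) ∨ (∀ z ∈ ball q 11, u z < 0) := by
    by_contra h
    push Not at h
    obtain ⟨⟨x, hx, hx0⟩, y, hy, hy0⟩ := h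
    obtain ⟨w, hw, hw0⟩ := (convex_ball q 11).isPreconnected.intermediate_value hx hy
      hu.continuous.continuousOn (show (0 : ℝ) ∈ Icc (u x) (u y) from ⟨hx0, hy0⟩)
    exact hne w hw hw0
  have hsub : closedBall q 3 ⊆ ball q 11 := closedBall_subset_ball (by norm_num)
  rcases hall with h | h
  · rw [abs_of_pos (h x (hsub hx)), abs_of_pos (h y (hsub hy))]
    exact harnack_pos hu hδ hδ1 hl h hx hy
  · rw [abs_of_neg (h x (hsub hx)), abs_of_neg (h y (hsub hy))]
    refine harnack_pos (u := fun z => -u z) hu.neg hδ hδ1 (fun z => ?_) (fun z hz => ?_) hx hy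
    · rw [lap_neg, abs_neg, abs_neg]; exact hl z
    · have := h z hz; linarith

end Landis

/-! ### The interior gradient estimate -/

namespace Landis

open MeasureTheory Filter Topology Set
open scoped ContDiff ComplexConjugate Convolution

lemma exists_cutoff {a b : ℝ} (ha : 0 < a) (hab : a < b) : ∃ κ : ℂ → ℝ, ContDiff ℝ 2 κ ∧
    (∀ z, 0 ≤ κ z ∧ κ z ≤ 1) ∧ (∀ z, ‖z‖ ≤ a → κ z = 1) ∧ (∀ z, b ≤ ‖z‖ → κ z = 0) := by
  let κ : ContDiffBump (0 : ℂ) := ⟨a, b, ha, hab⟩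
  exact ⟨κ, κ.contDiff, fun z => ⟨κ.nonneg, κ.le_one⟩,
    fun z hz => κ.one_of_mem_closedBall (by simpa using hz),
    fun z hz => κ.zero_of_le_dist (by simpa using hz)⟩

lemma norm_gr_le_of {u : ℂ → ℝ} {z : ℂ} : ‖gr u z‖ ≤ ‖fderiv ℝ u z‖ := by
  have h1 : ‖(fderiv ℝ u z 1 : ℂ)‖ ≤ ‖fderiv ℝ u z‖ := by
    simpa using (fderiv ℝ u z).le_opNorm 1
  have h2 : ‖(fderiv ℝ u z Complex.I : ℂ)‖ ≤ ‖fderiv ℝ u z‖ := by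
    simpa using (fderiv ℝ u z).le_opNorm Complex.I
  unfold gr
  rw [norm_div, Complex.norm_ofNat]
  have h3 := norm_sub_le (fderiv ℝ u z 1 : ℂ) (Complex.I * (fderiv ℝ u z Complex.I : ℂ))
  rw [norm_mul, Complex.norm_I, one_mul] at h3
  linarith

lemma norm_fderiv_le_gr (u : ℂ → ℝ) (z : ℂ) : ‖fderiv ℝ u z‖ ≤ 2 * ‖gr u z‖ := by
  refine ContinuousLinearMap.opNorm_le_bound _ (by positivity) fun v => ?_
  rw [fderiv_eq_gr, norm_mul, Real.norm_ofNat, Real.norm_eq_abs, mul_assoc]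
  gcongr
  refine (Complex.abs_re_le_norm _).trans ?_
  rw [norm_mul, mul_comm]

lemma continuous_lap {v : ℂ → ℝ} (hv : ContDiff ℝ 2 v) : Continuous (lap v) := by
  have hdd : ∀ v', ContDiff ℝ 1 (fun w => fderiv ℝ v w v') := fun _ =>
    ((hv.fderiv_right (m := 1) (by norm_num)).clm_apply contDiff_const)
  exact (((hdd 1).continuous_fderiv (by simp)).clm_apply continuous_const).add
    (((hdd Complex.I).continuous_fderiv (by simp)).clm_apply continuous_const)

/-- Interior gradient estimate at the origin. -/
lemma gradient_bound_zero : ∃ C : ℝ, 0 < C ∧ ∀ (v : ℂ → ℝ) (M : ℝ), ContDiff ℝ 2 v →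
    (∀ y ∈ ball (0 : ℂ) 1, |lap v y| ≤ |v y| ∧ |v y| ≤ M) → ‖gr v 0‖ ≤ C * M := by
  obtain ⟨κ, hκ, hκ01, hκ1, hκ0⟩ := exists_cutoff (a := 1 / 4) (b := 1 / 2) (by norm_num) (by norm_num)
  set k : ℂ → ℂ := fun y => (κ y : ℂ) with hk
  have hkd : ContDiff ℝ 2 k := Complex.ofRealCLM.contDiff.comp hκ
  have hkz : ∀ y, 1 / 2 ≤ ‖y‖ → k y = 0 := fun y hy => by simp [hk, hκ0 y hy]
  have hkc : HasCompactSupport k := hcs_of_zero hkz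
  have hdk : ContDiff ℝ 1 (dbar k) := by
    have : ∀ v : ℂ, ContDiff ℝ 1 fun z => fderiv ℝ k z v := fun v =>
      ((hkd.fderiv_right (m := 1) (by norm_num)).clm_apply contDiff_const)
    exact ((this 1).add (contDiff_const.mul (this Complex.I))).div_const 2
  have hdk0 : ∀ y, ‖y‖ < 1 / 4 → dbar k y = 0 := by
    intro y hy
    have : k =ᶠ[𝓝 y] fun _ => 1 := by
      filter_upwards [(isOpen_lt continuous_norm continuous_const).mem_nhds hy] with z hz
      simp [hk, hκ1 z (le_of_lt hz)]
    unfold dbar; rw [this.fderiv_eq]; simp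
  have hdkz : ∀ y, 3 / 4 ≤ ‖y‖ → dbar k y = 0 := by
    intro y hy
    have : k =ᶠ[𝓝 y] fun _ => 0 := by
      filter_upwards [(isOpen_lt continuous_const continuous_norm).mem_nhds
        (show 1 / 2 < ‖y‖ by linarith)] with z hz
      exact hkz z (le_of_lt hz)
    unfold dbar; rw [this.fderiv_eq]; simp
  set g0 : ℂ → ℂ := fun y => dbar k y * y⁻¹ with hg0
  have hg0d : ContDiff ℝ 1 g0 := by
    rw [contDiff_iff_contDiffAt]
    intro y
    by_cases hy : ‖y‖ < 1 / 4
    · have : g0 =ᶠ[𝓝 y] fun _ => 0 := by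
        filter_upwards [(isOpen_lt continuous_norm continuous_const).mem_nhds hy] with z hz
        simp [hg0, hdk0 z hz]
      exact contDiffAt_const.congr_of_eventuallyEq this
    · have hne : y ≠ 0 := by rintro rfl; simp at hy
      exact hdk.contDiffAt.mul (contDiffAt_inv ℝ hne)
  have hg0z : ∀ y, 3 / 4 ≤ ‖y‖ → g0 y = 0 := fun y hy => by simp [hg0, hdkz y hy]
  have hg0c : HasCompactSupport g0 := hcs_of_zero hg0z
  have hg0v : ∀ v, Continuous fun y => fderiv ℝ g0 y v := fun v =>
    (hg0d.continuous_fderiv (by simp)).clm_apply continuous_const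
  have hg0vz : ∀ v y, 1 ≤ ‖y‖ → fderiv ℝ g0 y v = 0 := by
    intro v y hy
    have : g0 =ᶠ[𝓝 y] fun _ => 0 := by
      filter_upwards [(isOpen_lt continuous_const continuous_norm).mem_nhds
        (show 3 / 4 < ‖y‖ by linarith)] with z hz
      exact hg0z z (le_of_lt hz)
    rw [this.fderiv_eq]; simp
  have hg0vi : ∀ v, Integrable fun y => fderiv ℝ g0 y v := fun v =>
    (hg0v v).integrable_of_hasCompactSupport (hg0c.fderiv_apply ℝ v)
  set c1 : ℝ := ∫ y, ‖k y * y⁻¹‖ with hc1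
  set c2 : ℝ := ∫ y, (‖fderiv ℝ g0 y 1‖ + ‖fderiv ℝ g0 y Complex.I‖) with hc2
  have hc1n : 0 ≤ c1 := integral_nonneg fun y => norm_nonneg _
  have hc2n : 0 ≤ c2 := integral_nonneg fun y => by positivity
  have hki : Integrable fun y => k y * y⁻¹ := by
    have := T_integrable hkd.continuous hkc 0
    simpa [← neg_inv] using this.neg
  refine ⟨cc⁻¹ * (c1 + c2) + 1, by have := cc_pos; positivity, fun v M hv hM => ?_⟩
  have hM0 : 0 ≤ M := (abs_nonneg _).trans (hM 0 (by simp)).2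
  have hgv : ContDiff ℝ 1 (gr v) := contDiff_gr hv
  set h : ℂ → ℂ := fun y => k y * gr v y with hh
  have hhd : ContDiff ℝ 1 h := (hkd.of_le (by norm_num)).mul hgv
  have hhc : HasCompactSupport h := hkc.mul_right
  have h0 := integral_inv_dbar hhd hhc
  have hdh : ∀ y, dbar h y * y⁻¹ = k y * y⁻¹ * (lap v y / 4) + g0 y * gr v y := by
    intro y
    rw [hh, dbar_mul (hkd.differentiable (by simp) y) (hgv.differentiable (by simp) y), dbar_gr hv, hg0]
    ring
  set vc : ℂ → ℂ := fun y => (v y : ℂ) with hvc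
  have hvcd : ContDiff ℝ 2 vc := Complex.ofRealCLM.contDiff.comp hv
  have hvcf : ∀ y w, fderiv ℝ vc y w = (fderiv ℝ v y w : ℂ) := by
    intro y w
    have : HasFDerivAt vc _ y := Complex.ofRealCLM.hasFDerivAt.comp y
      (hv.differentiable (by simp) y).hasFDerivAt
    rw [this.fderiv]; simp
  have hvcc : ∀ w, Continuous fun y => fderiv ℝ vc y w := fun w =>
    (hvcd.continuous_fderiv (by simp)).clm_apply continuous_const
  have i1 : ∀ w, Integrable fun y => g0 y * fderiv ℝ vc y w := fun w =>
    (hg0d.continuous.mul (hvcc w)).integrable_of_hasCompactSupport hg0c.mul_right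
  have i2 : ∀ w, Integrable fun y => fderiv ℝ g0 y w * vc y := fun w =>
    ((hg0v w).mul hvcd.continuous).integrable_of_hasCompactSupport (hg0c.fderiv_apply ℝ w).mul_right
  -- The kernel `g0` vanishes near the origin, so it can take the derivative off `v`.
  have ibp : ∀ w, ∫ y, g0 y * fderiv ℝ vc y w = -∫ y, fderiv ℝ g0 y w * vc y := fun w =>
    integral_mul_fderiv_eq_neg_fderiv_mul_of_integrable (i2 w) (i1 w)
      ((hg0d.continuous.mul hvcd.continuous).integrable_of_hasCompactSupport hg0c.mul_right)
      (fun y _ => hg0d.differentiable (by simp) y) (fun y _ => hvcd.differentiable (by simp) y)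
  have hgrv : ∀ y, g0 y * gr v y = (1 / 2) * (g0 y * fderiv ℝ vc y 1) -
      (Complex.I / 2) * (g0 y * fderiv ℝ vc y Complex.I) := by
    intro y; rw [hvcf, hvcf, gr]; ring
  have hB : ‖∫ y, g0 y * gr v y‖ ≤ M * c2 := by
    have : ∫ y, g0 y * gr v y = ∫ y, ((Complex.I / 2) * (fderiv ℝ g0 y Complex.I * vc y) -
      (1 / 2) * (fderiv ℝ g0 y 1 * vc y)) := by
      simp_rw [hgrv]
      rw [integral_sub ((i1 _).const_mul _) ((i1 _).const_mul _), integral_const_mul,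
        integral_const_mul, ibp, ibp, integral_sub ((i2 _).const_mul _) ((i2 _).const_mul _),
        integral_const_mul, integral_const_mul]
      ring
    rw [this, hc2, ← integral_const_mul]
    refine norm_integral_le_of_norm_le (((hg0vi 1).norm.add (hg0vi _).norm).const_mul M)
      (Eventually.of_forall fun y => ?_)
    by_cases hy : 1 ≤ ‖y‖
    · simp [hg0vz _ y hy]
    have hvy : ‖vc y‖ ≤ M := by
      simpa [hvc] using (hM y (by simpa using hy)).2
    refine (norm_sub_le _ _).trans ?_
    rw [norm_mul, norm_mul, norm_mul, norm_mul, norm_div, norm_div]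
    simp only [norm_one, Complex.norm_I, Complex.norm_ofNat]
    have h1 := mul_le_mul_of_nonneg_left hvy (norm_nonneg (fderiv ℝ g0 y 1))
    have h2 := mul_le_mul_of_nonneg_left hvy (norm_nonneg (fderiv ℝ g0 y Complex.I))
    have h3 := mul_nonneg (norm_nonneg (fderiv ℝ g0 y 1)) hM0
    have h4 := mul_nonneg (norm_nonneg (fderiv ℝ g0 y Complex.I)) hM0
    linarith
  have hlc : Continuous (lap v) := continuous_lap hv
  have hA : ‖∫ y, k y * y⁻¹ * (lap v y / 4)‖ ≤ M * c1 := by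
    rw [hc1, ← integral_const_mul]
    refine norm_integral_le_of_norm_le (hki.norm.const_mul M) (Eventually.of_forall fun y => ?_)
    by_cases hy : 1 ≤ ‖y‖
    · simp [hkz y (by linarith)]
    obtain ⟨h1, h2⟩ := hM y (by simpa using hy)
    rw [norm_mul, mul_comm]
    gcongr
    rw [norm_div]; simp; linarith [abs_nonneg (lap v y)]
  have iA : Integrable fun y => k y * y⁻¹ * ((lap v y : ℂ) / 4) := by
    have := T_integrable (g := fun y => k y * ((lap v y : ℂ) / 4)) (hkd.continuous.mul
      ((Complex.continuous_ofReal.comp hlc).div_const 4)) hkc.mul_right 0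
    refine this.neg.congr (Eventually.of_forall fun y => ?_)
    simp; ring
  have iB : Integrable fun y => g0 y * gr v y :=
    (hg0d.continuous.mul hgv.continuous).integrable_of_hasCompactSupport hg0c.mul_right
  simp_rw [hdh] at h0
  rw [integral_add iA iB] at h0
  have hk00 : h 0 = gr v 0 := by simp [hh, hk, hκ1 0 (by simp)]
  rw [hk00] at h0
  have hcc := cc_pos
  have h7 : cc * ‖gr v 0‖ ≤ M * c1 + M * c2 := by
    have : ‖-((cc : ℂ) * gr v 0)‖ = cc * ‖gr v 0‖ := by
      rw [norm_neg, norm_mul, Complex.norm_real, Real.norm_of_nonneg hcc.le]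
    rw [← this, ← h0]
    exact (norm_add_le _ _).trans (add_le_add hA hB)
  calc ‖gr v 0‖ = cc⁻¹ * (cc * ‖gr v 0‖) := by field_simp
    _ ≤ cc⁻¹ * (M * c1 + M * c2) := by gcongr
    _ ≤ _ := by nlinarith

/-- Interior gradient estimate at unit scale. -/
lemma gradient_bound : ∃ C : ℝ, 0 < C ∧ ∀ (u : ℂ → ℝ) (x : ℂ) (M : ℝ), ContDiff ℝ 2 u →
    (∀ y ∈ ball x 1, |lap u y| ≤ |u y| ∧ |u y| ≤ M) → ‖gr u x‖ ≤ C * M := by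
  obtain ⟨C, hC, h⟩ := gradient_bound_zero
  refine ⟨C, hC, fun u x M hu hM => ?_⟩
  have := h (fun y => u (x + y)) M (hu.comp (by fun_prop)) fun y hy => by
    rw [lap_shift]; exact hM _ (by simpa using hy)
  rwa [gr_shift, add_zero] at this

end Landis

/-! ### Compensated kernels -/

namespace Landis

open MeasureTheory Filter Topology Set
open scoped ContDiff ComplexConjugate Convolution

/-- First order expansion of `log |a - b|` in `b`. -/
lemma log_expand {a b : ℂ} (h : 2 * ‖b‖ ≤ ‖a‖) (ha : a ≠ 0) :
    |Real.log ‖a - b‖ - Real.log ‖a‖ + (b / a).re| ≤ ‖b‖ ^ 2 / ‖a‖ ^ 2 := by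
  have hpos : 0 < ‖a‖ := norm_pos_iff.2 ha
  set w := -(b / a) with hw
  have hwn : ‖w‖ = ‖b‖ / ‖a‖ := by rw [hw, norm_neg, norm_div]
  have hw2 : ‖w‖ ≤ 1 / 2 := by rw [hwn, div_le_iff₀ hpos]; linarith
  have h1 : a - b = a * (1 + w) := by rw [hw]; field_simp; ring
  have hne : 1 + w ≠ 0 := by
    intro h0
    have : w = -1 := by linear_combination h0
    rw [this] at hw2; norm_num at hw2
  have h2 : Real.log ‖a - b‖ = Real.log ‖a‖ + (Complex.log (1 + w)).re := by
    rw [h1, norm_mul, Real.log_mul hpos.ne' (norm_ne_zero_iff.2 hne), Complex.log_re]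
  have h3 : Real.log ‖a - b‖ - Real.log ‖a‖ + (b / a).re = (Complex.log (1 + w) - w).re := by
    rw [h2, Complex.sub_re, hw, Complex.neg_re]; ring
  rw [h3]
  refine (Complex.abs_re_le_norm _).trans ((Complex.norm_log_one_add_sub_self_le (by linarith)).trans ?_)
  rw [← div_pow, ← hwn]
  have : (1 - ‖w‖)⁻¹ ≤ 2 := by
    rw [inv_le_comm₀ (by linarith) (by norm_num)]; linarith
  nlinarith [sq_nonneg ‖w‖]

/-- First order expansion of `(a - b)⁻¹` in `b`. -/
lemma inv_expand {a b : ℂ} (h : 2 * ‖b‖ ≤ ‖a‖) (ha : a ≠ 0) :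
    ‖(a - b)⁻¹ - a⁻¹ - b * (a ^ 2)⁻¹‖ ≤ 2 * ‖b‖ ^ 2 / ‖a‖ ^ 3 := by
  have hpos : 0 < ‖a‖ := norm_pos_iff.2 ha
  have hab : ‖a‖ / 2 ≤ ‖a - b‖ := by
    have := norm_sub_norm_le a b; linarith
  have hne : a - b ≠ 0 := norm_pos_iff.1 (by linarith)
  have h1 : (a - b)⁻¹ - a⁻¹ - b * (a ^ 2)⁻¹ = b ^ 2 * (a ^ 2)⁻¹ * (a - b)⁻¹ := by
    field_simp; ring
  rw [h1, norm_mul, norm_mul, norm_inv, norm_inv, norm_pow, norm_pow]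
  have : ‖a - b‖⁻¹ ≤ 2 / ‖a‖ := by
    rw [inv_le_comm₀ (by linarith) (by positivity), inv_div]; exact hab
  calc ‖b‖ ^ 2 * (‖a‖ ^ 2)⁻¹ * ‖a - b‖⁻¹ ≤ ‖b‖ ^ 2 * (‖a‖ ^ 2)⁻¹ * (2 / ‖a‖) := by gcongr
    _ = _ := by field_simp

/-- The integrable singularity `x ↦ x^{-1/2}` (equal to `0` at `0`). -/
noncomputable def rs (x : ℝ) : ℝ := (√x)⁻¹

lemma rs_nonneg (x : ℝ) : 0 ≤ rs x := by unfold rs; positivity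

lemma measurable_rs : Measurable rs := by unfold rs; fun_prop

lemma rs_eq {x : ℝ} (hx : 0 ≤ x) : rs x = x ^ (-(1 / 2 : ℝ)) := by
  rw [rs, Real.sqrt_eq_rpow, Real.rpow_neg hx]

lemma locInt_rs : LocallyIntegrable (fun z : ℂ => rs ‖z‖) := by
  refine locInt_of_bound (measurable_rs.comp measurable_norm).aestronglyMeasurable
    (p := 1 / 2) (by norm_num) fun R => ⟨1, fun z _ => ?_⟩
  rw [Real.norm_of_nonneg (rs_nonneg _), rs_eq (norm_nonneg _), one_mul]

lemma abs_log_le_rs {x R : ℝ} (hx : 0 ≤ x) (hR : x ≤ R) (h1 : 1 ≤ R) : |Real.log x| ≤ 2 * R * rs x := by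
  rcases hx.eq_or_lt with rfl | hx
  · simp; exact mul_nonneg (by linarith) (rs_nonneg _)
  unfold rs
  have hs : 0 < √x := Real.sqrt_pos.2 hx
  have hl : Real.log x = 2 * Real.log (√x) := by
    rw [Real.log_sqrt hx.le]; ring
  have hss : √x * √x = x := Real.mul_self_sqrt hx.le
  rw [hl, abs_mul, abs_of_pos (by norm_num : (0:ℝ) < 2), mul_assoc]
  gcongr
  rw [← div_eq_mul_inv, le_div_iff₀ hs]
  rcases le_total 1 (√x) with h | h
  · rw [abs_of_nonneg (Real.log_nonneg h)]
    nlinarith [Real.log_le_sub_one_of_pos hs]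
  · rw [abs_of_nonpos (Real.log_nonpos hs.le h)]
    have h2 := Real.log_le_sub_one_of_pos (inv_pos.2 hs)
    rw [Real.log_inv] at h2
    have h3 : (√x)⁻¹ * √x = 1 := inv_mul_cancel₀ hs.ne'
    nlinarith

/-- A `C¹` probability density supported within `13` of `c`, with uniformly bounded `1/2`-Riesz
potential. -/
structure Dens (C₀ : ℝ) (c : ℂ) (n : ℂ → ℝ) : Prop where
  contDiff : ContDiff ℝ 1 n
  nonneg : ∀ ξ, 0 ≤ n ξ
  supp : ∀ ξ, 13 < ‖ξ - c‖ → n ξ = 0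
  mass : ∫ ξ, n ξ = 1
  riesz : ∀ z, ∫ ξ, n ξ * rs ‖z - ξ‖ ≤ C₀

/-- The potential `∫ n(ξ) / |z - ξ|`. -/
noncomputable def pot (n : ℂ → ℝ) (z : ℂ) : ℝ := ∫ ξ, n ξ * ‖z - ξ‖⁻¹

lemma locInt_norm_inv : LocallyIntegrable (fun z : ℂ => ‖z‖⁻¹) := by
  refine locInt_of_bound (by fun_prop) (p := 1) (by norm_num) fun R => ⟨1, fun z hz => ?_⟩
  rw [norm_inv, Real.rpow_neg_one, one_mul, norm_norm]

lemma conv_integrable {n : ℂ → ℝ} (hn : Continuous n) (hc : HasCompactSupport n) {k : ℂ → ℝ}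
    (hk : LocallyIntegrable k) (z : ℂ) : Integrable fun ξ => n ξ * k (z - ξ) :=
  hc.convolutionExists_left (ContinuousLinearMap.mul ℝ ℝ) (μ := volume) hn hk z

lemma hcs_of_zero' {E : Type*} [Zero E] {f : ℂ → E} {c : ℂ} {R : ℝ}
    (h : ∀ y, R < ‖y - c‖ → f y = 0) : HasCompactSupport f :=
  HasCompactSupport.intro (isCompact_closedBall c R) fun y hy => h y (by
    simpa [dist_eq_norm] using hy)

namespace Dens
variable {C₀ : ℝ} {c : ℂ} {n : ℂ → ℝ}

lemma hcs (D : Dens C₀ c n) : HasCompactSupport n := hcs_of_zero' D.supp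

lemma hcsC (D : Dens C₀ c n) : HasCompactSupport fun ξ => (n ξ : ℂ) :=
  hcs_of_zero' (c := c) (R := 13) fun y hy => by simp [D.supp y hy]

lemma contC (D : Dens C₀ c n) : Continuous fun ξ => (n ξ : ℂ) :=
  Complex.continuous_ofReal.comp D.contDiff.continuous

lemma integrable (D : Dens C₀ c n) : Integrable n :=
  D.contDiff.continuous.integrable_of_hasCompactSupport D.hcs

lemma integrable_rs (D : Dens C₀ c n) (z : ℂ) : Integrable fun ξ => n ξ * rs ‖z - ξ‖ :=
  conv_integrable D.contDiff.continuous D.hcs locInt_rs z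

lemma integrable_inv (D : Dens C₀ c n) (z : ℂ) : Integrable fun ξ => n ξ * ‖z - ξ‖⁻¹ :=
  conv_integrable D.contDiff.continuous D.hcs locInt_norm_inv z

lemma integrable_log (D : Dens C₀ c n) (z : ℂ) : Integrable fun ξ => n ξ * Real.log ‖z - ξ‖ :=
  conv_integrable D.contDiff.continuous D.hcs locInt_log z

lemma C₀_nonneg (D : Dens C₀ c n) : 0 ≤ C₀ :=
  (integral_nonneg fun ξ => mul_nonneg (D.nonneg ξ) (rs_nonneg _)).trans (D.riesz 0)

lemma pot_nonneg (D : Dens C₀ c n) (z : ℂ) : 0 ≤ pot n z :=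
  integral_nonneg fun ξ => mul_nonneg (D.nonneg ξ) (by positivity)

/-- The barycentre of the density. -/
noncomputable def bary (n : ℂ → ℝ) : ℂ := ∫ ξ, (n ξ : ℂ) * ξ

lemma integrable_id (D : Dens C₀ c n) : Integrable fun ξ => (n ξ : ℂ) * ξ :=
  (D.contC.mul continuous_id).integrable_of_hasCompactSupport D.hcsC.mul_right

lemma massC (D : Dens C₀ c n) : ∫ ξ, (n ξ : ℂ) = 1 := by
  rw [integral_complex_ofReal, D.mass]; simp

lemma integrableC (D : Dens C₀ c n) : Integrable fun ξ => (n ξ : ℂ) :=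
  D.contC.integrable_of_hasCompactSupport D.hcsC

lemma bary_sub (D : Dens C₀ c n) (ζ : ℂ) : ∫ ξ, (n ξ : ℂ) * (ξ - ζ) = bary n - ζ := by
  simp_rw [mul_sub]
  rw [integral_sub D.integrable_id (D.integrableC.mul_const ζ), integral_mul_const, D.massC, bary]
  ring

lemma near (D : Dens C₀ c n) {z : ℂ} (hz : ‖z - c‖ ≤ 1400) : |Lp n z| ≤ 4000 * C₀ := by
  rw [← Real.norm_eq_abs, Lp]
  calc _ ≤ ∫ ξ, 4000 * (n ξ * rs ‖z - ξ‖) := by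
        refine norm_integral_le_of_norm_le ((D.integrable_rs z).const_mul _)
          (Eventually.of_forall fun ξ => ?_)
        by_cases h : 13 < ‖ξ - c‖
        · simp [D.supp ξ h]
        have h1 : ‖z - ξ‖ ≤ 1413 := by
          have := norm_sub_le (z - c) (ξ - c)
          rw [sub_sub_sub_cancel_right] at this; linarith
        rw [norm_mul, Real.norm_of_nonneg (D.nonneg ξ), Real.norm_eq_abs, mul_left_comm]
        gcongr
        · exact D.nonneg ξ
        have := abs_log_le_rs (norm_nonneg (z - ξ)) h1 (by norm_num)
        nlinarith [rs_nonneg ‖z - ξ‖]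
    _ ≤ _ := by rw [integral_const_mul]; gcongr; exact D.riesz z

/-- Seen from afar, the potential of a density is determined by its mass and barycentre up to an
inverse square error. -/
lemma far_log (D : Dens C₀ c n) {z ζ : ℂ} (hζ : ‖ζ - c‖ ≤ 300) (hz : 1000 ≤ ‖z - ζ‖) :
    |Lp n z - Real.log ‖z - ζ‖ + ((bary n - ζ) / (z - ζ)).re| ≤ 100000 / ‖z - ζ‖ ^ 2 := by
  have hne : z - ζ ≠ 0 := norm_pos_iff.1 (by linarith)
  have i1 := D.integrable_log z
  have i2 := D.integrable.mul_const (Real.log ‖z - ζ‖)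
  have i3' : Integrable fun ξ => (n ξ : ℂ) * (ξ - ζ) * (z - ζ)⁻¹ :=
    (((D.contC.mul (continuous_id.sub continuous_const)).integrable_of_hasCompactSupport
      D.hcsC.mul_right)).mul_const _
  have i3 := i3'.re
  have e : Lp n z - Real.log ‖z - ζ‖ + ((bary n - ζ) / (z - ζ)).re =
      ∫ ξ, (n ξ * Real.log ‖z - ξ‖ - n ξ * Real.log ‖z - ζ‖ +
        RCLike.re ((n ξ : ℂ) * (ξ - ζ) * (z - ζ)⁻¹)) := by
    have i12 : Integrable fun ξ => n ξ * Real.log ‖z - ξ‖ - n ξ * Real.log ‖z - ζ‖ := i1.sub i2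
    rw [integral_add i12 i3, integral_sub i1 i2, integral_mul_const, D.mass, integral_re i3',
      integral_mul_const, D.bary_sub, Lp, div_eq_mul_inv]
    simp
  rw [e, ← Real.norm_eq_abs]
  calc _ ≤ ∫ ξ, n ξ * (100000 / ‖z - ζ‖ ^ 2) := by
        refine norm_integral_le_of_norm_le (D.integrable.mul_const _)
          (Eventually.of_forall fun ξ => ?_)
        by_cases h : 13 < ‖ξ - c‖
        · simp [D.supp ξ h]
        have h1 : ‖ξ - ζ‖ ≤ 313 := by
          have := norm_sub_le (ξ - c) (ζ - c)
          rw [sub_sub_sub_cancel_right] at this; linarith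
        have h2 := log_expand (a := z - ζ) (b := ξ - ζ) (by linarith) hne
        rw [sub_sub_sub_cancel_right] at h2
        have h3 : n ξ * Real.log ‖z - ξ‖ - n ξ * Real.log ‖z - ζ‖ +
            RCLike.re ((n ξ : ℂ) * (ξ - ζ) * (z - ζ)⁻¹) =
            n ξ * (Real.log ‖z - ξ‖ - Real.log ‖z - ζ‖ + ((ξ - ζ) / (z - ζ)).re) := by
          rw [mul_assoc, div_eq_mul_inv]
          simp only [RCLike.re_to_complex, Complex.re_ofReal_mul]; ring
        rw [h3, norm_mul, Real.norm_of_nonneg (D.nonneg ξ)]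
        gcongr
        · exact D.nonneg ξ
        refine h2.trans ?_
        gcongr
        nlinarith [norm_nonneg (ξ - ζ)]
    _ = _ := by rw [integral_mul_const, D.mass, one_mul]

/-- Seen from afar, the Cauchy transform of a density is determined by its mass and barycentre up
to an inverse cube error. -/
lemma far_inv (D : Dens C₀ c n) {z ζ : ℂ} (hζ : ‖ζ - c‖ ≤ 300) (hz : 1000 ≤ ‖z - ζ‖) :
    ‖T (fun ξ => (n ξ : ℂ)) z - (z - ζ)⁻¹ - (bary n - ζ) * ((z - ζ) ^ 2)⁻¹‖ ≤
      200000 / ‖z - ζ‖ ^ 3 := by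
  have hne : z - ζ ≠ 0 := norm_pos_iff.1 (by linarith)
  have i1 := T_integrable D.contC D.hcsC z
  have i2 := D.integrableC.mul_const ((z - ζ)⁻¹)
  have i3 : Integrable fun ξ => (n ξ : ℂ) * (ξ - ζ) * ((z - ζ) ^ 2)⁻¹ :=
    (((D.contC.mul (continuous_id.sub continuous_const)).integrable_of_hasCompactSupport
      D.hcsC.mul_right)).mul_const _
  have e : T (fun ξ => (n ξ : ℂ)) z - (z - ζ)⁻¹ - (bary n - ζ) * ((z - ζ) ^ 2)⁻¹ =
      ∫ ξ, ((n ξ : ℂ) * (z - ξ)⁻¹ - n ξ * (z - ζ)⁻¹ - (n ξ : ℂ) * (ξ - ζ) * ((z - ζ) ^ 2)⁻¹) := by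
    have i12 : Integrable fun ξ => (n ξ : ℂ) * (z - ξ)⁻¹ - n ξ * (z - ζ)⁻¹ := i1.sub i2
    rw [integral_sub i12 i3, integral_sub i1 i2, integral_mul_const, D.massC,
      integral_mul_const, D.bary_sub, T, one_mul]
  rw [e]
  calc _ ≤ ∫ ξ, n ξ * (200000 / ‖z - ζ‖ ^ 3) := by
        refine norm_integral_le_of_norm_le (D.integrable.mul_const _)
          (Eventually.of_forall fun ξ => ?_)
        by_cases h : 13 < ‖ξ - c‖
        · simp [D.supp ξ h]
        have h1 : ‖ξ - ζ‖ ≤ 313 := by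
          have := norm_sub_le (ξ - c) (ζ - c)
          rw [sub_sub_sub_cancel_right] at this; linarith
        have h2 := inv_expand (a := z - ζ) (b := ξ - ζ) (by linarith) hne
        rw [sub_sub_sub_cancel_right] at h2
        have h3 : (n ξ : ℂ) * (z - ξ)⁻¹ - n ξ * (z - ζ)⁻¹ - (n ξ : ℂ) * (ξ - ζ) * ((z - ζ) ^ 2)⁻¹ =
            n ξ * ((z - ξ)⁻¹ - (z - ζ)⁻¹ - (ξ - ζ) * ((z - ζ) ^ 2)⁻¹) := by ring
        rw [h3, norm_mul, Complex.norm_real, Real.norm_of_nonneg (D.nonneg ξ)]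
        gcongr
        · exact D.nonneg ξ
        refine h2.trans ?_
        gcongr
        nlinarith [norm_nonneg (ξ - ζ)]
    _ = _ := by rw [integral_mul_const, D.mass, one_mul]

lemma T_le (n : ℂ → ℝ) (hn : ∀ ξ, 0 ≤ n ξ) (z : ℂ) : ‖T (fun ξ => (n ξ : ℂ)) z‖ ≤ pot n z := by
  unfold T pot
  refine (norm_integral_le_integral_norm _).trans (le_of_eq ?_)
  congr 1; ext ξ
  rw [norm_mul, Complex.norm_real, Real.norm_of_nonneg (hn ξ), norm_inv]

end Dens

/-- The lattice point `100 m`. -/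
noncomputable def ctr (m : ℤ × ℤ) : ℂ := ⟨100 * m.1, 100 * m.2⟩

/-- A finite family of densities near lattice points, with weights representing every point of the
disc of radius `4ρ` as an affine combination of nearby barycentres. -/
structure Comp (C₀ ρ : ℝ) where
  F : Finset (ℤ × ℤ)
  n : ℤ × ℤ → ℂ → ℝ
  w : ℤ × ℤ → ℂ → ℝ
  dens : ∀ q, Dens C₀ (ctr q) (n q)
  w_meas : ∀ q, Measurable (w q)
  w_supp : ∀ q ζ, 300 < ‖ζ - ctr q‖ → w q ζ = 0
  w_abs : ∀ ζ, ‖ζ‖ ≤ 4 * ρ → ∑ q ∈ F, |w q ζ| ≤ 30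
  w_one : ∀ ζ, ‖ζ‖ ≤ 4 * ρ → ∑ q ∈ F, w q ζ = 1
  w_bary : ∀ ζ, ‖ζ‖ ≤ 4 * ρ → ∑ q ∈ F, (w q ζ : ℂ) * Dens.bary (n q) = ζ

namespace Comp
variable {C₀ ρ : ℝ} (X : Comp C₀ ρ)

/-- Compensated logarithmic kernel. -/
noncomputable def K (z ζ : ℂ) : ℝ := Real.log ‖z - ζ‖ - ∑ q ∈ X.F, X.w q ζ * Lp (X.n q) z

/-- Compensated Cauchy kernel. -/
noncomputable def E (z ζ : ℂ) : ℂ :=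
  (z - ζ)⁻¹ - ∑ q ∈ X.F, (X.w q ζ : ℂ) * T (fun ξ => (X.n q ξ : ℂ)) z

/-- Sum of the potentials of the densities near `z`. -/
noncomputable def B (z : ℂ) : ℝ := ∑ q ∈ X.F.filter (fun q => ‖z - ctr q‖ ≤ 1500), pot (X.n q) z

lemma B_nonneg (z : ℂ) : 0 ≤ X.B z := Finset.sum_nonneg fun q _ => (X.dens q).pot_nonneg z

lemma w_le (q : ℤ × ℤ) (hq : q ∈ X.F) {ζ : ℂ} (hζ : ‖ζ‖ ≤ 4 * ρ) : |X.w q ζ| ≤ 30 :=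
  (Finset.single_le_sum (f := fun q => |X.w q ζ|) (fun _ _ => abs_nonneg _) hq).trans (X.w_abs ζ hζ)

lemma K_near {z ζ : ℂ} (hζ : ‖ζ‖ ≤ 4 * ρ) (hz : ‖z - ζ‖ < 1000) :
    |X.K z ζ| ≤ 2000 * rs ‖z - ζ‖ + 120000 * C₀ := by
  unfold K
  refine (abs_sub _ _).trans (add_le_add ?_ ?_)
  · have := abs_log_le_rs (norm_nonneg (z - ζ)) hz.le (by norm_num)
    linarith
  · have hC := (X.dens 0).C₀_nonneg
    refine (Finset.abs_sum_le_sum_abs _ _).trans ?_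
    calc ∑ q ∈ X.F, |X.w q ζ * Lp (X.n q) z| ≤ ∑ q ∈ X.F, |X.w q ζ| * (4000 * C₀) := by
          refine Finset.sum_le_sum fun q _ => ?_
          rw [abs_mul]
          by_cases h : 300 < ‖ζ - ctr q‖
          · simp [X.w_supp q ζ h]
          gcongr
          refine (X.dens q).near ?_
          have := norm_add_le (z - ζ) (ζ - ctr q)
          rw [sub_add_sub_cancel] at this; linarith
      _ ≤ 30 * (4000 * C₀) := by
          rw [← Finset.sum_mul]; gcongr; exact X.w_abs ζ hζ
      _ = _ := by ring

/-- The compensation of mass and first moment makes the kernel decay like an inverse square. -/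
lemma K_far {z ζ : ℂ} (hζ : ‖ζ‖ ≤ 4 * ρ) (hz : 1000 ≤ ‖z - ζ‖) :
    |X.K z ζ| ≤ 3000000 / ‖z - ζ‖ ^ 2 := by
  have e1 : ∑ q ∈ X.F, X.w q ζ * ((Dens.bary (X.n q) - ζ) / (z - ζ)).re = 0 := by
    have : ∑ q ∈ X.F, (X.w q ζ : ℂ) * ((Dens.bary (X.n q) - ζ) / (z - ζ)) = 0 := by
      simp_rw [mul_div_assoc', mul_sub]
      rw [← Finset.sum_div, Finset.sum_sub_distrib, X.w_bary ζ hζ, ← Finset.sum_mul,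
        ← Complex.ofReal_sum, X.w_one ζ hζ]
      simp
    have := congrArg Complex.re this
    simpa [Complex.re_sum, Complex.re_ofReal_mul] using this
  have e : X.K z ζ = -∑ q ∈ X.F, X.w q ζ *
      (Lp (X.n q) z - Real.log ‖z - ζ‖ + ((Dens.bary (X.n q) - ζ) / (z - ζ)).re) := by
    simp_rw [mul_add, mul_sub]
    rw [Finset.sum_add_distrib, e1, Finset.sum_sub_distrib, ← Finset.sum_mul, X.w_one ζ hζ, K]
    ring
  rw [e, abs_neg]
  refine (Finset.abs_sum_le_sum_abs _ _).trans ?_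
  calc _ ≤ ∑ q ∈ X.F, |X.w q ζ| * (100000 / ‖z - ζ‖ ^ 2) := by
        refine Finset.sum_le_sum fun q _ => ?_
        rw [abs_mul]
        by_cases h : 300 < ‖ζ - ctr q‖
        · simp [X.w_supp q ζ h]
        gcongr
        exact (X.dens q).far_log (not_lt.1 h) hz
    _ ≤ 30 * (100000 / ‖z - ζ‖ ^ 2) := by
        rw [← Finset.sum_mul]; gcongr; exact X.w_abs ζ hζ
    _ = _ := by ring

lemma E_near {z ζ : ℂ} (hζ : ‖ζ‖ ≤ 4 * ρ) (hz : ‖z - ζ‖ < 1000) :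
    ‖X.E z ζ‖ ≤ ‖z - ζ‖⁻¹ + 30 * X.B z := by
  unfold E
  refine (norm_sub_le _ _).trans (add_le_add (norm_inv _).le ?_)
  refine (norm_sum_le _ _).trans ?_
  unfold B
  rw [Finset.mul_sum, Finset.sum_filter]
  refine Finset.sum_le_sum fun q hq => ?_
  rw [norm_mul, Complex.norm_real, Real.norm_eq_abs]
  by_cases h : 300 < ‖ζ - ctr q‖
  · rw [X.w_supp q ζ h]
    have := (X.dens q).pot_nonneg z
    split_ifs <;> simp [this]
  have h3 : ‖z - ctr q‖ ≤ 1500 := by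
    have := norm_add_le (z - ζ) (ζ - ctr q)
    rw [sub_add_sub_cancel] at this; linarith
  rw [if_pos h3]
  gcongr
  · exact X.w_le q hq hζ
  · exact Dens.T_le _ (X.dens q).nonneg z

/-- The compensation of mass and first moment makes the kernel decay like an inverse cube. -/
lemma E_far {z ζ : ℂ} (hζ : ‖ζ‖ ≤ 4 * ρ) (hz : 1000 ≤ ‖z - ζ‖) :
    ‖X.E z ζ‖ ≤ 6000000 / ‖z - ζ‖ ^ 3 := by
  have e1 : ∑ q ∈ X.F, (X.w q ζ : ℂ) * ((Dens.bary (X.n q) - ζ) * ((z - ζ) ^ 2)⁻¹) = 0 := by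
    simp_rw [← mul_assoc, mul_sub]
    rw [← Finset.sum_mul, Finset.sum_sub_distrib, X.w_bary ζ hζ, ← Finset.sum_mul,
        ← Complex.ofReal_sum, X.w_one ζ hζ]
    simp
  have e : X.E z ζ = -∑ q ∈ X.F, (X.w q ζ : ℂ) *
      (T (fun ξ => (X.n q ξ : ℂ)) z - (z - ζ)⁻¹ - (Dens.bary (X.n q) - ζ) * ((z - ζ) ^ 2)⁻¹) := by
    have h1 : ∑ q ∈ X.F, (X.w q ζ : ℂ) = 1 := by
      rw [← Complex.ofReal_sum, X.w_one ζ hζ]; simp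
    simp_rw [mul_sub _ (_ - _), mul_sub _ (T _ _)]
    rw [Finset.sum_sub_distrib, e1, Finset.sum_sub_distrib, ← Finset.sum_mul, h1, E]
    ring
  rw [e, norm_neg]
  refine (norm_sum_le _ _).trans ?_
  calc _ ≤ ∑ q ∈ X.F, |X.w q ζ| * (200000 / ‖z - ζ‖ ^ 3) := by
        refine Finset.sum_le_sum fun q _ => ?_
        rw [norm_mul, Complex.norm_real, Real.norm_eq_abs]
        by_cases h : 300 < ‖ζ - ctr q‖
        · simp [X.w_supp q ζ h]
        gcongr
        exact (X.dens q).far_inv (not_lt.1 h) hz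
    _ ≤ 30 * (200000 / ‖z - ζ‖ ^ 3) := by
        rw [← Finset.sum_mul]; gcongr; exact X.w_abs ζ hζ
    _ = _ := by ring

end Comp

end Landis

/-! ### The compensated Newtonian potential -/

namespace Landis

open MeasureTheory Filter Topology Set
open scoped ContDiff ComplexConjugate Convolution

/-- Truncated inverse square kernel. -/
noncomputable def sqk (ρ : ℝ) (w : ℂ) : ℝ := (Iio ρ).indicator (fun r => ((1 + r) ^ 2)⁻¹) ‖w‖

lemma sqk_nonneg (ρ : ℝ) (w : ℂ) : 0 ≤ sqk ρ w := indicator_nonneg (fun r _ => by positivity) _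

lemma sqk_integrable (ρ : ℝ) : Integrable (sqk ρ) := by
  have h : sqk ρ = (ball (0 : ℂ) ρ).indicator fun w => ((1 + ‖w‖) ^ 2)⁻¹ := by
    ext w
    simp only [sqk, indicator, mem_Iio, mem_ball_zero_iff]
  rw [h, integrable_indicator_iff measurableSet_ball]
  refine IntegrableOn.mono_set (t := closedBall 0 ρ) ?_ ball_subset_closedBall
  refine ContinuousOn.integrableOn_compact (isCompact_closedBall _ _) (Continuous.continuousOn ?_)
  refine Continuous.inv₀ (by fun_prop) fun w => ?_
  positivity

/-- The inverse square kernel is borderline non-integrable in the plane, whence the logarithm. -/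
lemma sqk_integral : ∃ C : ℝ, 0 < C ∧ ∀ ρ : ℝ, 2 ≤ ρ → ∫ w, sqk ρ w ≤ C * Real.log ρ := by
  refine ⟨2 * (volume : Measure ℂ).real (ball 0 1) * 2 + 1, by positivity, fun ρ hρ => ?_⟩
  have h0 : 0 ≤ (volume : Measure ℂ).real (ball 0 1) := measureReal_nonneg
  have hl : 0 ≤ Real.log ρ := Real.log_nonneg (by linarith)
  have key : ∫ y in Ioi (0 : ℝ), y ^ (Module.finrank ℝ ℂ - 1) •
      (Iio ρ).indicator (fun r => ((1 + r) ^ 2)⁻¹) y ≤ 2 * Real.log ρ := by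
    rw [Complex.finrank_real_complex]
    have h1 : ∀ y : ℝ, y ^ (2 - 1) • (Iio ρ).indicator (fun r : ℝ => ((1 + r) ^ 2)⁻¹) y =
        (Iio ρ).indicator (fun r : ℝ => r * ((1 + r) ^ 2)⁻¹) y := by
      intro y; by_cases hy : y < ρ <;> simp [indicator, hy]
    simp_rw [h1]
    rw [setIntegral_indicator measurableSet_Iio]
    have h2 : Ioi (0 : ℝ) ∩ Iio ρ = Ioo 0 ρ := rfl
    rw [h2, ← integral_Ioc_eq_integral_Ioo, ← intervalIntegral.integral_of_le (by linarith)]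
    have hc : ∀ y ∈ uIcc 0 ρ, 1 + y ≠ 0 := fun y hy => by
      rw [uIcc_of_le (by linarith)] at hy; linarith [hy.1]
    have i1 : IntervalIntegrable (fun r : ℝ => r * ((1 + r) ^ 2)⁻¹) volume 0 ρ :=
      ContinuousOn.intervalIntegrable (continuousOn_id.mul
        (ContinuousOn.inv₀ (by fun_prop) fun y hy => pow_ne_zero _ (hc y hy)))
    have i2 : IntervalIntegrable (fun r : ℝ => (1 + r)⁻¹) volume 0 ρ :=
      ContinuousOn.intervalIntegrable (ContinuousOn.inv₀ (by fun_prop) hc)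
    calc _ ≤ ∫ r in (0 : ℝ)..ρ, (1 + r)⁻¹ := by
          refine intervalIntegral.integral_mono_on (by linarith) i1 i2 fun r hr => ?_
          have : 0 < 1 + r := by linarith [hr.1]
          rw [← div_eq_mul_inv, div_le_iff₀ (by positivity)]
          field_simp
          linarith
      _ = Real.log (1 + ρ) := by
          have := intervalIntegral.integral_comp_add_left (a := 0) (b := ρ) (fun x : ℝ => x⁻¹) 1
          rw [this, integral_inv]
          · simp
          · rw [uIcc_of_le (by linarith)]; intro h; linarith [h.1]
      _ ≤ Real.log (ρ ^ 2) := Real.log_le_log (by linarith) (by nlinarith)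
      _ = _ := by rw [Real.log_pow]; norm_num
  unfold sqk
  rw [integral_fun_norm_addHaar volume ((Iio ρ).indicator (fun r => ((1 + r) ^ 2)⁻¹)),
    Complex.finrank_real_complex, nsmul_eq_mul, smul_eq_mul]
  rw [Complex.finrank_real_complex] at key
  have := mul_le_mul_of_nonneg_left key h0
  push_cast
  nlinarith

lemma cube_integrable : Integrable fun w : ℂ => ((1 + ‖w‖) ^ 3)⁻¹ := by
  have := integrable_one_add_norm (E := ℂ) (μ := volume) (r := 3)
    (by rw [Complex.finrank_real_complex]; norm_num)
  refine this.congr (Eventually.of_forall fun w => ?_)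
  simp only
  rw [Real.rpow_neg (by positivity)]; norm_cast

lemma ball_ind_integrable {k : ℂ → ℝ} (hk : LocallyIntegrable k) (R : ℝ) :
    Integrable ((ball (0 : ℂ) R).indicator k) := by
  rw [integrable_indicator_iff measurableSet_ball]
  exact (hk.integrableOn_isCompact (isCompact_closedBall 0 R)).mono_set ball_subset_closedBall

lemma volume_closedBall_le : ∃ C : ℝ, 0 < C ∧ ∀ R : ℝ, 0 ≤ R →
    ∫ ζ : ℂ, (closedBall (0 : ℂ) R).indicator (fun _ => (1 : ℝ)) ζ ≤ C * R ^ 2 := by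
  refine ⟨(volume : Measure ℂ).real (ball 0 1) + 1, by positivity, fun R hR => ?_⟩
  rw [integral_indicator measurableSet_closedBall, setIntegral_const, smul_eq_mul, mul_one,
    Measure.real, Measure.addHaar_closedBall _ _ hR, Complex.finrank_real_complex, ENNReal.toReal_mul,
    ENNReal.toReal_ofReal (by positivity), ← Measure.real]
  nlinarith [sq_nonneg R]

namespace Comp
variable {C₀ ρ : ℝ} (X : Comp C₀ ρ)

/-- Coefficients of the compensating densities for the source `g`. -/
noncomputable def A (g : ℂ → ℝ) (q : ℤ × ℤ) : ℝ := ∫ ζ, g ζ * X.w q ζ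

/-- The compensated source. -/
noncomputable def G (g : ℂ → ℝ) (ξ : ℂ) : ℝ := g ξ - ∑ q ∈ X.F, X.A g q * X.n q ξ

/-- The compensated Newtonian potential: `lap (N g) = G g`. -/
noncomputable def N (g : ℂ → ℝ) (z : ℂ) : ℝ := (2 * cc)⁻¹ * Lp (X.G g) z

variable {g : ℂ → ℝ}

lemma G_contDiff (hg : ContDiff ℝ 1 g) : ContDiff ℝ 1 (X.G g) :=
  hg.sub (ContDiff.sum fun q _ => contDiff_const.mul (X.dens q).contDiff)

lemma G_hcs (hc : HasCompactSupport g) : HasCompactSupport (X.G g) := by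
  have : HasCompactSupport fun ξ => ∑ q ∈ X.F, X.A g q * X.n q ξ := by
    obtain ⟨R, hR⟩ := (X.F.finite_toSet.isCompact.image (f := ctr) (by fun_prop)).isBounded.subset_closedBall 0
    refine hcs_of_zero (R := R + 14) fun y hy => Finset.sum_eq_zero fun q hq => ?_
    have h1 : ‖ctr q‖ ≤ R := by simpa using hR (mem_image_of_mem _ hq)
    rw [(X.dens q).supp y, mul_zero]
    have := norm_sub_norm_le y (ctr q)
    linarith
  exact hc.sub this

lemma N_contDiff (hg : ContDiff ℝ 1 g) (hc : HasCompactSupport g) : ContDiff ℝ 2 (X.N g) :=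
  contDiff_const.mul (contDiff_Lp (X.G_contDiff hg) (X.G_hcs hc))

lemma lap_N (hg : ContDiff ℝ 1 g) (hc : HasCompactSupport g) (z : ℂ) :
    lap (X.N g) z = X.G g z := by
  have h := contDiff_Lp (X.G_contDiff hg) (X.G_hcs hc)
  have e := lap_Lp (X.G_contDiff hg) (X.G_hcs hc) z
  have hdd : ∀ v', Differentiable ℝ (fun w => fderiv ℝ (Lp (X.G g)) w v') := fun _ =>
    ((h.fderiv_right (m := 1) (by norm_num)).clm_apply contDiff_const).differentiable (by simp)
  have h1 : ∀ v w, fderiv ℝ (X.N g) w v = (2 * cc)⁻¹ * fderiv ℝ (Lp (X.G g)) w v := by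
    intro v w
    unfold N
    rw [fderiv_const_mul (h.differentiable (by simp) w)]; rfl
  have h2 : lap (X.N g) z = (2 * cc)⁻¹ * lap (Lp (X.G g)) z := by
    unfold lap
    simp_rw [h1]
    rw [fderiv_const_mul (hdd _ z), fderiv_const_mul (hdd _ z)]
    simp; ring
  rw [h2, e]
  have := cc_pos
  field_simp

lemma gr_N (hg : ContDiff ℝ 1 g) (hc : HasCompactSupport g) (z : ℂ) :
    gr (X.N g) z = (4 * cc : ℂ)⁻¹ * T (fun ξ => (X.G g ξ : ℂ)) z := by
  have h := contDiff_Lp (X.G_contDiff hg) (X.G_hcs hc)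
  have h1 : ∀ v w, fderiv ℝ (X.N g) w v = (2 * cc)⁻¹ * fderiv ℝ (Lp (X.G g)) w v := by
    intro v w
    unfold N
    rw [fderiv_const_mul (h.differentiable (by simp) w)]; rfl
  have h2 : gr (X.N g) z = (2 * cc : ℂ)⁻¹ * gr (Lp (X.G g)) z := by
    unfold gr
    simp_rw [h1]
    push_cast; ring
  rw [h2, gr_Lp (X.G_contDiff hg) (X.G_hcs hc)]
  have : (cc : ℂ) ≠ 0 := by exact_mod_cast cc_pos.ne'
  field_simp; ring

lemma gw_integrable (hg : Continuous g) (h0 : ∀ ζ, 4 * ρ ≤ ‖ζ‖ → g ζ = 0) {q} (hq : q ∈ X.F) :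
    Integrable fun ζ => g ζ * X.w q ζ := by
  refine ((hg.integrable_of_hasCompactSupport (hcs_of_zero h0)).norm.const_mul 30).mono'
    (hg.aestronglyMeasurable.mul (X.w_meas q).aestronglyMeasurable) (Eventually.of_forall fun ζ => ?_)
  by_cases h : 4 * ρ ≤ ‖ζ‖
  · simp [h0 ζ h]
  rw [norm_mul, mul_comm]
  gcongr
  exact X.w_le q hq (by linarith)

/-- Compensating the source is the same as compensating the kernel. -/
lemma Lp_G (hg : Continuous g) (h0 : ∀ ζ, 4 * ρ ≤ ‖ζ‖ → g ζ = 0) (z : ℂ) :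
    Lp (X.G g) z = ∫ ζ, g ζ * X.K z ζ := by
  have i1 := Lp_integrable hg (hcs_of_zero h0) z
  have e1 : Lp (X.G g) z = ∫ ξ, (g ξ * Real.log ‖z - ξ‖ -
      ∑ q ∈ X.F, X.A g q * (X.n q ξ * Real.log ‖z - ξ‖)) := by
    unfold Lp G
    congr 1; ext ξ
    rw [sub_mul, Finset.sum_mul]; simp_rw [mul_assoc]
  have e2 : ∫ ζ, g ζ * X.K z ζ = ∫ ζ, (g ζ * Real.log ‖z - ζ‖ -
      ∑ q ∈ X.F, (g ζ * X.w q ζ) * Lp (X.n q) z) := by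
    unfold K
    congr 1; ext ζ
    rw [mul_sub, Finset.mul_sum]; simp_rw [mul_assoc]
  rw [e1, e2, integral_sub i1 (integrable_finsetSum _ fun q _ => ((X.dens q).integrable_log z).const_mul _),
    integral_sub i1 (integrable_finsetSum _ fun q hq => (X.gw_integrable hg h0 hq).mul_const _),
    integral_finsetSum _ fun q _ => ((X.dens q).integrable_log z).const_mul _,
    integral_finsetSum _ fun q hq => (X.gw_integrable hg h0 hq).mul_const _]
  congr 1
  refine Finset.sum_congr rfl fun q _ => ?_
  rw [integral_const_mul, integral_mul_const]; rfl

/-- Compensating the source is the same as compensating the kernel. -/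
lemma T_G (hg : Continuous g) (h0 : ∀ ζ, 4 * ρ ≤ ‖ζ‖ → g ζ = 0) (z : ℂ) :
    T (fun ξ => (X.G g ξ : ℂ)) z = ∫ ζ, (g ζ : ℂ) * X.E z ζ := by
  have i1 := T_integrable (g := fun ξ => (g ξ : ℂ)) (Complex.continuous_ofReal.comp hg)
    (hcs_of_zero (R := 4 * ρ) fun ζ h => by simp [h0 ζ h]) z
  have i2 : ∀ q, Integrable fun ξ => (X.n q ξ : ℂ) * (z - ξ)⁻¹ := fun q =>
    T_integrable (X.dens q).contC (X.dens q).hcsC z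
  have i3 : ∀ q ∈ X.F, Integrable fun ζ => (g ζ : ℂ) * X.w q ζ := fun q hq => by
    have := (X.gw_integrable hg h0 hq).ofReal (𝕜 := ℂ)
    simpa using this
  have e1 : T (fun ξ => (X.G g ξ : ℂ)) z = ∫ ξ, ((g ξ : ℂ) * (z - ξ)⁻¹ -
      ∑ q ∈ X.F, (X.A g q : ℂ) * ((X.n q ξ : ℂ) * (z - ξ)⁻¹)) := by
    unfold T G
    congr 1; ext ξ
    push_cast
    rw [sub_mul, Finset.sum_mul]; simp_rw [mul_assoc]
  have e2 : ∫ ζ, (g ζ : ℂ) * X.E z ζ = ∫ ζ, ((g ζ : ℂ) * (z - ζ)⁻¹ -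
      ∑ q ∈ X.F, ((g ζ : ℂ) * X.w q ζ) * T (fun ξ => (X.n q ξ : ℂ)) z) := by
    unfold E
    congr 1; ext ζ
    rw [mul_sub, Finset.mul_sum]; simp_rw [mul_assoc]
  rw [e1, e2, integral_sub i1 (integrable_finsetSum _ fun q _ => (i2 q).const_mul _),
    integral_sub i1 (integrable_finsetSum _ fun q hq => (i3 q hq).mul_const _),
    integral_finsetSum _ fun q _ => (i2 q).const_mul _,
    integral_finsetSum _ fun q hq => (i3 q hq).mul_const _]
  congr 1
  refine Finset.sum_congr rfl fun q _ => ?_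
  rw [integral_const_mul, integral_mul_const]
  congr 1
  rw [A, ← integral_complex_ofReal]
  simp

lemma A_le : ∃ C : ℝ, 0 < C ∧ ∀ {C₀ ρ : ℝ} (X : Comp C₀ ρ) (g : ℂ → ℝ) (M : ℝ), Continuous g →
    (∀ ζ, 4 * ρ ≤ ‖ζ‖ → g ζ = 0) → (∀ ζ, |g ζ| ≤ M) → ∀ q ∈ X.F, |X.A g q| ≤ C * M := by
  set k : ℂ → ℝ := (ball (0 : ℂ) 301).indicator (fun _ => (30 : ℝ)) with hk
  have hki : Integrable k := ball_ind_integrable (locallyIntegrable_const _) _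
  have hk0 : ∀ w, 0 ≤ k w := fun w => indicator_nonneg (fun _ _ => by norm_num) _
  refine ⟨(∫ ζ, k ζ) + 1, by have : 0 ≤ ∫ ζ, k ζ := integral_nonneg hk0; linarith, ?_⟩
  intro C₀ ρ X g M hg h0 hM q hq
  have hM0 : 0 ≤ M := (abs_nonneg _).trans (hM 0)
  calc |X.A g q| ≤ ∫ ζ, M * k (ζ - ctr q) := by
        rw [A, ← Real.norm_eq_abs]
        refine norm_integral_le_of_norm_le ((hki.comp_sub_right _).const_mul M)
          (Eventually.of_forall fun ζ => ?_)
        by_cases h : 4 * ρ ≤ ‖ζ‖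
        · simp [h0 ζ h, mul_nonneg hM0 (hk0 _)]
        by_cases h2 : 300 < ‖ζ - ctr q‖
        · simp [X.w_supp q ζ h2, mul_nonneg hM0 (hk0 _)]
        have h3 : k (ζ - ctr q) = 30 := by
          rw [hk, indicator_of_mem (by rw [mem_ball_zero_iff]; linarith)]
        rw [h3, norm_mul]
        gcongr
        · exact hM ζ
        · exact X.w_le q hq (by linarith)
    _ = M * ∫ ζ, k ζ := by rw [integral_const_mul, integral_sub_right_eq_self k]
    _ ≤ _ := by nlinarith

/-- Sup bound for the compensated potential: the cancellation of mass and first moment turns the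
kernel into an inverse square one, whose integral is logarithmic in `ρ`. -/
lemma N_le (C₀ : ℝ) (hC₀ : 0 ≤ C₀) : ∃ C : ℝ, 0 < C ∧ ∀ {ρ : ℝ} (X : Comp C₀ ρ) (g : ℂ → ℝ) (M : ℝ),
    1000 ≤ ρ → Continuous g →
    (∀ ζ, 4 * ρ ≤ ‖ζ‖ → g ζ = 0) → (∀ ζ, |g ζ| ≤ M) → ∀ z, |X.N g z| ≤ C * M * Real.log ρ := by
  obtain ⟨c2, hc2, hsq⟩ := sqk_integral
  obtain ⟨c3, hc3, hvol⟩ := volume_closedBall_le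
  set k1 : ℂ → ℝ := (ball (0 : ℂ) 1000).indicator fun w => 2000 * rs ‖w‖ + 120000 * C₀ with hk1
  have hk1i : Integrable k1 := ball_ind_integrable
    ((locInt_rs.smul (2000 : ℝ)).add (locallyIntegrable_const _)) _
  have hk1n : ∀ w, 0 ≤ k1 w := fun w => indicator_nonneg (fun w _ => by
    have := rs_nonneg ‖w‖; positivity) _
  have hcc := cc_pos
  have hI : 0 ≤ ∫ w, k1 w := integral_nonneg hk1n
  refine ⟨(2 * cc)⁻¹ * ((∫ w, k1 w) + 12000000 * c2 + 48000000 * c3), by positivity, ?_⟩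
  intro ρ X g M hρ hg h0 hM z
  have hM0 : 0 ≤ M := (abs_nonneg _).trans (hM 0)
  have hlog : 1 ≤ Real.log ρ := by
    rw [Real.le_log_iff_exp_le (by linarith)]
    linarith [Real.exp_one_lt_d9]
  set k3 : ℂ → ℝ := (closedBall (0 : ℂ) (4 * ρ)).indicator fun _ => 1 with hk3
  have hk3i : Integrable k3 := by
    rw [integrable_indicator_iff measurableSet_closedBall]
    exact (continuousOn_const).integrableOn_compact (isCompact_closedBall _ _)
  have hk3n : ∀ w, 0 ≤ k3 w := fun w => indicator_nonneg (fun w _ => by norm_num) _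
  have i1 := hk1i.comp_sub_left z
  have i2 := ((sqk_integrable ρ).comp_sub_left z).const_mul 12000000
  have i3 := hk3i.const_mul (3000000 / ρ ^ 2)
  have i12 : Integrable fun ζ => k1 (z - ζ) + 12000000 * sqk ρ (z - ζ) := i1.add i2
  -- Three regimes: `|z - ζ| < 1000`, then up to `ρ` (where the inverse square kernel costs `log ρ`),
  -- and beyond `ρ` (where it is at most `ρ⁻²` on a disc of area comparable to `ρ²`).
  have hmain : |Lp (X.G g) z| ≤ ∫ ζ, M * (k1 (z - ζ) + 12000000 * sqk ρ (z - ζ) +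
      3000000 / ρ ^ 2 * k3 ζ) := by
    rw [X.Lp_G hg h0, ← Real.norm_eq_abs]
    refine norm_integral_le_of_norm_le ((i12.add i3).const_mul M) (Eventually.of_forall fun ζ => ?_)
    have p1 := hk1n (z - ζ)
    have p2 := sqk_nonneg ρ (z - ζ)
    have p3 := mul_nonneg (show 0 ≤ 3000000 / ρ ^ 2 by positivity) (hk3n ζ)
    by_cases h : 4 * ρ ≤ ‖ζ‖
    · rw [h0 ζ h]; simp; positivity
    push Not at h
    rw [norm_mul]
    refine mul_le_mul (hM ζ) ?_ (norm_nonneg _) hM0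
    rw [Real.norm_eq_abs]
    rcases lt_or_ge ‖z - ζ‖ 1000 with h1 | h1
    · have : k1 (z - ζ) = 2000 * rs ‖z - ζ‖ + 120000 * C₀ := by
        rw [hk1, indicator_of_mem (by rwa [mem_ball_zero_iff])]
      have := X.K_near h.le h1
      linarith
    have hK := X.K_far h.le h1
    rcases lt_or_ge ‖z - ζ‖ ρ with h2 | h2
    · have e : sqk ρ (z - ζ) = ((1 + ‖z - ζ‖) ^ 2)⁻¹ := by
        rw [sqk, indicator_of_mem (by rwa [mem_Iio])]
      have : 3000000 / ‖z - ζ‖ ^ 2 ≤ 12000000 * sqk ρ (z - ζ) := by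
        rw [e, ← div_eq_mul_inv, div_le_div_iff₀ (by positivity) (by positivity)]
        nlinarith
      linarith
    · have e : k3 ζ = 1 := by
        rw [hk3, indicator_of_mem (by rw [mem_closedBall_zero_iff]; exact h.le)]
      have : 3000000 / ‖z - ζ‖ ^ 2 ≤ 3000000 / ρ ^ 2 := by gcongr
      rw [e] at p3 ⊢
      linarith
  rw [integral_const_mul, integral_add i12 i3, integral_add i1 i2, integral_const_mul,
    integral_const_mul, integral_sub_left_eq_self k1 volume z,
    integral_sub_left_eq_self (sqk ρ) volume z] at hmain
  have h1 := hsq ρ (by linarith)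
  have h2 := hvol (4 * ρ) (by linarith)
  have h3 : 3000000 / ρ ^ 2 * ∫ ζ, k3 ζ ≤ 48000000 * c3 := by
    calc _ ≤ 3000000 / ρ ^ 2 * (c3 * (4 * ρ) ^ 2) := by gcongr
      _ = _ := by field_simp; norm_num
  rw [N, abs_mul, abs_of_pos (by positivity), mul_assoc, mul_assoc]
  gcongr
  refine hmain.trans ?_
  rw [mul_comm _ (M * _), mul_assoc]
  gcongr
  nlinarith [mul_nonneg hI (sub_nonneg.2 hlog), mul_nonneg hc3.le (sub_nonneg.2 hlog)]

/-- Pointwise bound for the gradient of the compensated potential. -/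
lemma gr_N_le : ∃ C : ℝ, 0 < C ∧ ∀ {C₀ ρ : ℝ} (X : Comp C₀ ρ) (g : ℂ → ℝ) (M : ℝ),
    ContDiff ℝ 1 g →
    (∀ ζ, 4 * ρ ≤ ‖ζ‖ → g ζ = 0) → (∀ ζ, |g ζ| ≤ M) → ∀ z, ‖gr (X.N g) z‖ ≤ C * M * (1 + X.B z) := by
  set k1 : ℂ → ℝ := (ball (0 : ℂ) 1000).indicator fun w => ‖w‖⁻¹ with hk1
  have hk1i : Integrable k1 := ball_ind_integrable locInt_norm_inv _
  have hk1n : ∀ w, 0 ≤ k1 w := fun w => indicator_nonneg (fun w _ => by positivity) _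
  set k2 : ℂ → ℝ := (ball (0 : ℂ) 1000).indicator fun w => 1 with hk2
  have hk2i : Integrable k2 := ball_ind_integrable (locallyIntegrable_const _) _
  have hk2n : ∀ w, 0 ≤ k2 w := fun w => indicator_nonneg (fun w _ => by positivity) _
  set k3 : ℂ → ℝ := fun w => ((1 + ‖w‖) ^ 3)⁻¹ with hk3
  have hk3i : Integrable k3 := cube_integrable
  have hk3n : ∀ w, 0 ≤ k3 w := fun w => by positivity
  have hcc := cc_pos
  have I1 : 0 ≤ ∫ w, k1 w := integral_nonneg hk1n
  have I2 : 0 ≤ ∫ w, k2 w := integral_nonneg hk2n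
  have I3 : 0 ≤ ∫ w, k3 w := integral_nonneg hk3n
  refine ⟨(4 * cc)⁻¹ * ((∫ w, k1 w) + 30 * (∫ w, k2 w) + 48000000 * (∫ w, k3 w) + 1),
    by positivity, ?_⟩
  intro C₀ ρ X g M hg h0 hM z
  have hM0 : 0 ≤ M := (abs_nonneg _).trans (hM 0)
  have hB := X.B_nonneg z
  have i1 := hk1i.comp_sub_left z
  have i2 := (hk2i.comp_sub_left z).const_mul (30 * X.B z)
  have i3 := (hk3i.comp_sub_left z).const_mul 48000000
  have i12 : Integrable fun ζ => k1 (z - ζ) + 30 * X.B z * k2 (z - ζ) := i1.add i2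
  have hmain : ‖T (fun ξ => (X.G g ξ : ℂ)) z‖ ≤ ∫ ζ, M * (k1 (z - ζ) + 30 * X.B z * k2 (z - ζ) +
      48000000 * k3 (z - ζ)) := by
    rw [X.T_G hg.continuous h0]
    refine norm_integral_le_of_norm_le ((i12.add i3).const_mul M) (Eventually.of_forall fun ζ => ?_)
    have p1 := hk1n (z - ζ)
    have p2 := mul_nonneg (mul_nonneg (by norm_num : (0:ℝ) ≤ 30) hB) (hk2n (z - ζ))
    have p3 := hk3n (z - ζ)
    by_cases h : 4 * ρ ≤ ‖ζ‖
    · rw [h0 ζ h]; simp only [Complex.ofReal_zero, zero_mul, norm_zero]; positivity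
    push Not at h
    rw [norm_mul, Complex.norm_real]
    refine mul_le_mul (hM ζ) ?_ (norm_nonneg _) hM0
    rcases lt_or_ge ‖z - ζ‖ 1000 with h1 | h1
    · have e1 : k1 (z - ζ) = ‖z - ζ‖⁻¹ := by
        rw [hk1, indicator_of_mem (by rwa [mem_ball_zero_iff])]
      have e2 : k2 (z - ζ) = 1 := by
        rw [hk2, indicator_of_mem (by rwa [mem_ball_zero_iff])]
      have := X.E_near h.le h1
      rw [e2] at p2 ⊢
      linarith
    · have := X.E_far h.le h1
      have h3 : 6000000 / ‖z - ζ‖ ^ 3 ≤ 48000000 * k3 (z - ζ) := by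
        rw [hk3]
        simp only
        rw [← div_eq_mul_inv, div_le_div_iff₀ (by positivity) (by positivity)]
        have h4 : (1 + ‖z - ζ‖) ^ 3 ≤ (2 * ‖z - ζ‖) ^ 3 := by gcongr; linarith
        nlinarith
      linarith
  rw [integral_const_mul, integral_add i12 i3, integral_add i1 i2, integral_const_mul,
    integral_const_mul, integral_sub_left_eq_self k1 volume z,
    integral_sub_left_eq_self k2 volume z, integral_sub_left_eq_self k3 volume z] at hmain
  rw [X.gr_N hg (hcs_of_zero h0), norm_mul, norm_inv, norm_mul, Complex.norm_real,
    Complex.norm_ofNat, Real.norm_of_nonneg hcc.le, mul_assoc, mul_assoc]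
  gcongr
  refine hmain.trans ?_
  rw [mul_left_comm]
  gcongr
  nlinarith [mul_nonneg I1 hB, mul_nonneg I2 hB, mul_nonneg I3 hB]

end Comp

end Landis

/-! ### Bumps and discrete Riesz sums -/

namespace Landis
open MeasureTheory Filter Topology Set
open scoped ContDiff ComplexConjugate Convolution

/-- A normalised bump on the unit disc. -/
lemma exists_bump : ∃ b : ℂ → ℝ, ContDiff ℝ 2 b ∧ (∀ z, 0 ≤ b z) ∧ (∀ z, 1 ≤ ‖z‖ → b z = 0) ∧
    ∫ z, b z = 1 := by
  obtain ⟨κ, h1, h2, h3, h4⟩ := exists_cutoff (a := 1 / 2) (b := 1) (by norm_num) (by norm_num)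
  have hc : HasCompactSupport κ := hcs_of_zero h4
  have hpos : 0 < ∫ z, κ z := by
    refine (h1.continuous.integral_pos_of_hasCompactSupport_nonneg_nonzero hc
      (fun z => (h2 z).1) (x := 0) ?_)
    rw [h3 0 (by simp)]; norm_num
  refine ⟨fun z => (∫ z, κ z)⁻¹ * κ z, contDiff_const.mul h1,
    fun z => mul_nonneg (by positivity) (h2 z).1, fun z hz => by simp [h4 z hz], ?_⟩
  rw [integral_const_mul, inv_mul_cancel₀ hpos.ne']

/-- Potential of a bump against a decreasing radial kernel. -/
lemma bump_pot {b : ℂ → ℝ} (hb : Continuous b) (hb0 : ∀ z, 0 ≤ b z) (hbs : ∀ z, 1 ≤ ‖z‖ → b z = 0)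
    (hb1 : ∫ z, b z = 1) {k : ℝ → ℝ} (hk0 : ∀ x, 0 ≤ k x)
    (hka : ∀ x y, 0 < x → x ≤ y → k y ≤ k x) (hk2 : ∀ x, k (x / 2) ≤ 2 * k x) (hkp : 0 < k 2)
    (hki : LocallyIntegrable fun z : ℂ => k ‖z‖) :
    ∃ C : ℝ, 0 < C ∧ ∀ x : ℂ, ∫ y, b y * k ‖x - y‖ ≤ C * k (max 1 ‖x‖) := by
  have hc : HasCompactSupport b := hcs_of_zero hbs
  obtain ⟨M, hM⟩ := hc.exists_bound_of_continuous hb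
  have hM0 : 0 ≤ M := (norm_nonneg _).trans (hM 0)
  set k1 : ℂ → ℝ := (ball (0 : ℂ) 3).indicator fun w => k ‖w‖ with hk1
  have hk1i : Integrable k1 := ball_ind_integrable hki _
  have hk1n : ∀ w, 0 ≤ k1 w := fun w => indicator_nonneg (fun w _ => hk0 _) _
  have hI : 0 ≤ ∫ w, k1 w := integral_nonneg hk1n
  have hi : ∀ x, Integrable fun y => b y * k ‖x - y‖ := fun x => conv_integrable hb hc hki x
  refine ⟨2 + M * (∫ w, k1 w) / k 2, by positivity, fun x => ?_⟩
  rcases le_total 2 ‖x‖ with h | h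
  · rw [max_eq_right (by linarith)]
    calc _ ≤ ∫ y, b y * (2 * k ‖x‖) := by
          refine integral_mono (hi x) ((hb.integrable_of_hasCompactSupport hc).mul_const _) fun y => ?_
          by_cases hy : 1 ≤ ‖y‖
          · simp [hbs y hy]
          push Not at hy
          have := norm_sub_norm_le x y
          exact mul_le_mul_of_nonneg_left ((hka (‖x‖ / 2) _ (by linarith) (by linarith)).trans (hk2 _))
            (hb0 y)
      _ = 2 * k ‖x‖ := by rw [integral_mul_const, hb1, one_mul]
      _ ≤ _ := by
        rw [add_mul]
        have : 0 ≤ M * (∫ w, k1 w) / k 2 * k ‖x‖ := mul_nonneg (by positivity) (hk0 _)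
        linarith
  · have hk : k 2 ≤ k (max 1 ‖x‖) := hka _ _ (by positivity) (max_le (by norm_num) h)
    calc _ ≤ ∫ y, M * k1 (x - y) := by
          refine integral_mono (hi x) ((hk1i.comp_sub_left x).const_mul M) fun y => ?_
          by_cases hy : 1 ≤ ‖y‖
          · simp only [hbs y hy, zero_mul]; exact mul_nonneg hM0 (hk1n _)
          push Not at hy
          have := norm_sub_le x y
          simp only [hk1]
          rw [indicator_of_mem (by rw [mem_ball_zero_iff]; linarith)]
          exact mul_le_mul_of_nonneg_right ((le_abs_self _).trans (hM y)) (hk0 _)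
      _ = M * ∫ w, k1 w := by rw [integral_const_mul, integral_sub_left_eq_self k1]
      _ = M * (∫ w, k1 w) / k 2 * k 2 := by field_simp
      _ ≤ M * (∫ w, k1 w) / k 2 * k (max 1 ‖x‖) := by gcongr
      _ ≤ _ := by
        have := hk0 (max 1 ‖x‖)
        nlinarith

/-- Rescaled bump centred at `p`. -/
noncomputable def sb (b : ℂ → ℝ) (s : ℝ) (p ξ : ℂ) : ℝ := (s ^ 2)⁻¹ * b (s⁻¹ • (ξ - p))

lemma sb_integral (b : ℂ → ℝ) {s : ℝ} (hs : 0 < s) (p : ℂ) (f : ℂ → ℝ) :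
    ∫ ξ, sb b s p ξ * f ξ = ∫ y, b y * f (p + s • y) := by
  have h := Measure.integral_comp_inv_smul_of_nonneg (volume : Measure ℂ)
    (fun y => b y * f (p + s • y)) hs.le
  rw [Complex.finrank_real_complex] at h
  rw [← integral_sub_right_eq_self _ p] at h
  have h2 : ∀ x : ℂ, s • s⁻¹ • x = x := fun x => smul_inv_smul₀ hs.ne' x
  simp only [h2, add_sub_cancel] at h
  simp_rw [sb, mul_assoc]
  rw [integral_const_mul, h, smul_eq_mul, ← mul_assoc, inv_mul_cancel₀ (by positivity), one_mul]

lemma sb_pot {b : ℂ → ℝ} {k : ℝ → ℝ} {C : ℝ} (hmul : ∀ x y, 0 ≤ x → 0 ≤ y → k (x * y) = k x * k y)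
    (hk0 : ∀ x, 0 ≤ k x)
    (h : ∀ x : ℂ, ∫ y, b y * k ‖x - y‖ ≤ C * k (max 1 ‖x‖)) {s : ℝ} (hs : 0 < s) (p z : ℂ) :
    ∫ ξ, sb b s p ξ * k ‖z - ξ‖ ≤ C * k (max s ‖z - p‖) := by
  rw [sb_integral b hs p fun ξ => k ‖z - ξ‖]
  have e : ∀ y : ℂ, k ‖z - (p + s • y)‖ = k s * k ‖s⁻¹ • (z - p) - y‖ := by
    intro y
    rw [← hmul _ _ hs.le (norm_nonneg _)]
    congr 1
    have : z - (p + s • y) = s • (s⁻¹ • (z - p) - y) := by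
      rw [smul_sub, smul_inv_smul₀ hs.ne']; ring
    rw [this, norm_smul, Real.norm_of_nonneg hs.le]
  simp_rw [e]
  calc _ = k s * ∫ y, b y * k ‖s⁻¹ • (z - p) - y‖ := by
        rw [← integral_const_mul]; congr 1; ext y; ring
    _ ≤ k s * (C * k (max 1 ‖s⁻¹ • (z - p)‖)) := by
        gcongr
        · exact hk0 _
        · exact h _
    _ = C * (k s * k (max 1 ‖s⁻¹ • (z - p)‖)) := by ring
    _ = _ := by
      rw [← hmul _ _ hs.le (by positivity), mul_max_of_nonneg _ _ hs.le, norm_smul,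
        Real.norm_of_nonneg (by positivity), mul_inv_cancel_left₀ hs.ne', mul_one]

lemma rs_mul (x y : ℝ) (hx : 0 ≤ x) (_ : 0 ≤ y) : rs (x * y) = rs x * rs y := by
  unfold rs; rw [Real.sqrt_mul hx, mul_inv]

lemma rs_anti (x y : ℝ) (hx : 0 < x) (h : x ≤ y) : rs y ≤ rs x := by
  unfold rs
  have := Real.sqrt_pos.2 hx
  gcongr

lemma rs_half (x : ℝ) : rs (x / 2) ≤ 2 * rs x := by
  unfold rs
  rcases le_or_gt x 0 with h | h
  · rw [Real.sqrt_eq_zero_of_nonpos h, Real.sqrt_eq_zero_of_nonpos (by linarith)]; simp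
  have : √x ≤ 2 * √(x / 2) := by
    rw [show (2 : ℝ) = √4 by rw [show (4 : ℝ) = 2 ^ 2 by norm_num, Real.sqrt_sq]; norm_num,
      ← Real.sqrt_mul (by norm_num), Real.sqrt_le_sqrt_iff (by positivity)]
    rw [show (√4 : ℝ) = 2 by rw [show (4 : ℝ) = 2 ^ 2 by norm_num, Real.sqrt_sq]; norm_num]
    linarith
  have h2 : 0 < √(x / 2) := Real.sqrt_pos.2 (by linarith)
  have h1 : 0 < √x := Real.sqrt_pos.2 h
  rw [← div_eq_mul_inv, inv_eq_one_div, div_le_div_iff₀ h2 h1]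
  linarith

/-- Signed square root. -/
noncomputable def ssq (t : ℝ) : ℝ := √t - √(-t)

lemma ssq_mono : Monotone ssq := fun a b h => by
  unfold ssq
  exact sub_le_sub (Real.sqrt_le_sqrt h) (Real.sqrt_le_sqrt (by linarith))

lemma sqrt_add_le' {x y : ℝ} (hx : 0 ≤ x) (hy : 0 ≤ y) : √(x + y) ≤ √x + √y := by
  refine Real.sqrt_le_iff.2 ⟨by positivity, ?_⟩
  nlinarith [Real.sq_sqrt hx, Real.sq_sqrt hy, mul_nonneg (Real.sqrt_nonneg x) (Real.sqrt_nonneg y)]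

lemma ssq_sub_le {a b : ℝ} (h : a ≤ b) : ssq b - ssq a ≤ 2 * √(b - a) := by
  have h1 : √b - √a ≤ √(b - a) := by
    have := sqrt_add_le' (x := max a 0) (y := b - a) (le_max_right _ _) (by linarith)
    have h2 : √(max a 0) = √a := by
      rcases le_total a 0 with h | h
      · rw [max_eq_right h, Real.sqrt_zero, Real.sqrt_eq_zero_of_nonpos h]
      · rw [max_eq_left h]
    have h3 : √b ≤ √(max a 0 + (b - a)) := Real.sqrt_le_sqrt (by linarith [le_max_left a 0])
    linarith
  have h2 : √(-a) - √(-b) ≤ √(b - a) := by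
    have := sqrt_add_le' (x := max (-b) 0) (y := b - a) (le_max_right _ _) (by linarith)
    have h2 : √(max (-b) 0) = √(-b) := by
      rcases le_total (-b) 0 with h | h
      · rw [max_eq_right h, Real.sqrt_zero, Real.sqrt_eq_zero_of_nonpos h]
      · rw [max_eq_left h]
    have h3 : √(-a) ≤ √(max (-b) 0 + (b - a)) := Real.sqrt_le_sqrt (by linarith [le_max_left (-b) 0])
    linarith
  unfold ssq; linarith

/-- Comparison of `|t| ^ (-1/2)` with a telescoping difference, used to bound discrete Riesz sums. -/
lemma rs_le_ssq {t : ℝ} (h : 1 ≤ |t|) : rs |t| ≤ 3 * (ssq (t + 1) - ssq t) := by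
  have key : ∀ x y : ℝ, 0 ≤ x → 1 ≤ y → √y ≤ 2 * √(y) → y = x + 1 → √x ≤ √y ∧ (√y)⁻¹ ≤ 3 * (√y - √x) := by
    intro x y hx hy _ e
    have h1 : √x ≤ √y := Real.sqrt_le_sqrt (by linarith)
    have h2 : √y ^ 2 = √x ^ 2 + 1 := by rw [Real.sq_sqrt (by linarith), Real.sq_sqrt hx, e]
    have h3 : 0 < √y := Real.sqrt_pos.2 (by linarith)
    have h4 := Real.sqrt_nonneg x
    refine ⟨h1, ?_⟩
    rw [inv_le_iff_one_le_mul₀ h3]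
    nlinarith
  unfold rs ssq
  rcases le_total 0 t with h0 | h0
  · rw [abs_of_nonneg h0] at h ⊢
    rw [Real.sqrt_eq_zero_of_nonpos (show -(t + 1) ≤ 0 by linarith),
      Real.sqrt_eq_zero_of_nonpos (show -t ≤ 0 by linarith)]
    have h1 : 0 < √t := Real.sqrt_pos.2 (by linarith)
    have h2 : √(t + 1) ^ 2 = √t ^ 2 + 1 := by rw [Real.sq_sqrt (by linarith), Real.sq_sqrt h0]
    have h3 : 1 ≤ √t := Real.one_le_sqrt.2 h
    have h4 : √(t + 1) ≤ 2 * √t := by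
      have := Real.sqrt_nonneg (t + 1)
      nlinarith
    have h5 : √t ≤ √(t + 1) := Real.sqrt_le_sqrt (by linarith)
    rw [inv_le_iff_one_le_mul₀ h1]
    nlinarith
  · rw [abs_of_nonpos h0] at h ⊢
    rw [Real.sqrt_eq_zero_of_nonpos (show t + 1 ≤ 0 by linarith),
      Real.sqrt_eq_zero_of_nonpos (show t ≤ 0 by linarith)]
    have := (key (-(t + 1)) (-t) (by linarith) h (by linarith [Real.sqrt_nonneg (-t)]) (by ring)).2
    linarith

/-- Discrete Riesz sum on a radius. -/
lemma rs_sum (n : ℕ) (hn : 0 < n) (X : ℝ) (d : ℕ → ℝ)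
    (hd : ∀ i : ℕ, |X - (i + 1) / n| ≤ d i) :
    ∑ i ∈ Finset.range n, rs (max (((n : ℝ) ^ 2)⁻¹) (d i)) ≤ 9 * n := by
  have hn0 : (0 : ℝ) < n := by exact_mod_cast hn
  set x : ℝ := n * X with hx
  set c : ℝ → ℝ := fun t => max (-1) (min 2 t) with hc
  have hcm : Monotone c := fun a b h => max_le_max le_rfl (min_le_min le_rfl h)
  set Φ : ℕ → ℝ := fun i => n * c (i + 1 - x) + 3 * √n * ssq (i + 1 - x) with hΦ
  have hsn : 0 < √(n : ℝ) := Real.sqrt_pos.2 hn0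
  calc _ ≤ ∑ i ∈ Finset.range n, (Φ (i + 1) - Φ i) := by
        refine Finset.sum_le_sum fun i _ => ?_
        have e : Φ (i + 1) - Φ i = n * (c ((i + 1 - x) + 1) - c (i + 1 - x)) +
            3 * √n * (ssq ((i + 1 - x) + 1) - ssq (i + 1 - x)) := by
          simp only [hΦ, Nat.cast_add, Nat.cast_one]
          rw [show (i : ℝ) + 1 + 1 - x = i + 1 - x + 1 by ring]
          ring
        rw [e]
        set t : ℝ := i + 1 - x with ht
        have hdt : |t| / n ≤ d i := by
          refine le_trans (le_of_eq ?_) (hd i)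
          rw [← abs_of_pos hn0, ← abs_div, abs_sub_comm, abs_of_pos hn0]
          congr 1
          rw [ht, hx]; field_simp
        have m1 : 0 ≤ c (t + 1) - c t := sub_nonneg.2 (hcm (by linarith))
        have m2 : 0 ≤ ssq (t + 1) - ssq t := sub_nonneg.2 (ssq_mono (by linarith))
        rcases le_or_gt 1 |t| with h | h
        · calc _ ≤ rs (|t| / n) := rs_anti _ _ (by positivity) (hdt.trans (le_max_right _ _))
            _ = √n * rs |t| := by
              unfold rs; rw [Real.sqrt_div (abs_nonneg _), inv_div, div_eq_mul_inv]
            _ ≤ √n * (3 * (ssq (t + 1) - ssq t)) := by gcongr; exact rs_le_ssq h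
            _ ≤ _ := by nlinarith
        · have : c (t + 1) - c t = 1 := by
            rw [abs_lt] at h
            simp only [hc]
            rw [min_eq_right (by linarith), min_eq_right (by linarith), max_eq_right (by linarith),
              max_eq_right (by linarith)]
            ring
          rw [this]
          calc _ ≤ rs (((n : ℝ) ^ 2)⁻¹) := rs_anti _ _ (by positivity) (le_max_left _ _)
            _ = n := by unfold rs; rw [Real.sqrt_inv, inv_inv, Real.sqrt_sq hn0.le]
            _ ≤ _ := by nlinarith [mul_nonneg hsn.le m2]
    _ = Φ n - Φ 0 := Finset.sum_range_sub Φ n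
    _ = n * (c (n + 1 - x) - c (1 - x)) + 3 * √n * (ssq (n + 1 - x) - ssq (1 - x)) := by
        simp only [hΦ, Nat.cast_zero, zero_add]; ring
    _ ≤ n * 3 + 3 * √n * (2 * √n) := by
        gcongr
        · have h1 : c (n + 1 - x) ≤ 2 := max_le (by norm_num) (min_le_left _ _)
          have h2 : -1 ≤ c (1 - x) := le_max_left _ _
          linarith
        · refine (ssq_sub_le (by linarith)).trans (le_of_eq ?_)
          congr 2; ring
    _ = 9 * n := by
      have := Real.mul_self_sqrt hn0.le
      linear_combination 6 * this

end Landis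

/-! ### Densities carried by the zero set -/

namespace Landis
open MeasureTheory Filter Topology Set
open scoped ContDiff ComplexConjugate Convolution

lemma rs_rs_le {x y : ℝ} (hx : 0 < x) (h : x ≤ y) : x * y⁻¹ ≤ √x * rs y := by
  unfold rs
  have hy : 0 < y := hx.trans_le h
  have h1 : √x ≤ √y := Real.sqrt_le_sqrt h
  have h2 : 0 < √y := Real.sqrt_pos.2 hy
  have e : x * y⁻¹ = √x * (√y)⁻¹ * (√x * (√y)⁻¹) := by
    have e1 := Real.mul_self_sqrt hx.le
    have e2 := Real.mul_self_sqrt hy.le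
    nth_rewrite 1 [← e1, ← e2]
    rw [mul_inv]; ring
  rw [e]
  have : √x * (√y)⁻¹ ≤ 1 := by rw [← div_eq_mul_inv, div_le_one h2]; exact h1
  exact mul_le_of_le_one_right (by positivity) this

/-- Existence of the two kinds of densities.  Around an arbitrary point one can take a fixed bump.
Near a zero of `U`, a density spread over many zeros of `U` (one on each small circle) makes
`n * |U|` small in the Kato sense while its `1/2`-Riesz potential stays bounded. -/
lemma exists_dens : ∃ C₀ : ℝ, 0 < C₀ ∧
    (∀ c : ℂ, ∃ n : ℂ → ℝ, Dens C₀ c n ∧ ∀ ξ, 1 < ‖ξ - c‖ → n ξ = 0) ∧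
    ∀ (U : ℂ → ℝ) (δ : ℝ), ContDiff ℝ 2 U → δ < 1 → (∀ z, |lap U z| ≤ δ * |U z|) →
      ∀ c z₀ : ℂ, z₀ ∈ ball c 11 → U z₀ = 0 → ∀ ϑ > 0, ∃ n : ℂ → ℝ, Dens C₀ c n ∧
        ∀ z, ∫ ξ, n ξ * |U ξ| * ‖z - ξ‖⁻¹ ≤ ϑ := by
  obtain ⟨b, hb, hb0, hbs, hb1⟩ := exists_bump
  have hbc : HasCompactSupport b := hcs_of_zero hbs
  obtain ⟨C, hC, hCb⟩ := bump_pot hb.continuous hb0 hbs hb1 (k := rs) rs_nonneg rs_anti rs_half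
    (by unfold rs; positivity) locInt_rs
  obtain ⟨C', hC', hCb'⟩ := bump_pot hb.continuous hb0 hbs hb1 (k := fun x => |x|⁻¹)
    (fun x => by positivity)
    (fun x y hx h => by
      simp only [abs_of_pos hx, abs_of_pos (hx.trans_le h)]; gcongr)
    (fun x => by simp only [abs_div, abs_two, inv_div]; exact le_of_eq (div_eq_mul_inv _ _))
    (by norm_num) (by simpa using locInt_norm_inv)
  have p1 : ∀ s > 0, ∀ p z : ℂ, ∫ ξ, sb b s p ξ * rs ‖z - ξ‖ ≤ C * rs (max s ‖z - p‖) :=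
    fun s hs p z => sb_pot rs_mul rs_nonneg hCb hs p z
  have p2 : ∀ s > 0, ∀ p z : ℂ, ∫ ξ, sb b s p ξ * ‖z - ξ‖⁻¹ ≤ C' * (max s ‖z - p‖)⁻¹ := by
    intro s hs p z
    have := sb_pot (k := fun x => |x|⁻¹) (fun x y _ _ => by simp only [abs_mul, mul_inv])
      (fun x => by positivity) hCb' hs p z
    simp only [abs_norm] at this
    rwa [abs_of_pos (lt_max_of_lt_left hs)] at this
  have s0 : ∀ s > 0, ∀ p ξ : ℂ, 0 ≤ sb b s p ξ := fun s hs p ξ => mul_nonneg (by positivity) (hb0 _)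
  have ss : ∀ s > 0, ∀ p ξ : ℂ, s ≤ ‖ξ - p‖ → sb b s p ξ = 0 := by
    intro s hs p ξ h
    rw [sb, hbs, mul_zero]
    rw [norm_smul, Real.norm_of_nonneg (by positivity), inv_mul_eq_div, one_le_div hs]
    exact h
  have s1 : ∀ s > 0, ∀ p : ℂ, ∫ ξ, sb b s p ξ = 1 := by
    intro s hs p
    have := sb_integral b hs p fun _ => 1
    simpa [hb1] using this
  have sd : ∀ s > 0, ∀ p : ℂ, ContDiff ℝ 1 (sb b s p) := fun s hs p =>
    contDiff_const.mul ((hb.of_le (by norm_num)).comp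
      (show ContDiff ℝ 1 fun ξ : ℂ => s⁻¹ • (ξ - p) by fun_prop))
  have sc : ∀ s > 0, ∀ p : ℂ, HasCompactSupport (sb b s p) := fun s hs p =>
    hcs_of_zero' (c := p) (R := s) fun y hy => ss s hs p y hy.le
  refine ⟨C * 9 + C, by positivity, ?_, ?_⟩
  · intro c
    refine ⟨sb b 1 c, ⟨sd 1 one_pos c, s0 1 one_pos c, fun ξ h => ss 1 one_pos c ξ (by linarith),
      s1 1 one_pos c, fun z => ?_⟩, fun ξ h => ss 1 one_pos c ξ h.le⟩
    calc _ ≤ C * rs (max 1 ‖z - c‖) := p1 1 one_pos c z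
      _ ≤ C * 1 := by
        gcongr
        refine (rs_anti 1 _ one_pos (le_max_left _ _)).trans ?_
        simp [rs]
      _ ≤ _ := by linarith
  · intro U δ hU hδ hl c z₀ hz₀ hUz ϑ hϑ
    -- Lipschitz constant of `U` near `z₀`
    obtain ⟨L, hL⟩ := (isCompact_closedBall z₀ 3).exists_bound_of_continuousOn
      (f := fderiv ℝ U) (hU.continuous_fderiv (by norm_num)).continuousOn
    have hL0 : 0 ≤ L := (norm_nonneg _).trans (hL z₀ (mem_closedBall_self (by norm_num)))
    have hlip : ∀ x ∈ closedBall z₀ 3, ∀ y ∈ closedBall z₀ 3, |U y - U x| ≤ L * ‖y - x‖ :=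
      fun x hx y hy => (convex_closedBall z₀ 3).norm_image_sub_le_of_norm_fderiv_le
        (fun w _ => (hU.differentiable (by norm_num)).differentiableAt) (fun w hw => hL w hw) hx hy
    -- The density is the average of `n` bumps of radius `n⁻²` about zeros of `U` on the circles of
    -- radii `(i + 1) / n` about `z₀`.
    obtain ⟨n, hn⟩ := exists_nat_gt (max 1 (9 * L * C' / ϑ))
    have hn1 : (1 : ℝ) < n := (le_max_left _ _).trans_lt hn
    have hn2 : 9 * L * C' / ϑ < n := (le_max_right _ _).trans_lt hn
    have hn0 : (0 : ℝ) < n := by linarith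
    have hnN : 0 < n := by exact_mod_cast hn0
    have hz : ∀ i : ℕ, ∃ p : ℂ, i < n → ‖p - z₀‖ = (i + 1) / n ∧ U p = 0 := by
      intro i
      by_cases hi : i < n
      · have h1 : ((i : ℝ) + 1) / n ≤ 1 := by
          rw [div_le_one hn0]; exact_mod_cast hi
        have h0 : 0 < ((i : ℝ) + 1) / n := by positivity
        obtain ⟨p, h⟩ := exists_zero_circle hU hl hUz h0 (by
          have h2 : (((i : ℝ) + 1) / n) ^ 2 ≤ 1 := pow_le_one₀ h0.le h1
          have h3 : 0 < (((i : ℝ) + 1) / n) ^ 2 := by positivity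
          nlinarith)
        exact ⟨p, fun _ => h⟩
      · exact ⟨0, fun h => absurd h hi⟩
    choose p hp using hz
    set s : ℝ := ((n : ℝ) ^ 2)⁻¹ with hs
    have hs0 : 0 < s := by positivity
    have hs1 : s ≤ 1 := inv_le_one_of_one_le₀ (by nlinarith)
    have hss : √s = (n : ℝ)⁻¹ := by rw [hs, Real.sqrt_inv, Real.sqrt_sq hn0.le]
    have hpz : ∀ i < n, ‖p i - z₀‖ ≤ 1 := fun i hi => by
      rw [(hp i hi).1, div_le_one hn0]; exact_mod_cast hi
    have hsum : ∀ z, ∑ i ∈ Finset.range n, rs (max s ‖z - p i‖) ≤ 9 * n := by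
      intro z
      refine le_trans (Finset.sum_le_sum fun i hi => ?_)
        (rs_sum n hnN ‖z - z₀‖ (fun i => max ‖z - p i‖ |‖z - z₀‖ - (i + 1) / n|)
          fun i => le_max_right _ _)
      have hi' := Finset.mem_range.1 hi
      have : |‖z - z₀‖ - (i + 1) / n| ≤ ‖z - p i‖ := by
        rw [← (hp i hi').1]
        refine (abs_norm_sub_norm_le _ _).trans ?_
        rw [sub_sub_sub_cancel_right]
      rw [max_eq_left this]
    set N : ℂ → ℝ := fun ξ => (n : ℝ)⁻¹ * ∑ i ∈ Finset.range n, sb b s (p i) ξ with hN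
    have hNk : ∀ f : ℂ → ℝ, (∀ i < n, Integrable fun ξ => sb b s (p i) ξ * f ξ) →
        ∫ ξ, N ξ * f ξ = (n : ℝ)⁻¹ * ∑ i ∈ Finset.range n, ∫ ξ, sb b s (p i) ξ * f ξ := by
      intro f hf
      simp_rw [hN, mul_assoc, Finset.sum_mul]
      rw [integral_const_mul, integral_finsetSum _ fun i hi => hf i (Finset.mem_range.1 hi)]
    have hcz : ‖z₀ - c‖ < 11 := by rwa [mem_ball_iff_norm] at hz₀
    refine ⟨N, ⟨contDiff_const.mul (ContDiff.sum fun i _ => sd s hs0 _), fun ξ =>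
      mul_nonneg (by positivity) (Finset.sum_nonneg fun i _ => s0 s hs0 _ _), fun ξ hξ => ?_, ?_,
      fun z => ?_⟩, fun z => ?_⟩
    · rw [hN]
      simp only
      rw [Finset.sum_eq_zero, mul_zero]
      intro i hi
      refine ss s hs0 _ _ ?_
      have h1 := hpz i (Finset.mem_range.1 hi)
      have h2 := norm_add₃_le (a := ξ - p i) (b := p i - z₀) (c := z₀ - c)
      rw [show ξ - p i + (p i - z₀) + (z₀ - c) = ξ - c by ring] at h2
      linarith
    · have := hNk (fun _ => 1) fun i _ => by
        simpa using (sd s hs0 (p i)).continuous.integrable_of_hasCompactSupport (sc s hs0 (p i))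
      simp only [mul_one, s1 s hs0, Finset.sum_const, Finset.card_range, nsmul_eq_mul] at this
      rw [this, inv_mul_cancel₀ hn0.ne']
    · rw [hNk _ fun i _ => conv_integrable (sd s hs0 (p i)).continuous (sc s hs0 (p i)) locInt_rs z]
      calc _ ≤ (n : ℝ)⁻¹ * ∑ i ∈ Finset.range n, C * rs (max s ‖z - p i‖) := by
            gcongr with i hi; exact p1 s hs0 _ z
        _ ≤ (n : ℝ)⁻¹ * (C * (9 * n)) := by rw [← Finset.mul_sum]; gcongr; exact hsum z
        _ = C * 9 := by field_simp
        _ ≤ _ := by linarith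
    · have hi2 : ∀ i < n, Integrable fun ξ => sb b s (p i) ξ * (|U ξ| * ‖z - ξ‖⁻¹) := by
        intro i _
        have := conv_integrable (n := fun ξ => sb b s (p i) ξ * |U ξ|)
          ((sd s hs0 (p i)).continuous.mul hU.continuous.abs) (sc s hs0 (p i)).mul_right
          locInt_norm_inv z
        simpa only [mul_assoc] using this
      simp_rw [mul_assoc]
      rw [hNk _ hi2]
      calc _ ≤ (n : ℝ)⁻¹ * ∑ i ∈ Finset.range n, L * C' * (n : ℝ)⁻¹ * rs (max s ‖z - p i‖) := by
            gcongr with i hi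
            have hi' := Finset.mem_range.1 hi
            calc _ ≤ ∫ ξ, L * s * (sb b s (p i) ξ * ‖z - ξ‖⁻¹) := by
                  refine integral_mono (hi2 i hi') ((conv_integrable (sd s hs0 (p i)).continuous
                    (sc s hs0 (p i)) locInt_norm_inv z).const_mul _) fun ξ => ?_
                  by_cases h : s ≤ ‖ξ - p i‖
                  · simp [ss s hs0 _ _ h]
                  push Not at h
                  have h1 := hpz i hi'
                  have hU' : |U ξ| ≤ L * s := by
                    have := hlip (p i) (by rw [mem_closedBall_iff_norm]; linarith) ξ (by
                      rw [mem_closedBall_iff_norm]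
                      have := norm_add_le (ξ - p i) (p i - z₀)
                      rw [sub_add_sub_cancel] at this; linarith)
                    rw [(hp i hi').2, sub_zero] at this
                    exact this.trans (by gcongr)
                  calc _ ≤ sb b s (p i) ξ * (L * s * ‖z - ξ‖⁻¹) := by
                        gcongr; exact s0 s hs0 _ _
                    _ = _ := by ring
              _ ≤ L * s * (C' * (max s ‖z - p i‖)⁻¹) := by
                  rw [integral_const_mul]; gcongr; exact p2 s hs0 _ z
              _ = L * C' * (s * (max s ‖z - p i‖)⁻¹) := by ring
              _ ≤ L * C' * (√s * rs (max s ‖z - p i‖)) := by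
                  exact mul_le_mul_of_nonneg_left (rs_rs_le hs0 (le_max_left _ _)) (by positivity)
              _ = _ := by rw [hss]; ring
        _ ≤ (n : ℝ)⁻¹ * (L * C' * (n : ℝ)⁻¹ * (9 * n)) := by
            rw [← Finset.mul_sum]; gcongr; exact hsum z
        _ = 9 * L * C' * (n : ℝ)⁻¹ := by field_simp
        _ ≤ ϑ := by
            rw [← div_eq_mul_inv, div_le_iff₀ hn0]
            rw [div_lt_iff₀ hϑ] at hn2
            linarith

end Landis

/-! ### Barycentric weights -/

namespace Landis
open MeasureTheory Filter Topology Set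
open scoped ContDiff ComplexConjugate Convolution

/-- The planar cross product. -/
noncomputable def cr (a b : ℂ) : ℝ := a.re * b.im - a.im * b.re

/-- Index of the lattice cell containing `ζ`. -/
noncomputable def cell (ζ : ℂ) : ℤ × ℤ := (⌊ζ.re / 100⌋, ⌊ζ.im / 100⌋)

lemma cr_le {a b : ℂ} {A B : ℝ} (ha : ‖a‖ ≤ A) (hb : ‖b‖ ≤ B) : |cr a b| ≤ A * B := by
  have e : cr a b = (conj a * b).im := by simp [cr]; ring
  rw [e]
  calc _ ≤ ‖conj a * b‖ := Complex.abs_im_le_norm _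
    _ = ‖a‖ * ‖b‖ := by rw [norm_mul, Complex.norm_conj]
    _ ≤ _ := by
      have := norm_nonneg a
      have := norm_nonneg b
      gcongr
      linarith

lemma cramer {a b : ℂ} (h0 : cr a b ≠ 0) (x : ℂ) :
    ((cr x b / cr a b : ℝ) : ℂ) * a + ((cr a x / cr a b : ℝ) : ℂ) * b = x := by
  have e1 : cr x b * a.re + cr a x * b.re = x.re * cr a b := by unfold cr; ring
  have e2 : cr x b * a.im + cr a x * b.im = x.im * cr a b := by unfold cr; ring
  apply Complex.ext
  · rw [Complex.add_re, Complex.re_ofReal_mul, Complex.re_ofReal_mul, div_mul_eq_mul_div,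
      div_mul_eq_mul_div, ← add_div, e1, mul_div_cancel_right₀ _ h0]
  · rw [Complex.add_im, Complex.im_ofReal_mul, Complex.im_ofReal_mul, div_mul_eq_mul_div,
      div_mul_eq_mul_div, ← add_div, e2, mul_div_cancel_right₀ _ h0]

lemma Dens.bary_near {C₀ : ℝ} {c : ℂ} {n : ℂ → ℝ} (D : Dens C₀ c n) : ‖Dens.bary n - c‖ ≤ 13 := by
  rw [← D.bary_sub c]
  calc _ ≤ ∫ ξ, n ξ * 13 := by
        refine norm_integral_le_of_norm_le (D.integrable.mul_const _) (Eventually.of_forall fun ξ => ?_)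
        rw [norm_mul, Complex.norm_real, Real.norm_of_nonneg (D.nonneg ξ)]
        by_cases h : 13 < ‖ξ - c‖
        · simp [D.supp ξ h]
        · gcongr
          · exact D.nonneg ξ
          · linarith
    _ = 13 := by rw [integral_mul_const, D.mass, one_mul]

lemma cell_near (ζ : ℂ) : ‖ζ - ctr (cell ζ)‖ ≤ 142 := by
  have h1 := Int.floor_le (ζ.re / 100)
  have h2 := Int.lt_floor_add_one (ζ.re / 100)
  have h3 := Int.floor_le (ζ.im / 100)
  have h4 := Int.lt_floor_add_one (ζ.im / 100)
  refine Real.sqrt_le_iff.2 ⟨by norm_num, ?_⟩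
  simp only [Complex.normSq_apply, Complex.sub_re, Complex.sub_im, ctr, cell]
  have a1 : |ζ.re - 100 * ⌊ζ.re / 100⌋| ≤ 100 := abs_le.2 ⟨by linarith, by linarith⟩
  have a2 : |ζ.im - 100 * ⌊ζ.im / 100⌋| ≤ 100 := abs_le.2 ⟨by linarith, by linarith⟩
  have b1 := sq_le_sq' (abs_le.1 a1).1 (abs_le.1 a1).2
  have b2 := sq_le_sq' (abs_le.1 a2).1 (abs_le.1 a2).2
  nlinarith

/-- Given one density per lattice point, barycentric coordinates with respect to the barycentres at
three corners of the cell of `ζ` provide compensating weights. -/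
lemma exists_comp {C₀ : ℝ} (n : ℤ × ℤ → ℂ → ℝ) (dens : ∀ q, Dens C₀ (ctr q) (n q)) (ρ : ℝ) :
    ∃ X : Comp C₀ ρ, X.n = n := by
  set p : ℤ × ℤ → ℂ := fun q => Dens.bary (n q) with hp
  have hpn : ∀ q, ‖p q - ctr q‖ ≤ 13 := fun q => (dens q).bary_near
  set e1 : ℤ × ℤ := (1, 0) with he1
  set e2 : ℤ × ℤ := (0, 1) with he2
  have hc1 : ∀ m, ctr (m + e1) = ctr m + 100 := fun m => by
    apply Complex.ext <;> simp [ctr, he1]; ring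
  have hc2 : ∀ m, ctr (m + e2) = ctr m + 100 * Complex.I := fun m => by
    apply Complex.ext <;> simp [ctr, he2]; ring
  -- The edges of the perturbed cell are within `26` of `100` and `100 i`, so they stay linearly
  -- independent and the barycentric coordinates are bounded.
  set v1 : ℤ × ℤ → ℂ := fun m => p (m + e1) - p m with hv1
  set v2 : ℤ × ℤ → ℂ := fun m => p (m + e2) - p m with hv2
  have d1 : ∀ m, ‖v1 m - 100‖ ≤ 26 := fun m => by
    have e : v1 m - 100 = (p (m + e1) - ctr (m + e1)) - (p m - ctr m) := by
      rw [hc1, hv1]; ring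
    rw [e]; linarith [norm_sub_le (p (m + e1) - ctr (m + e1)) (p m - ctr m), hpn m, hpn (m + e1)]
  have d2 : ∀ m, ‖v2 m - 100 * Complex.I‖ ≤ 26 := fun m => by
    have e : v2 m - 100 * Complex.I = (p (m + e2) - ctr (m + e2)) - (p m - ctr m) := by
      rw [hc2, hv2]; ring
    rw [e]; linarith [norm_sub_le (p (m + e2) - ctr (m + e2)) (p m - ctr m), hpn m, hpn (m + e2)]
  have n1 : ∀ m, ‖v1 m‖ ≤ 126 := fun m => by
    have := norm_add_le (v1 m - 100) 100
    rw [sub_add_cancel] at this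
    have h := d1 m
    norm_num at this; linarith
  have n2 : ∀ m, ‖v2 m‖ ≤ 126 := fun m => by
    have := norm_add_le (v2 m - 100 * Complex.I) (100 * Complex.I)
    rw [sub_add_cancel] at this
    have h := d2 m
    norm_num at this; linarith
  have hD : ∀ m, 4800 ≤ cr (v1 m) (v2 m) := fun m => by
    have a1 := abs_le.1 ((Complex.abs_re_le_norm _).trans (d1 m))
    have a2 := abs_le.1 ((Complex.abs_im_le_norm _).trans (d1 m))
    have a3 := abs_le.1 ((Complex.abs_re_le_norm _).trans (d2 m))
    have a4 := abs_le.1 ((Complex.abs_im_le_norm _).trans (d2 m))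
    simp at a1 a2 a3 a4
    have h1 : (v1 m).im * (v2 m).re ≤ 26 * 26 := by
      refine (le_abs_self _).trans ?_
      rw [abs_mul]
      gcongr
      · exact abs_le.2 a2
      · exact abs_le.2 a3
    unfold cr
    nlinarith
  set l1 : ℤ × ℤ → ℂ → ℝ := fun m ζ => cr (ζ - p m) (v2 m) / cr (v1 m) (v2 m) with hl1
  set l2 : ℤ × ℤ → ℂ → ℝ := fun m ζ => cr (v1 m) (ζ - p m) / cr (v1 m) (v2 m) with hl2
  have hlin : ∀ m ζ, (l1 m ζ : ℂ) * v1 m + (l2 m ζ : ℂ) * v2 m = ζ - p m := fun m ζ => by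
    exact cramer (by linarith [hD m]) _
  have m1 : ∀ m, Measurable (l1 m) := fun m => by rw [hl1]; unfold cr; fun_prop
  have m2 : ∀ m, Measurable (l2 m) := fun m => by rw [hl2]; unfold cr; fun_prop
  have hcell : Measurable cell := by unfold cell; fun_prop
  have hx : ∀ ζ, ‖ζ - p (cell ζ)‖ ≤ 155 := fun ζ => by
    have := norm_sub_le (ζ - ctr (cell ζ)) (p (cell ζ) - ctr (cell ζ))
    rw [sub_sub_sub_cancel_right] at this
    linarith [cell_near ζ, hpn (cell ζ)]
  have b1 : ∀ ζ, |l1 (cell ζ) ζ| ≤ 5 := fun ζ => by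
    have hpos : 0 < cr (v1 (cell ζ)) (v2 (cell ζ)) := by linarith [hD (cell ζ)]
    simp only [hl1]
    rw [abs_div, abs_of_pos hpos, div_le_iff₀ hpos]
    have := cr_le (hx ζ) (n2 (cell ζ))
    linarith [hD (cell ζ)]
  have b2 : ∀ ζ, |l2 (cell ζ) ζ| ≤ 5 := fun ζ => by
    have hpos : 0 < cr (v1 (cell ζ)) (v2 (cell ζ)) := by linarith [hD (cell ζ)]
    simp only [hl2]
    rw [abs_div, abs_of_pos hpos, div_le_iff₀ hpos]
    have := cr_le (n1 (cell ζ)) (hx ζ)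
    linarith [hD (cell ζ)]
  have b0 : ∀ ζ, |1 - l1 (cell ζ) ζ - l2 (cell ζ) ζ| ≤ 11 := fun ζ => by
    have h1 := abs_le.1 (b1 ζ)
    have h2 := abs_le.1 (b2 ζ)
    exact abs_le.2 ⟨by linarith, by linarith⟩
  set w : ℤ × ℤ → ℂ → ℝ := fun q ζ => (if cell ζ = q then 1 - l1 q ζ - l2 q ζ else 0) +
    (if cell ζ + e1 = q then l1 (q - e1) ζ else 0) +
    (if cell ζ + e2 = q then l2 (q - e2) ζ else 0) with hw
  set M : ℤ := ⌈4 * ρ / 100⌉ + 2 with hM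
  set F : Finset (ℤ × ℤ) := Finset.Icc (-M) M ×ˢ Finset.Icc (-M) M with hF
  have hmem : ∀ ζ : ℂ, ‖ζ‖ ≤ 4 * ρ → cell ζ ∈ F ∧ cell ζ + e1 ∈ F ∧ cell ζ + e2 ∈ F := by
    intro ζ hζ
    have key : ∀ x : ℝ, |x| ≤ 4 * ρ → -M + 1 ≤ ⌊x / 100⌋ ∧ ⌊x / 100⌋ + 1 ≤ M := by
      intro x hx
      have h := abs_le.1 hx
      have hc := Int.le_ceil (4 * ρ / 100)
      constructor
      · rw [Int.le_floor, hM]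
        push_cast
        linarith
      · have : ((⌊x / 100⌋ : ℤ) : ℝ) ≤ (⌈4 * ρ / 100⌉ : ℤ) := (Int.floor_le _).trans (by linarith)
        have : ⌊x / 100⌋ ≤ ⌈4 * ρ / 100⌉ := by exact_mod_cast this
        omega
    have k1 := key _ ((Complex.abs_re_le_norm ζ).trans hζ)
    have k2 := key _ ((Complex.abs_im_le_norm ζ).trans hζ)
    simp only [hF, cell, he1, he2, Finset.mem_product, Finset.mem_Icc, Prod.mk_add_mk, add_zero]
    omega
  refine ⟨⟨F, n, w, dens, ?_, ?_, ?_, ?_, ?_⟩, rfl⟩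
  · intro q
    refine ((Measurable.ite (hcell (measurableSet_singleton q)) ?_ measurable_const).add
      (Measurable.ite ((hcell.add_const e1) (measurableSet_singleton q)) (m1 _) measurable_const)).add
      (Measurable.ite ((hcell.add_const e2) (measurableSet_singleton q)) (m2 _) measurable_const)
    exact (measurable_const.sub (m1 q)).sub (m2 q)
  · intro q ζ h
    have hn := cell_near ζ
    have h1 : cell ζ ≠ q := by rintro rfl; linarith
    have h2 : cell ζ + e1 ≠ q := by
      rintro rfl
      rw [hc1] at h
      have := norm_sub_le (ζ - ctr (cell ζ)) 100
      rw [sub_sub] at this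
      norm_num at this; linarith
    have h3 : cell ζ + e2 ≠ q := by
      rintro rfl
      rw [hc2] at h
      have := norm_sub_le (ζ - ctr (cell ζ)) (100 * Complex.I)
      rw [sub_sub] at this
      norm_num at this; linarith
    simp [hw, h1, h2, h3]
  · intro ζ hζ
    obtain ⟨f0, f1, f2⟩ := hmem ζ hζ
    calc ∑ q ∈ F, |w q ζ| ≤ ∑ q ∈ F, ((if cell ζ = q then |1 - l1 q ζ - l2 q ζ| else 0) +
          (if cell ζ + e1 = q then |l1 (q - e1) ζ| else 0) +
          (if cell ζ + e2 = q then |l2 (q - e2) ζ| else 0)) := by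
          refine Finset.sum_le_sum fun q _ => (abs_add_three _ _ _).trans (le_of_eq ?_)
          congr 1
          · congr 1 <;> split_ifs <;> simp
          · split_ifs <;> simp
      _ ≤ 30 := by
          rw [Finset.sum_add_distrib, Finset.sum_add_distrib, Finset.sum_ite_eq, Finset.sum_ite_eq,
            Finset.sum_ite_eq, if_pos f0, if_pos f1, if_pos f2, add_sub_cancel_right,
            add_sub_cancel_right]
          linarith [b0 ζ, b1 ζ, b2 ζ]
  · intro ζ hζ
    obtain ⟨f0, f1, f2⟩ := hmem ζ hζ
    simp only [hw]
    rw [Finset.sum_add_distrib, Finset.sum_add_distrib, Finset.sum_ite_eq, Finset.sum_ite_eq,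
      Finset.sum_ite_eq, if_pos f0, if_pos f1, if_pos f2, add_sub_cancel_right,
      add_sub_cancel_right]
    ring
  · intro ζ hζ
    obtain ⟨f0, f1, f2⟩ := hmem ζ hζ
    have e : ∀ q, (w q ζ : ℂ) * Dens.bary (n q) =
        (if cell ζ = q then ((1 - l1 q ζ - l2 q ζ : ℝ) : ℂ) * p q else 0) +
        (if cell ζ + e1 = q then (l1 (q - e1) ζ : ℂ) * p q else 0) +
        (if cell ζ + e2 = q then (l2 (q - e2) ζ : ℂ) * p q else 0) := by
      intro q
      rw [hw]
      simp only [Complex.ofReal_add, add_mul]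
      congr 1
      · congr 1 <;> split_ifs <;> simp [hp]
      · split_ifs <;> simp [hp]
    rw [Finset.sum_congr rfl fun q _ => e q]
    rw [Finset.sum_add_distrib, Finset.sum_add_distrib, Finset.sum_ite_eq, Finset.sum_ite_eq,
      Finset.sum_ite_eq, if_pos f0, if_pos f1, if_pos f2, add_sub_cancel_right,
      add_sub_cancel_right]
    have := hlin (cell ζ) ζ
    simp only [hv1, hv2] at this
    push_cast
    linear_combination this

end Landis

/-! ### Kato bounds -/

namespace Landis
open MeasureTheory Filter Topology Set
open scoped ContDiff ComplexConjugate Convolution ENNReal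

/-- The kernel `x^{-3/2}`, written so that no real powers appear. -/
noncomputable def k32 (x : ℝ) : ℝ := x⁻¹ * rs x

lemma k32_nonneg {x : ℝ} (hx : 0 ≤ x) : 0 ≤ k32 x := mul_nonneg (inv_nonneg.2 hx) (rs_nonneg _)

lemma locInt_k32 : LocallyIntegrable (fun z : ℂ => k32 ‖z‖) := by
  have hm : Measurable fun z : ℂ => k32 ‖z‖ := by
    unfold k32
    exact measurable_norm.inv.mul (measurable_rs.comp measurable_norm)
  refine locInt_of_bound hm.aestronglyMeasurable (p := 3 / 2) (by norm_num) fun R => ⟨1, fun z _ => ?_⟩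
  rw [Real.norm_of_nonneg (k32_nonneg (norm_nonneg _)), k32, rs_eq (norm_nonneg _), one_mul]
  rcases (norm_nonneg z).eq_or_lt with h | h
  · rw [← h]; simp
  · rw [← Real.rpow_neg_one, ← Real.rpow_add h]; norm_num

/-- If `d ≤ a + b`, one of `a`, `b` is at least `d / 2`; the product of two Cauchy kernels is then
`d ^ (-1/2)` times a kernel that is still locally integrable. -/
lemma kernel_split {a b d : ℝ} (ha : 0 ≤ a) (hb : 0 ≤ b) (hd : 0 < d) (h : d ≤ a + b) :
    a⁻¹ * b⁻¹ ≤ 2 * rs d * (k32 a + k32 b) := by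
  have key : ∀ x y : ℝ, 0 ≤ x → x ≤ y → d ≤ x + y → x⁻¹ * y⁻¹ ≤ 2 * rs d * k32 x := by
    intro x y hx hxy hxd
    rcases hx.eq_or_lt with rfl | hx
    · simp [k32]
    have hy : d / 2 ≤ y := by linarith
    have hy0 : 0 < y := by linarith
    have e : y⁻¹ = rs y * rs y := by
      unfold rs; rw [← mul_inv, Real.mul_self_sqrt hy0.le]
    have h1 : rs y ≤ 2 * rs d := (rs_anti _ _ (by linarith) hy).trans (rs_half _)
    have h2 : rs y ≤ rs x := rs_anti _ _ hx hxy
    rw [e, k32]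
    have := rs_nonneg y
    have := rs_nonneg x
    calc x⁻¹ * (rs y * rs y) ≤ x⁻¹ * (2 * rs d * rs x) := by gcongr; linarith
      _ = _ := by ring
  have hrs := rs_nonneg d
  rcases le_total a b with hab | hab
  · refine (key a b ha hab h).trans ?_
    have := k32_nonneg hb
    gcongr; linarith
  · rw [mul_comm]
    refine (key b a hb hab (by linarith)).trans ?_
    have := k32_nonneg ha
    gcongr; linarith

/-- Overlap integral of two Cauchy kernels, with a half-power singularity to spare. -/
lemma two_kernel (R : ℝ) (hR : 0 < R) : ∃ C : ℝ, 0 < C ∧ ∀ z ξ : ℂ, z ≠ ξ →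
    ∫⁻ ζ in ball z R, ENNReal.ofReal (‖ζ - ξ‖⁻¹ * ‖z - ζ‖⁻¹) ≤ ENNReal.ofReal (C * rs ‖z - ξ‖) := by
  set k : ℂ → ℝ := (ball (0 : ℂ) R).indicator fun w => k32 ‖w‖ with hk
  have hki : Integrable k := ball_ind_integrable locInt_k32 _
  have hk0 : ∀ w, 0 ≤ k w := fun w => indicator_nonneg (fun w _ => k32_nonneg (norm_nonneg _)) _
  set o : ℂ → ℝ := (ball (0 : ℂ) R).indicator fun _ => k32 R with ho
  have hoi : Integrable o := ball_ind_integrable (locallyIntegrable_const _) _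
  have ho0 : ∀ w, 0 ≤ o w := fun w => indicator_nonneg (fun w _ => k32_nonneg hR.le) _
  have hI : 0 ≤ ∫ w, k w := integral_nonneg hk0
  have hJ : 0 ≤ ∫ w, o w := integral_nonneg ho0
  refine ⟨2 * ((∫ w, k w) + (∫ w, k w) + ∫ w, o w) + 1, by positivity, fun z ξ hne => ?_⟩
  have hd : 0 < ‖z - ξ‖ := norm_pos_iff.2 (sub_ne_zero.2 hne)
  set g : ℂ → ℝ := fun ζ => 2 * rs ‖z - ξ‖ * (k (ζ - ξ) + k (z - ζ) + o (z - ζ)) with hg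
  have i1 : Integrable fun ζ => k (ζ - ξ) + k (z - ζ) :=
    (hki.comp_sub_right ξ).add (hki.comp_sub_left z)
  have i2 : Integrable fun ζ => k (ζ - ξ) + k (z - ζ) + o (z - ζ) := i1.add (hoi.comp_sub_left z)
  have hgi : Integrable g := i2.const_mul _
  have hg0 : ∀ ζ, 0 ≤ g ζ := fun ζ => mul_nonneg (mul_nonneg zero_le_two (rs_nonneg _))
    (add_nonneg (add_nonneg (hk0 _) (hk0 _)) (ho0 _))
  calc _ ≤ ∫⁻ ζ in ball z R, ENNReal.ofReal (g ζ) := by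
        refine setLIntegral_mono' measurableSet_ball fun ζ hζ => ENNReal.ofReal_le_ofReal ?_
        rw [mem_ball_iff_norm, norm_sub_rev] at hζ
        have h1 : k (z - ζ) = k32 ‖z - ζ‖ := by
          rw [hk, indicator_of_mem (by rwa [mem_ball_zero_iff])]
        have h2 : o (z - ζ) = k32 R := by
          rw [ho, indicator_of_mem (by rwa [mem_ball_zero_iff])]
        have h3 : k32 ‖ζ - ξ‖ ≤ k (ζ - ξ) + k32 R := by
          rcases lt_or_ge ‖ζ - ξ‖ R with h | h
          · rw [hk, indicator_of_mem (by rwa [mem_ball_zero_iff])]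
            have := k32_nonneg hR.le
            linarith
          · have : k32 ‖ζ - ξ‖ ≤ k32 R := by
              unfold k32
              have := rs_anti _ _ hR h
              have := rs_nonneg ‖ζ - ξ‖
              gcongr
            linarith [hk0 (ζ - ξ)]
        refine (kernel_split (norm_nonneg _) (norm_nonneg _) hd ?_).trans ?_
        · have := norm_add_le (z - ζ) (ζ - ξ)
          rw [sub_add_sub_cancel] at this; linarith
        · rw [hg]
          have := rs_nonneg ‖z - ξ‖
          refine mul_le_mul_of_nonneg_left ?_ (by positivity)
          rw [h1, h2]; linarith
    _ ≤ ∫⁻ ζ, ENNReal.ofReal (g ζ) := setLIntegral_le_lintegral _ _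
    _ = ENNReal.ofReal (∫ ζ, g ζ) :=
        (ofReal_integral_eq_lintegral_ofReal hgi (Eventually.of_forall hg0)).symm
    _ ≤ _ := by
        refine ENNReal.ofReal_le_ofReal ?_
        rw [hg, integral_const_mul, integral_add i1 (hoi.comp_sub_left z),
          integral_add (hki.comp_sub_right ξ) (hki.comp_sub_left z), integral_sub_right_eq_self k,
          integral_sub_left_eq_self k, integral_sub_left_eq_self o]
        nlinarith [rs_nonneg ‖z - ξ‖]

lemma continuous_pot {C₀ : ℝ} {c : ℂ} {n : ℂ → ℝ} (D : Dens C₀ c n) : Continuous (pot n) :=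
  D.hcs.continuous_convolution_left (ContinuousLinearMap.mul ℝ ℝ) (μ := volume)
    D.contDiff.continuous locInt_norm_inv

lemma ofReal_pot {C₀ : ℝ} {c : ℂ} {n : ℂ → ℝ} (D : Dens C₀ c n) (z : ℂ) :
    ENNReal.ofReal (pot n z) = ∫⁻ ξ, ENNReal.ofReal (n ξ * ‖z - ξ‖⁻¹) :=
  ofReal_integral_eq_lintegral_ofReal (D.integrable_inv z)
    (Eventually.of_forall fun ξ => mul_nonneg (D.nonneg ξ) (by positivity))

/-- The potential of a density has bounded Kato norm, because its `1/2`-Riesz potential is bounded. -/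
lemma pot_kato (C₀ R : ℝ) (hR : 0 < R) : ∃ C : ℝ, 0 ≤ C ∧ ∀ (c : ℂ) (n : ℂ → ℝ), Dens C₀ c n →
    ∀ z, ∫⁻ ζ in ball z R, ENNReal.ofReal (pot n ζ * ‖z - ζ‖⁻¹) ≤ ENNReal.ofReal C := by
  obtain ⟨C, hC, h⟩ := two_kernel R hR
  refine ⟨C * |C₀|, by positivity, fun c n D z => ?_⟩
  have hmn : Measurable n := D.contDiff.continuous.measurable
  have hmm : Measurable (Function.uncurry fun (ζ ξ : ℂ) =>
      ENNReal.ofReal (n ξ * (‖ζ - ξ‖⁻¹ * ‖z - ζ‖⁻¹))) := by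
    unfold Function.uncurry
    fun_prop
  calc _ = ∫⁻ ζ in ball z R, ∫⁻ ξ, ENNReal.ofReal (n ξ * (‖ζ - ξ‖⁻¹ * ‖z - ζ‖⁻¹)) := by
        congr 1; ext ζ
        rw [ENNReal.ofReal_mul' (by positivity), ofReal_pot D, ← lintegral_mul_const' _ _ (by simp)]
        congr 1; ext ξ
        rw [← ENNReal.ofReal_mul' (by positivity), mul_assoc]
    _ = ∫⁻ ξ, ∫⁻ ζ in ball z R, ENNReal.ofReal (n ξ * (‖ζ - ξ‖⁻¹ * ‖z - ζ‖⁻¹)) :=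
        lintegral_lintegral_swap hmm.aemeasurable
    _ ≤ ∫⁻ ξ, ENNReal.ofReal (n ξ * rs ‖z - ξ‖ * C) := by
        refine lintegral_mono_ae ?_
        have hae : ∀ᵐ ξ : ℂ, ξ ≠ z := by simp [ae_iff, measure_singleton]
        filter_upwards [hae] with ξ hξ
        have : ∀ ζ : ℂ, ENNReal.ofReal (n ξ * (‖ζ - ξ‖⁻¹ * ‖z - ζ‖⁻¹)) =
            ENNReal.ofReal (n ξ) * ENNReal.ofReal (‖ζ - ξ‖⁻¹ * ‖z - ζ‖⁻¹) := fun ζ =>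
          ENNReal.ofReal_mul (D.nonneg ξ)
        simp_rw [this]
        rw [lintegral_const_mul' _ _ (by simp), mul_assoc, ENNReal.ofReal_mul (D.nonneg ξ)]
        gcongr
        refine (h z ξ hξ.symm).trans (le_of_eq ?_)
        rw [mul_comm]
    _ = ENNReal.ofReal (∫ ξ, n ξ * rs ‖z - ξ‖ * C) := by
        refine (ofReal_integral_eq_lintegral_ofReal ((D.integrable_rs z).mul_const C)
          (Eventually.of_forall fun ξ => ?_)).symm
        exact mul_nonneg (mul_nonneg (D.nonneg ξ) (rs_nonneg _)) hC.le
    _ ≤ _ := by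
        refine ENNReal.ofReal_le_ofReal ?_
        rw [integral_mul_const, mul_comm]
        gcongr
        exact (D.riesz z).trans (le_abs_self _)

lemma inv_kato (R : ℝ) : ∃ C : ℝ, 0 ≤ C ∧
    ∀ z : ℂ, ∫⁻ ζ in ball z R, ENNReal.ofReal (‖z - ζ‖⁻¹) ≤ ENNReal.ofReal C := by
  set k : ℂ → ℝ := (ball (0 : ℂ) R).indicator fun w => ‖w‖⁻¹ with hk
  have hki : Integrable k := ball_ind_integrable locInt_norm_inv _
  have hk0 : ∀ w, 0 ≤ k w := fun w => indicator_nonneg (fun w _ => by positivity) _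
  refine ⟨∫ w, k w, integral_nonneg hk0, fun z => ?_⟩
  calc _ ≤ ∫⁻ ζ in ball z R, ENNReal.ofReal (k (z - ζ)) := by
        refine setLIntegral_mono' measurableSet_ball fun ζ hζ => ENNReal.ofReal_le_ofReal ?_
        rw [mem_ball_iff_norm, norm_sub_rev] at hζ
        rw [hk, indicator_of_mem (by rwa [mem_ball_zero_iff])]
    _ ≤ ∫⁻ ζ, ENNReal.ofReal (k (z - ζ)) := setLIntegral_le_lintegral _ _
    _ = ENNReal.ofReal (∫ ζ, k (z - ζ)) :=
        (ofReal_integral_eq_lintegral_ofReal (hki.comp_sub_left z)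
          (Eventually.of_forall fun _ => hk0 _)).symm
    _ = _ := by rw [integral_sub_left_eq_self k]

lemma lattice_card (r : ℝ) : ∃ N : ℕ, ∀ (F : Finset (ℤ × ℤ)) (z : ℂ),
    (F.filter fun q => ‖z - ctr q‖ ≤ r).card ≤ N := by
  set L : ℤ := ⌈r / 50⌉ + 1 with hL
  refine ⟨(L + 1).toNat * (L + 1).toNat, fun F z => ?_⟩
  set a : ℤ := ⌊(z.re - r) / 100⌋ with ha
  set b : ℤ := ⌊(z.im - r) / 100⌋ with hb
  have hsub : (F.filter fun q => ‖z - ctr q‖ ≤ r) ⊆ Finset.Icc a (a + L) ×ˢ Finset.Icc b (b + L) := by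
    intro q hq
    have h := (Finset.mem_filter.1 hq).2
    have key : ∀ (x : ℝ) (m : ℤ), |x - 100 * m| ≤ r → ⌊(x - r) / 100⌋ ≤ m ∧ m ≤ ⌊(x - r) / 100⌋ + L := by
      intro x m hm
      have h := abs_le.1 hm
      constructor
      · have : ((⌊(x - r) / 100⌋ : ℤ) : ℝ) ≤ m := (Int.floor_le _).trans (by linarith)
        exact_mod_cast this
      · have h1 := Int.lt_floor_add_one ((x - r) / 100)
        have h2 := Int.le_ceil (r / 50)
        have : (m : ℝ) ≤ ((⌊(x - r) / 100⌋ + L : ℤ) : ℝ) := by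
          rw [hL]; push_cast; linarith
        exact_mod_cast this
    have k1 := key z.re q.1 ((Complex.abs_re_le_norm (z - ctr q)).trans h)
    have k2 := key z.im q.2 ((Complex.abs_im_le_norm (z - ctr q)).trans h)
    simp only [Finset.mem_product, Finset.mem_Icc]
    exact ⟨k1, k2⟩
  refine (Finset.card_le_card hsub).trans (le_of_eq ?_)
  rw [Finset.card_product, Int.card_Icc, Int.card_Icc]
  congr 2 <;> ring

/-- The function `1 + B` has bounded Kato norm. -/
lemma B_kato (C₀ R : ℝ) (hR : 0 < R) : ∃ C : ℝ, 0 < C ∧ ∀ {ρ : ℝ} (X : Comp C₀ ρ) (z : ℂ),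
    ∫⁻ ζ in ball z R, ENNReal.ofReal ((1 + X.B ζ) * ‖z - ζ‖⁻¹) ≤ ENNReal.ofReal C := by
  obtain ⟨C1, hC1, h1⟩ := pot_kato C₀ R hR
  obtain ⟨C2, hC2, h2⟩ := inv_kato R
  obtain ⟨N, hN⟩ := lattice_card (1500 + R)
  refine ⟨C2 + N * C1 + 1, by positivity, fun X z => ?_⟩
  set F' := X.F.filter fun q => ‖z - ctr q‖ ≤ 1500 + R with hF'
  have hm : ∀ q, Measurable fun ζ => ENNReal.ofReal (pot (X.n q) ζ * ‖z - ζ‖⁻¹) := fun q => by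
    have := (continuous_pot (X.dens q)).measurable
    fun_prop
  calc _ ≤ ∫⁻ ζ in ball z R, (ENNReal.ofReal (‖z - ζ‖⁻¹) +
          ∑ q ∈ F', ENNReal.ofReal (pot (X.n q) ζ * ‖z - ζ‖⁻¹)) := by
        refine setLIntegral_mono' measurableSet_ball fun ζ hζ => ?_
        rw [mem_ball_iff_norm, norm_sub_rev] at hζ
        have h0 : ∀ q ∈ F', 0 ≤ pot (X.n q) ζ * ‖z - ζ‖⁻¹ := fun q _ =>
          mul_nonneg ((X.dens q).pot_nonneg _) (by positivity)
        rw [← ENNReal.ofReal_sum_of_nonneg h0, ← ENNReal.ofReal_add (by positivity)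
          (Finset.sum_nonneg h0), ← Finset.sum_mul]
        refine ENNReal.ofReal_le_ofReal ?_
        rw [add_mul, one_mul]
        gcongr
        refine Finset.sum_le_sum_of_subset_of_nonneg ?_ fun q _ _ => (X.dens q).pot_nonneg _
        intro q hq
        rw [Finset.mem_filter] at hq ⊢
        refine ⟨hq.1, ?_⟩
        have := norm_add_le (z - ζ) (ζ - ctr q)
        rw [sub_add_sub_cancel] at this; linarith [hq.2]
    _ = (∫⁻ ζ in ball z R, ENNReal.ofReal (‖z - ζ‖⁻¹)) +
          ∑ q ∈ F', ∫⁻ ζ in ball z R, ENNReal.ofReal (pot (X.n q) ζ * ‖z - ζ‖⁻¹) := by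
        rw [lintegral_add_right _ (Finset.measurable_fun_sum _ fun q _ => hm q),
          lintegral_finsetSum _ fun q _ => hm q]
    _ ≤ ENNReal.ofReal C2 + ∑ q ∈ F', ENNReal.ofReal C1 := by
        gcongr with q hq
        · exact h2 z
        · exact h1 _ _ (X.dens q) z
    _ ≤ ENNReal.ofReal C2 + N * ENNReal.ofReal C1 := by
        rw [Finset.sum_const, nsmul_eq_mul]
        gcongr
        exact_mod_cast hN X.F z
    _ ≤ _ := by
        rw [← ENNReal.ofReal_natCast, ← ENNReal.ofReal_mul (by positivity),
          ← ENNReal.ofReal_add hC2 (by positivity)]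
        exact ENNReal.ofReal_le_ofReal (by linarith)

end Landis

/-! ### Oscillation of a Cauchy transform -/

namespace Landis
open MeasureTheory Filter Topology Set
open scoped ContDiff ComplexConjugate Convolution ENNReal

/-- If the unit averages of `h` are bounded then integration against a slowly varying weight is
controlled by the integral of the weight. -/
lemma tonelli_avg {h W W' : ℂ → ℝ≥0∞} (hh : Measurable h) (hW : Measurable W)
    (A : ℝ≥0∞) (hA : ∀ x, ∫⁻ ζ in ball x 1, h ζ ≤ A) (hWW : ∀ x ζ : ℂ, ‖x - ζ‖ < 1 → W ζ ≤ W' x)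
    (hW' : Measurable W') :
    volume (ball (0 : ℂ) 1) * ∫⁻ ζ, h ζ * W ζ ≤ A * ∫⁻ x, W' x := by
  set S : Set (ℂ × ℂ) := {p | ‖p.1 - p.2‖ < 1} with hS
  have hSm : MeasurableSet S := measurableSet_lt (by fun_prop) measurable_const
  have hm : Measurable (Function.uncurry fun (x ζ : ℂ) => S.indicator (fun p => h p.2 * W p.2) (x, ζ)) :=
    ((hh.comp measurable_snd).mul (hW.comp measurable_snd)).indicator hSm
  have e1 : ∀ ζ, ∫⁻ x, S.indicator (fun p => h p.2 * W p.2) (x, ζ) =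
      volume (ball (0 : ℂ) 1) * (h ζ * W ζ) := by
    intro ζ
    have : (fun x => S.indicator (fun p => h p.2 * W p.2) (x, ζ)) =
        (ball ζ 1).indicator fun _ => h ζ * W ζ := by
      ext x
      by_cases hx : ‖x - ζ‖ < 1
      · rw [indicator_of_mem (show (x, ζ) ∈ S from hx), indicator_of_mem (mem_ball_iff_norm.2 hx)]
      · rw [indicator_of_notMem (show (x, ζ) ∉ S from hx),
          indicator_of_notMem (fun h => hx (mem_ball_iff_norm.1 h))]
    rw [this, lintegral_indicator_const measurableSet_ball, mul_comm,
      Measure.addHaar_ball_center]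
  calc _ = ∫⁻ ζ, ∫⁻ x, S.indicator (fun p => h p.2 * W p.2) (x, ζ) := by
        simp_rw [e1]
        rw [lintegral_const_mul _ (show Measurable fun ζ => h ζ * W ζ from hh.mul hW)]
    _ = ∫⁻ x, ∫⁻ ζ, S.indicator (fun p => h p.2 * W p.2) (x, ζ) :=
        (lintegral_lintegral_swap hm.aemeasurable).symm
    _ ≤ ∫⁻ x, A * W' x := by
        refine lintegral_mono fun x => ?_
        calc _ ≤ ∫⁻ ζ, (ball x 1).indicator (fun ζ => h ζ * W' x) ζ := by
              refine lintegral_mono fun ζ => ?_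
              by_cases hx : ‖x - ζ‖ < 1
              · rw [indicator_of_mem (show (x, ζ) ∈ S from hx),
                  indicator_of_mem (by rwa [mem_ball_iff_norm, norm_sub_rev])]
                simp only
                gcongr
                exact hWW x ζ hx
              · rw [indicator_of_notMem (show (x, ζ) ∉ S from hx)]
                exact zero_le
          _ = (∫⁻ ζ in ball x 1, h ζ) * W' x := by
              rw [lintegral_indicator measurableSet_ball, lintegral_mul_const _ hh]
          _ ≤ _ := by gcongr; exact hA x
    _ = _ := lintegral_const_mul _ hW'

lemma sqk_le {ρ : ℝ} {w : ℂ} (h : ‖w‖ < ρ) : sqk ρ w = ((1 + ‖w‖) ^ 2)⁻¹ :=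
  indicator_of_mem (s := Iio ρ) h _

/-- Oscillation of a Cauchy transform whose density is dominated by `1 + B`. -/
lemma T_osc (C₀ : ℝ) : ∃ C : ℝ, 0 < C ∧ ∀ {ρ : ℝ} (X : Comp C₀ ρ) (g : ℂ → ℂ) (a : ℝ),
    1000 ≤ ρ → 0 ≤ a → Continuous g → (∀ ζ, 4 * ρ ≤ ‖ζ‖ → g ζ = 0) →
    (∀ ζ, ‖g ζ‖ ≤ a * (1 + X.B ζ)) → ∀ z z', ‖z‖ ≤ 4 * ρ → ‖z - z'‖ ≤ 10 →
    ‖T g z - T g z'‖ ≤ C * a * Real.log ρ := by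
  obtain ⟨C1, hC1, h1⟩ := B_kato C₀ 4000 (by norm_num)
  obtain ⟨C2, hC2, h2⟩ := sqk_integral
  set v : ℝ := (volume : Measure ℂ).real (ball 0 1) with hv
  have hv0 : 0 < v := by
    rw [hv, Measure.real, ENNReal.toReal_pos_iff]
    exact ⟨measure_ball_pos _ _ one_pos, measure_ball_lt_top⟩
  refine ⟨C1 + C1 + 80 * (C1 * (8 * C2) / v), by positivity, ?_⟩
  intro ρ X g a hρ ha hg hg0 hgB z z' hz hzz
  have hlog : 1 ≤ Real.log ρ := by
    rw [Real.le_log_iff_exp_le (by linarith)]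
    linarith [Real.exp_one_lt_d9]
  -- The part of the integral near `z` is controlled by the Kato norm of `g`, the far part through
  -- unit averages of `|g|` against the inverse square kernel.
  have hkato : ∀ x, ∫⁻ ζ in ball x 4000, ‖g ζ‖ₑ * ENNReal.ofReal (‖x - ζ‖⁻¹) ≤
      ENNReal.ofReal (a * C1) := by
    intro x
    calc _ ≤ ∫⁻ ζ in ball x 4000, ENNReal.ofReal a * ENNReal.ofReal ((1 + X.B ζ) * ‖x - ζ‖⁻¹) := by
          refine setLIntegral_mono' measurableSet_ball fun ζ _ => ?_
          rw [← ofReal_norm, ← ENNReal.ofReal_mul (norm_nonneg _), ← ENNReal.ofReal_mul ha]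
          refine ENNReal.ofReal_le_ofReal ?_
          rw [← mul_assoc]
          gcongr
          exact hgB ζ
      _ = ENNReal.ofReal a * ∫⁻ ζ in ball x 4000, ENNReal.ofReal ((1 + X.B ζ) * ‖x - ζ‖⁻¹) :=
          lintegral_const_mul' _ _ (by simp)
      _ ≤ _ := by
          rw [ENNReal.ofReal_mul ha]
          gcongr
          exact h1 X x
  have havg : ∀ x, ∫⁻ ζ in ball x 1, ‖g ζ‖ₑ ≤ ENNReal.ofReal (a * C1) := by
    intro x
    refine le_trans ?_ (hkato x)
    have hae : ∀ᵐ ζ : ℂ ∂(volume.restrict (ball x 1)), ζ ≠ x :=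
      ae_restrict_of_ae (by simp [ae_iff, measure_singleton])
    calc _ ≤ ∫⁻ ζ in ball x 1, ‖g ζ‖ₑ * ENNReal.ofReal (‖x - ζ‖⁻¹) := by
          refine lintegral_mono_ae ?_
          filter_upwards [hae, ae_restrict_mem measurableSet_ball] with ζ hne hζ
          refine le_mul_of_one_le_right zero_le ?_
          rw [mem_ball_iff_norm, norm_sub_rev] at hζ
          rw [ENNReal.one_le_ofReal]
          exact (one_le_inv₀ (norm_pos_iff.2 (sub_ne_zero.2 hne.symm))).2 hζ.le
      _ ≤ _ := lintegral_mono_set (ball_subset_ball (by norm_num))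
  have hgm : Measurable fun ζ => ‖g ζ‖ₑ := hg.measurable.enorm
  have hsm : ∀ r, Measurable (sqk r) := fun r => by
    unfold sqk
    exact (Measurable.indicator (by fun_prop) measurableSet_Iio).comp measurable_norm
  have hfar : ∫⁻ ζ, ‖g ζ‖ₑ * ENNReal.ofReal (sqk (8 * ρ) (z - ζ)) ≤
      ENNReal.ofReal (a * (C1 * (8 * C2) / v) * Real.log ρ) := by
    have h := tonelli_avg hgm (W := fun ζ => ENNReal.ofReal (sqk (8 * ρ) (z - ζ)))
      (W' := fun x => ENNReal.ofReal (4 * sqk (9 * ρ) (z - x)))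
      (by have := hsm (8 * ρ); fun_prop) (ENNReal.ofReal (a * C1)) havg (by
        intro x ζ hx
        refine ENNReal.ofReal_le_ofReal ?_
        by_cases hb : ‖z - ζ‖ < 8 * ρ
        · have h3 := norm_sub_le (z - ζ) (x - ζ)
          rw [sub_sub_sub_cancel_right] at h3
          rw [sqk_le hb, sqk_le (by linarith : ‖z - x‖ < 9 * ρ), ← div_eq_mul_inv, inv_eq_one_div,
            div_le_div_iff₀ (by positivity) (by positivity)]
          have h5 := norm_nonneg (z - x)
          have h6 := norm_nonneg (z - ζ)
          have h7 : (1 + ‖z - x‖) ^ 2 ≤ (2 * (1 + ‖z - ζ‖)) ^ 2 :=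
            pow_le_pow_left₀ (by linarith) (by linarith) 2
          linarith
        · rw [sqk, indicator_of_notMem (show ‖z - ζ‖ ∉ Iio (8 * ρ) from hb)]
          have := sqk_nonneg (9 * ρ) (z - x)
          positivity) (by have := hsm (9 * ρ); fun_prop)
    have hW' : ∫⁻ x, ENNReal.ofReal (4 * sqk (9 * ρ) (z - x)) ≤
        ENNReal.ofReal (8 * C2 * Real.log ρ) := by
      rw [← ofReal_integral_eq_lintegral_ofReal (((sqk_integrable _).comp_sub_left z).const_mul 4)
        (Eventually.of_forall fun x => by have := sqk_nonneg (9 * ρ) (z - x); positivity)]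
      refine ENNReal.ofReal_le_ofReal ?_
      rw [integral_const_mul, integral_sub_left_eq_self (sqk (9 * ρ))]
      have h3 := h2 (9 * ρ) (by linarith)
      have h4 : Real.log (9 * ρ) ≤ 2 * Real.log ρ := by
        rw [← Real.log_rpow (by linarith)]
        refine Real.log_le_log (by linarith) ?_
        norm_cast
        nlinarith
      nlinarith
    have hvv : volume (ball (0 : ℂ) 1) = ENNReal.ofReal v := by
      rw [hv, Measure.real, ENNReal.ofReal_toReal measure_ball_lt_top.ne]
    rw [hvv] at h
    have h5 : ENNReal.ofReal v * ∫⁻ ζ, ‖g ζ‖ₑ * ENNReal.ofReal (sqk (8 * ρ) (z - ζ)) ≤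
        ENNReal.ofReal v * ENNReal.ofReal (a * (C1 * (8 * C2) / v) * Real.log ρ) := by
      refine h.trans ((mul_le_mul_right hW' _).trans (le_of_eq ?_))
      rw [← ENNReal.ofReal_mul (by positivity), ← ENNReal.ofReal_mul hv0.le]
      congr 1
      field_simp
    exact (ENNReal.mul_le_mul_iff_right (by simpa using hv0) (by simp)).1 h5
  have hcs : HasCompactSupport g := hcs_of_zero hg0
  have e : T g z - T g z' = ∫ ζ, g ζ * ((z - ζ)⁻¹ - (z' - ζ)⁻¹) := by
    simp_rw [mul_sub]
    rw [integral_sub (T_integrable hg hcs z) (T_integrable hg hcs z')]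
    rfl
  have hRHS : 0 ≤ (C1 + C1 + 80 * (C1 * (8 * C2) / v)) * a * Real.log ρ := by positivity
  have m1 : ∀ x : ℂ, Measurable ((ball x 4000).indicator
      fun ζ => ‖g ζ‖ₑ * ENNReal.ofReal (‖x - ζ‖⁻¹)) := fun x =>
    Measurable.indicator (by fun_prop) measurableSet_ball
  refine (ENNReal.ofReal_le_ofReal_iff hRHS).1 ?_
  rw [ofReal_norm, e]
  calc _ ≤ ∫⁻ ζ, ‖g ζ * ((z - ζ)⁻¹ - (z' - ζ)⁻¹)‖ₑ := enorm_integral_le_lintegral_enorm _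
    _ ≤ ∫⁻ ζ, (((ball z 4000).indicator (fun ζ => ‖g ζ‖ₑ * ENNReal.ofReal (‖z - ζ‖⁻¹)) ζ +
          (ball z' 4000).indicator (fun ζ => ‖g ζ‖ₑ * ENNReal.ofReal (‖z' - ζ‖⁻¹)) ζ) +
          ENNReal.ofReal 80 * (‖g ζ‖ₑ * ENNReal.ofReal (sqk (8 * ρ) (z - ζ)))) := by
        refine lintegral_mono fun ζ => ?_
        rw [enorm_mul]
        by_cases h4 : 4 * ρ ≤ ‖ζ‖
        · simp [hg0 ζ h4]
        push Not at h4
        by_cases hn : ‖z - ζ‖ < 3000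
        · have hn' : ‖z' - ζ‖ < 4000 := by
            have := norm_sub_le (z - ζ) (z - z')
            rw [sub_sub_sub_cancel_left] at this
            linarith
          rw [indicator_of_mem (by rw [mem_ball_iff_norm, norm_sub_rev]; linarith),
            indicator_of_mem (by rwa [mem_ball_iff_norm, norm_sub_rev]), ← mul_add]
          refine le_add_right ?_
          gcongr
          rw [← ENNReal.ofReal_add (by positivity) (by positivity), ← ofReal_norm, ← norm_inv,
            ← norm_inv]
          exact ENNReal.ofReal_le_ofReal (norm_sub_le _ _)
        · push Not at hn
          refine le_add_left ?_
          rw [mul_left_comm]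
          gcongr
          rw [← ENNReal.ofReal_mul (by norm_num), ← ofReal_norm]
          refine ENNReal.ofReal_le_ofReal ?_
          have hn8 : ‖z - ζ‖ < 8 * ρ := by linarith [norm_sub_le z ζ]
          have hn' : ‖z - ζ‖ / 2 ≤ ‖z' - ζ‖ := by
            have := norm_add_le (z' - ζ) (z - z')
            rw [add_comm, sub_add_sub_cancel, add_comm] at this
            linarith
          have p1 : 0 < ‖z - ζ‖ := by linarith
          have p2 : 0 < ‖z' - ζ‖ := by linarith
          rw [sqk_le hn8, inv_sub_inv (norm_pos_iff.1 p1) (norm_pos_iff.1 p2), norm_div, norm_mul,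
            sub_sub_sub_cancel_right, norm_sub_rev, ← div_eq_mul_inv,
            div_le_div_iff₀ (by positivity) (by positivity)]
          calc ‖z - z'‖ * (1 + ‖z - ζ‖) ^ 2 ≤ 10 * (2 * ‖z - ζ‖) ^ 2 := by gcongr; linarith
            _ = 80 * (‖z - ζ‖ * (‖z - ζ‖ / 2)) := by ring
            _ ≤ _ := by gcongr
    _ = (∫⁻ ζ in ball z 4000, ‖g ζ‖ₑ * ENNReal.ofReal (‖z - ζ‖⁻¹)) +
          (∫⁻ ζ in ball z' 4000, ‖g ζ‖ₑ * ENNReal.ofReal (‖z' - ζ‖⁻¹)) +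
          ENNReal.ofReal 80 * ∫⁻ ζ, ‖g ζ‖ₑ * ENNReal.ofReal (sqk (8 * ρ) (z - ζ)) := by
        rw [lintegral_add_left (show Measurable fun ζ =>
            (ball z 4000).indicator (fun ζ => ‖g ζ‖ₑ * ENNReal.ofReal (‖z - ζ‖⁻¹)) ζ +
            (ball z' 4000).indicator (fun ζ => ‖g ζ‖ₑ * ENNReal.ofReal (‖z' - ζ‖⁻¹)) ζ
            from (m1 z).add (m1 z')), lintegral_add_left (m1 z),
          lintegral_indicator measurableSet_ball, lintegral_indicator measurableSet_ball,
          lintegral_const_mul' _ _ (by simp)]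
    _ ≤ ENNReal.ofReal (a * C1) + ENNReal.ofReal (a * C1) +
          ENNReal.ofReal 80 * ENNReal.ofReal (a * (C1 * (8 * C2) / v) * Real.log ρ) := by
        gcongr
        · exact hkato z
        · exact hkato z'
    _ ≤ _ := by
        rw [← ENNReal.ofReal_mul (by norm_num), ← ENNReal.ofReal_add (by positivity) (by positivity),
          ← ENNReal.ofReal_add (by positivity) (by positivity)]
        refine ENNReal.ofReal_le_ofReal ?_
        have : 0 ≤ a * C1 := by positivity
        nlinarith

end Landis

/-! ### The positive multiplier and the potential -/

namespace Landis
open MeasureTheory Filter Topology Set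
open scoped ContDiff ComplexConjugate Convolution ENNReal

namespace Comp
variable {C₀ ρ : ℝ} (X : Comp C₀ ρ)

lemma N_sub {g g' : ℂ → ℝ} (hg : ContDiff ℝ 1 g) (hg' : ContDiff ℝ 1 g')
    (h0 : ∀ ζ, 4 * ρ ≤ ‖ζ‖ → g ζ = 0) (h0' : ∀ ζ, 4 * ρ ≤ ‖ζ‖ → g' ζ = 0) (z : ℂ) :
    X.N g z - X.N g' z = X.N (fun ζ => g ζ - g' ζ) z := by
  have hA : ∀ q ∈ X.F, X.A (fun ζ => g ζ - g' ζ) q = X.A g q - X.A g' q := by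
    intro q hq
    unfold A
    rw [← integral_sub (X.gw_integrable hg.continuous h0 hq) (X.gw_integrable hg'.continuous h0' hq)]
    simp_rw [sub_mul]
  have hG : X.G (fun ζ => g ζ - g' ζ) = fun ξ => X.G g ξ - X.G g' ξ := by
    ext ξ
    unfold G
    have : ∑ q ∈ X.F, X.A (fun ζ => g ζ - g' ζ) q * X.n q ξ =
        ∑ q ∈ X.F, X.A g q * X.n q ξ - ∑ q ∈ X.F, X.A g' q * X.n q ξ := by
      rw [← Finset.sum_sub_distrib]
      exact Finset.sum_congr rfl fun q hq => by rw [hA q hq, sub_mul]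
    rw [this]; ring
  unfold N
  rw [hG, ← mul_sub]
  congr 1
  unfold Lp
  rw [← integral_sub]
  · simp_rw [sub_mul]
  · exact Lp_integrable (X.G_contDiff hg).continuous (X.G_hcs (hcs_of_zero h0)) z
  · exact Lp_integrable (X.G_contDiff hg').continuous (X.G_hcs (hcs_of_zero h0')) z

end Comp

/-- A positive multiplier `1 + η` solving `Δ(1 + η) = V (1 + η)` up to a small error and up to a
combination of the compensating densities. It is obtained by finitely many Picard iterations of
the compensated potential, whose norm is of order `δ log ρ`. -/
lemma exists_mult (C₀ : ℝ) (hC₀ : 0 ≤ C₀) : ∃ c C : ℝ, 0 < c ∧ 0 < C ∧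
    ∀ {ρ : ℝ} (X : Comp C₀ ρ) (V : ℂ → ℝ) (δ τ : ℝ), 1000 ≤ ρ → 0 ≤ δ → δ * Real.log ρ ≤ c → 0 < τ →
    ContDiff ℝ 1 V → (∀ z, |V z| ≤ 2 * δ) →
    ∃ (η : ℂ → ℝ) (A : ℤ × ℤ → ℝ), ContDiff ℝ 2 η ∧ (∀ z, |η z| ≤ 1 / 2) ∧
      (∀ q ∈ X.F, |A q| ≤ C * δ) ∧ (∀ z, ‖gr η z‖ ≤ C * δ * (1 + X.B z)) ∧
      ∀ z, ‖z‖ ≤ 7 / 2 * ρ → |lap η z - (V z * (1 + η z) - ∑ q ∈ X.F, A q * X.n q z)| ≤ τ := by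
  obtain ⟨C1, hC1, hN⟩ := Comp.N_le C₀ hC₀
  obtain ⟨C2, hC2, hGN⟩ := Comp.gr_N_le
  obtain ⟨C3, hC3, hA⟩ := Comp.A_le
  refine ⟨1 / (6 * C1), 3 * (C2 + C3), by positivity, by positivity, ?_⟩
  intro ρ X V δ τ hρ hδ hδρ hτ hV hVb
  obtain ⟨κ, hκ, hκ01, hκ1, hκ0⟩ := exists_cutoff (a := 7 / 2 * ρ) (b := 4 * ρ) (by linarith)
    (by linarith)
  have hlog : 0 ≤ Real.log ρ := Real.log_nonneg (by linarith)
  have hsm : C1 * (3 * δ) * Real.log ρ ≤ 1 / 2 := by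
    rw [le_div_iff₀ (by positivity)] at hδρ
    linarith
  set S : (ℂ → ℝ) → ℂ → ℝ := fun η z => κ z * V z * (1 + η z) with hS
  have hS1 : ∀ η, ContDiff ℝ 2 η → ContDiff ℝ 1 (S η) := fun η h =>
    ((hκ.of_le (by norm_num)).mul hV).mul (contDiff_const.add (h.of_le (by norm_num)))
  have hS0 : ∀ η ζ, 4 * ρ ≤ ‖ζ‖ → S η ζ = 0 := fun η ζ h => by simp [hS, hκ0 ζ h]
  have hκV : ∀ ζ, |κ ζ * V ζ| ≤ 2 * δ := fun ζ => by
    rw [abs_mul, abs_of_nonneg (hκ01 ζ).1]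
    calc κ ζ * |V ζ| ≤ 1 * (2 * δ) := by
          gcongr
          · exact (hκ01 ζ).2
          · exact hVb ζ
      _ = _ := one_mul _
  have hSb : ∀ η, (∀ z, |η z| ≤ 1 / 2) → ∀ ζ, |S η ζ| ≤ 3 * δ := fun η h ζ => by
    simp only [hS]
    rw [abs_mul]
    have : |1 + η ζ| ≤ 3 / 2 := by
      have := abs_add_le 1 (η ζ)
      rw [abs_one] at this
      linarith [h ζ]
    calc _ ≤ 2 * δ * (3 / 2) := by
          gcongr
          exact hκV ζ
      _ = _ := by ring
  -- Picard iterates `η₀ = 0`, `η_{j+1} = N (κ V (1 + η_j))`.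
  obtain ⟨η, hη0, hηs⟩ : ∃ η : ℕ → ℂ → ℝ, η 0 = (fun _ => 0) ∧ ∀ j, η (j + 1) = X.N (S (η j)) :=
    ⟨fun j => Nat.rec (fun _ => 0) (fun _ e => X.N (S e)) j, rfl, fun _ => rfl⟩
  have hmain : ∀ j, ContDiff ℝ 2 (η j) ∧ ∀ z, |η j z| ≤ 1 / 2 := by
    intro j
    induction j with
    | zero =>
      rw [hη0]
      exact ⟨contDiff_const, fun z => by simp⟩
    | succ j ih =>
      rw [hηs]
      exact ⟨X.N_contDiff (hS1 _ ih.1) (hcs_of_zero (hS0 _)), fun z =>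
        (hN X _ _ hρ (hS1 _ ih.1).continuous (hS0 _) (hSb _ ih.2) z).trans hsm⟩
  have hdiff : ∀ j z, |η (j + 1) z - η j z| ≤ (1 / 2) ^ j := by
    intro j
    induction j with
    | zero =>
      intro z
      rw [hη0]
      simp only [sub_zero, pow_zero]
      linarith [(hmain (0 + 1)).2 z]
    | succ j ih =>
      intro z
      have hN2 := X.N_sub (hS1 _ (hmain (j + 1)).1) (hS1 _ (hmain j).1) (hS0 _) (hS0 _) z
      rw [← hηs (j + 1), ← hηs j] at hN2
      rw [hN2]
      have hb : ∀ ζ, |S (η (j + 1)) ζ - S (η j) ζ| ≤ 2 * δ * (1 / 2) ^ j := fun ζ => by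
        have e : S (η (j + 1)) ζ - S (η j) ζ = κ ζ * V ζ * (η (j + 1) ζ - η j ζ) := by
          simp only [hS]; ring
        rw [e, abs_mul]
        gcongr
        · exact hκV ζ
        · exact ih ζ
      have := hN X (fun ζ => S (η (j + 1)) ζ - S (η j) ζ) _ hρ
        ((hS1 _ (hmain (j + 1)).1).sub (hS1 _ (hmain j).1)).continuous
        (fun ζ h => by rw [hS0 _ ζ h, hS0 _ ζ h, sub_zero]) hb z
      refine this.trans ?_
      have hp : (0 : ℝ) ≤ (1 / 2) ^ j := by positivity
      calc _ = (C1 * (3 * δ) * Real.log ρ) * ((2 / 3) * (1 / 2) ^ j) := by ring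
        _ ≤ 1 / 2 * (1 * (1 / 2) ^ j) := by gcongr; norm_num
        _ = _ := by rw [pow_succ]; ring
  obtain ⟨J, hJ⟩ := exists_pow_lt_of_lt_one (show 0 < τ / (2 * δ + 1) by positivity)
    (show (1 / 2 : ℝ) < 1 by norm_num)
  refine ⟨η (J + 1), X.A (S (η J)), (hmain (J + 1)).1, (hmain (J + 1)).2, fun q hq => ?_, fun z => ?_, fun z hz => ?_⟩
  · refine (hA X _ _ (hS1 _ (hmain J).1).continuous (hS0 _) (hSb _ (hmain J).2) q hq).trans ?_
    nlinarith [mul_nonneg hC2.le hδ]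
  · rw [hηs]
    refine (hGN X _ _ (hS1 _ (hmain J).1) (hS0 _) (hSb _ (hmain J).2) z).trans ?_
    have := X.B_nonneg z
    refine mul_le_mul_of_nonneg_right ?_ (by linarith)
    nlinarith [mul_nonneg hC3.le hδ]
  · have e : lap (η (J + 1)) z = V z * (1 + η J z) - ∑ q ∈ X.F, X.A (S (η J)) q * X.n q z := by
      rw [hηs, X.lap_N (hS1 _ (hmain J).1) (hcs_of_zero (hS0 _))]
      simp only [Comp.G, hS, hκ1 z hz, one_mul]
    rw [e]
    have e2 : V z * (1 + η J z) - ∑ q ∈ X.F, X.A (S (η J)) q * X.n q z -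
        (V z * (1 + η (J + 1) z) - ∑ q ∈ X.F, X.A (S (η J)) q * X.n q z) =
        -(V z * (η (J + 1) z - η J z)) := by ring
    rw [e2, abs_neg, abs_mul]
    rw [lt_div_iff₀ (by positivity)] at hJ
    have hp : (0 : ℝ) < (1 / 2) ^ J := by positivity
    calc _ ≤ 2 * δ * (1 / 2) ^ J := by
          gcongr
          · exact hVb z
          · exact hdiff J z
      _ ≤ _ := by nlinarith

/-- A `C¹` potential `V` with `Δ U` close to `V U`. -/
lemma exists_potential {U : ℂ → ℝ} (hU : ContDiff ℝ 2 U) {δ τ : ℝ} (hδ : 0 < δ) (hτ : 0 < τ)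
    (hl : ∀ z, |lap U z| ≤ δ * |U z|) {K : Set ℂ} (hK : IsCompact K) : ∃ V : ℂ → ℝ,
    ContDiff ℝ 1 V ∧ (∀ z, |V z| ≤ 2 * δ) ∧ ∀ z ∈ K, |lap U z - V z * U z| ≤ τ := by
  obtain ⟨m, hm⟩ := hK.exists_bound_of_continuousOn hU.continuous.continuousOn
  set m' := |m| + 1 with hm'
  have hm0 : 0 < m' := by positivity
  set s := τ / δ with hs
  have hs0 : 0 < s := by positivity
  -- A regularisation of the quotient `ΔU / U`; the error `|ΔU - W U|` is at most `δ s / 2`.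
  set W : ℂ → ℝ := fun z => lap U z * U z / (U z ^ 2 + s ^ 2) with hW
  have hden : ∀ z, 0 < U z ^ 2 + s ^ 2 := fun z => by positivity
  have hWc : Continuous W :=
    ((continuous_lap hU).mul hU.continuous).div₀ (by have := hU.continuous; fun_prop)
      fun z => (hden z).ne'
  have hWb : ∀ z, |W z| ≤ δ := fun z => by
    simp only [hW]
    rw [abs_div, abs_mul, abs_of_pos (hden z), div_le_iff₀ (hden z)]
    have := mul_le_mul_of_nonneg_right (hl z) (abs_nonneg (U z))
    have e := abs_mul_abs_self (U z)
    nlinarith [mul_nonneg hδ.le (sq_nonneg s)]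
  have hWe : ∀ z, |lap U z - W z * U z| ≤ τ / 2 := fun z => by
    have e : lap U z - W z * U z = lap U z * s ^ 2 / (U z ^ 2 + s ^ 2) := by
      simp only [hW]
      have := (hden z).ne'
      field_simp
      ring
    rw [e, abs_div, abs_mul, abs_of_pos (hden z), div_le_iff₀ (hden z), abs_of_nonneg (sq_nonneg s)]
    have h1 := mul_le_mul_of_nonneg_right (hl z) (sq_nonneg s)
    have h2 : τ = δ * s := by rw [hs]; field_simp
    rw [h2, ← sq_abs (U z)]
    nlinarith [mul_nonneg (mul_nonneg hδ.le hs0.le) (sq_nonneg (|U z| - s))]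
  set e : ℝ := min δ (τ / (2 * m')) with he
  have he0 : 0 < e := by positivity
  obtain ⟨V, hV, hVW⟩ := hWc.exists_contDiff_approx 1 (ε := fun _ => e) (by fun_prop) fun _ => he0
  have hVW' : ∀ z, |V z - W z| ≤ e := fun z => by
    have := hVW.1 z
    rw [Real.dist_eq] at this
    exact this.le
  refine ⟨V, hV, fun z => ?_, fun z hz => ?_⟩
  · have := abs_sub_abs_le_abs_sub (V z) (W z)
    linarith [hVW' z, min_le_left δ (τ / (2 * m')), hWb z]
  · have e1 : lap U z - V z * U z = (lap U z - W z * U z) - (V z - W z) * U z := by ring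
    have e2 : |(V z - W z) * U z| ≤ τ / 2 := by
      rw [abs_mul]
      have := hm z hz
      rw [Real.norm_eq_abs] at this
      calc _ ≤ τ / (2 * m') * m' := by
            gcongr
            · exact (hVW' z).trans (min_le_right _ _)
            · linarith [le_abs_self m]
        _ = _ := by field_simp
    rw [e1]
    linarith [abs_sub (lap U z - W z * U z) ((V z - W z) * U z), hWe z]

end Landis

/-! ### Wirtinger calculus for the quotient -/

namespace Landis
open MeasureTheory Filter Topology Set
open scoped ContDiff ComplexConjugate Convolution ENNReal

lemma hasFDerivAt_ofReal {u : ℂ → ℝ} {z : ℂ} (hu : DifferentiableAt ℝ u z) :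
    HasFDerivAt (fun w => (u w : ℂ)) (Complex.ofRealCLM.comp (fderiv ℝ u z)) z :=
  HasFDerivAt.comp (g := fun x : ℝ => (x : ℂ)) z Complex.ofRealCLM.hasFDerivAt hu.hasFDerivAt

lemma dbar_ofReal {u : ℂ → ℝ} {z : ℂ} (hu : DifferentiableAt ℝ u z) :
    dbar (fun w => (u w : ℂ)) z = conj (gr u z) := by
  unfold dbar gr
  rw [(hasFDerivAt_ofReal hu).fderiv]
  have h2 : conj (2 : ℂ) = 2 := Complex.conj_ofNat 2
  simp [map_div₀, h2]

lemma gr_mul {u v : ℂ → ℝ} {z : ℂ} (hu : DifferentiableAt ℝ u z) (hv : DifferentiableAt ℝ v z) :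
    gr (fun w => u w * v w) z = u z * gr v z + gr u z * v z := by
  unfold gr
  have h : HasFDerivAt (fun w => u w * v w) _ z := hu.hasFDerivAt.mul hv.hasFDerivAt
  rw [h.fderiv]
  simp; ring

lemma gr_one_add {η : ℂ → ℝ} (z : ℂ) : gr (fun w => 1 + η w) z = gr η z := by
  unfold gr
  rw [fderiv_const_add]

lemma dbar_exp_neg {θ : ℂ → ℂ} {z : ℂ} (h : DifferentiableAt ℝ θ z) :
    dbar (fun w => Complex.exp (-θ w)) z = -Complex.exp (-θ z) * dbar θ z := by
  unfold dbar
  have h1 : HasFDerivAt (fun w => Complex.exp (-θ w)) _ z := h.hasFDerivAt.neg.cexp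
  rw [h1.fderiv]
  simp; ring

lemma dbar_add {f g : ℂ → ℂ} {z : ℂ} (hf : DifferentiableAt ℝ f z) (hg : DifferentiableAt ℝ g z) :
    dbar (fun w => f w + g w) z = dbar f z + dbar g z := by
  unfold dbar
  have h : HasFDerivAt (fun w => f w + g w) _ z := hf.hasFDerivAt.add hg.hasFDerivAt
  rw [h.fderiv]
  simp; ring

lemma dbar_sub {f g : ℂ → ℂ} {z : ℂ} (hf : DifferentiableAt ℝ f z) (hg : DifferentiableAt ℝ g z) :
    dbar (fun w => f w - g w) z = dbar f z - dbar g z := by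
  unfold dbar
  have h : HasFDerivAt (fun w => f w - g w) _ z := hf.hasFDerivAt.sub hg.hasFDerivAt
  rw [h.fderiv]
  simp; ring

/-- The logarithmic derivative `∂ log (1 + η)`. -/
noncomputable def lgr (η : ℂ → ℝ) (z : ℂ) : ℂ := gr η z / ((1 + η z : ℝ) : ℂ)

/-- The function `(1 + η) ∂(U / (1 + η))`. -/
noncomputable def rgr (U η : ℂ → ℝ) (z : ℂ) : ℂ := gr U z - U z * lgr η z

/-- A regularisation of `-lgr η * conj (rgr U η) / rgr U η`. -/
noncomputable def twist (U η : ℂ → ℝ) (t : ℝ) (z : ℂ) : ℂ :=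
  -lgr η z * conj (rgr U η z) ^ 2 / ((‖rgr U η z‖ ^ 2 + t ^ 2 : ℝ) : ℂ)

section
variable {U η : ℂ → ℝ} (hU : ContDiff ℝ 2 U) (hη : ContDiff ℝ 2 η) (hb : ∀ z, |η z| ≤ 1 / 2)
include hb

lemma one_add_pos (z : ℂ) : 1 / 2 ≤ 1 + η z ∧ 1 + η z ≤ 3 / 2 := by
  have := abs_le.1 (hb z)
  constructor <;> linarith

lemma one_add_ne (z : ℂ) : ((1 + η z : ℝ) : ℂ) ≠ 0 := by
  have := one_add_pos hb z
  rw [Ne, Complex.ofReal_eq_zero]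
  intro h; linarith

lemma norm_lgr_le (z : ℂ) : ‖lgr η z‖ ≤ 2 * ‖gr η z‖ := by
  have := one_add_pos hb z
  rw [lgr, norm_div, Complex.norm_real, Real.norm_eq_abs, abs_of_pos (by linarith),
    div_le_iff₀ (by linarith)]
  nlinarith [norm_nonneg (gr η z)]

include hη

lemma contDiff_lgr : ContDiff ℝ 1 (lgr η) := by
  have h : ContDiff ℝ 1 fun z => ((1 + η z : ℝ) : ℂ) :=
    Complex.ofRealCLM.contDiff.comp (contDiff_const.add (hη.of_le (by norm_num)))
  exact (contDiff_gr hη).mul (h.inv (one_add_ne hb))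

lemma dbar_lgr (z : ℂ) :
    dbar (lgr η) z = ((lap η z : ℂ) / 4 - lgr η z * conj (gr η z)) / ((1 + η z : ℝ) : ℂ) := by
  have hd : DifferentiableAt ℝ (fun w => 1 + η w) z :=
    (hη.differentiable (by norm_num) z).const_add 1
  have hd' := (hasFDerivAt_ofReal hd).differentiableAt
  have h := dbar_mul ((contDiff_lgr hη hb).differentiable (by norm_num) z) hd'
  have e : (fun w => lgr η w * ((1 + η w : ℝ) : ℂ)) = gr η := by
    ext w
    exact div_mul_cancel₀ _ (one_add_ne hb w)
  rw [e, dbar_gr hη, dbar_ofReal hd, gr_one_add] at h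
  rw [eq_div_iff (one_add_ne hb z), h]
  ring

include hU

lemma contDiff_rgr : ContDiff ℝ 1 (rgr U η) :=
  (contDiff_gr hU).sub ((Complex.ofRealCLM.contDiff.comp (hU.of_le (by norm_num))).mul
    (contDiff_lgr hη hb))

/-- The equation satisfied by `rgr U η`: a `∂̄`-equation whose conjugate-linear part comes from `η`. -/
lemma dbar_rgr (z : ℂ) : dbar (rgr U η) z = -lgr η z * conj (rgr U η z) +
    ((lap U z - U z * lap η z / (1 + η z) : ℝ) : ℂ) / 4 := by
  have hUd := hU.differentiable (by norm_num) z
  have hl := (contDiff_lgr hη hb).differentiable (by norm_num) z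
  have hUc := (hasFDerivAt_ofReal hUd).differentiableAt
  have h1 := dbar_sub ((contDiff_gr hU).differentiable (by norm_num) z) (hUc.mul hl)
  have h2 := dbar_mul hUc hl
  have e : dbar (rgr U η) z = _ := h1
  have h2' : dbar ((fun w => (U w : ℂ)) * lgr η) z = _ := h2
  rw [e, h2', dbar_gr hU, dbar_ofReal hUd, dbar_lgr hη hb]
  have hne := one_add_ne hb z
  have hgr : conj (gr η z) = conj (lgr η z) * ((1 + η z : ℝ) : ℂ) := by
    rw [lgr, map_div₀, Complex.conj_ofReal, div_mul_cancel₀ _ hne]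
  rw [hgr]
  simp only [rgr, map_sub, map_mul, Complex.conj_ofReal]
  push_cast at hne ⊢
  field_simp
  ring

lemma contDiff_quot : ContDiff ℝ 2 fun w => U w / (1 + η w) := by
  have h : ContDiff ℝ 2 fun w => 1 + η w := contDiff_const.add hη
  exact hU.mul (h.inv fun w hw => by have := one_add_pos hb w; linarith)

/-- `rgr U η` computes the gradient of the quotient `U / (1 + η)`. -/
lemma gr_quot (z : ℂ) : gr (fun w => U w / (1 + η w)) z = rgr U η z / ((1 + η z : ℝ) : ℂ) := by
  have hUd := hU.differentiable (by norm_num) z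
  have hd : DifferentiableAt ℝ (fun w => 1 + η w) z :=
    (hη.differentiable (by norm_num) z).const_add 1
  have hq := (contDiff_quot hU hη hb).differentiable (by norm_num) z
  have h := gr_mul hq hd
  have e : (fun w => U w / (1 + η w) * (1 + η w)) = U := by
    ext w
    exact div_mul_cancel₀ _ (by have := one_add_pos hb w; intro h; linarith)
  rw [e, gr_one_add] at h
  have hne := one_add_ne hb z
  rw [rgr, lgr, h]
  push_cast at hne ⊢
  field_simp
  ring

lemma contDiff_twist {t : ℝ} (ht : 0 < t) : ContDiff ℝ 1 (twist U η t) := by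
  have hP := contDiff_rgr hU hη hb
  have h : ContDiff ℝ 1 fun z => ((‖rgr U η z‖ ^ 2 + t ^ 2 : ℝ) : ℂ) :=
    Complex.ofRealCLM.contDiff.comp ((hP.norm_sq ℂ).add contDiff_const)
  have hc : ContDiff ℝ 1 fun z => conj (rgr U η z) := Complex.conjCLE.contDiff.comp hP
  refine (((contDiff_lgr hη hb).neg).mul (hc.pow 2)).mul (h.inv fun z => ?_)
  rw [Ne, Complex.ofReal_eq_zero]
  positivity

omit hU hη in
lemma norm_twist_le {t : ℝ} (ht : 0 < t) (z : ℂ) : ‖twist U η t z‖ ≤ 2 * ‖gr η z‖ := by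
  refine le_trans ?_ (norm_lgr_le hb z)
  rw [twist, norm_div, norm_mul, norm_neg, norm_pow, RCLike.norm_conj, Complex.norm_real,
    Real.norm_eq_abs, abs_of_pos (by positivity), div_le_iff₀ (by positivity)]
  gcongr
  nlinarith

omit hU hη in
/-- The error of the regularisation in `twist`: where `rgr U η` is not small compared with `t` the
quotient is almost exact, and elsewhere `rgr U η` itself is small. -/
lemma twist_err {t : ℝ} (ht : 0 < t) (z : ℂ) :
    ‖-lgr η z * conj (rgr U η z) - twist U η t z * rgr U η z‖ ≤ 2 * ‖gr η z‖ * t := by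
  set P := rgr U η z with hP
  have hne : ((‖P‖ ^ 2 + t ^ 2 : ℝ) : ℂ) ≠ 0 := by
    rw [Ne, Complex.ofReal_eq_zero]; positivity
  have e : -lgr η z * conj P - twist U η t z * P =
      -lgr η z * (conj P * ((t ^ 2 : ℝ) : ℂ) / ((‖P‖ ^ 2 + t ^ 2 : ℝ) : ℂ)) := by
    rw [twist, ← hP]
    have h2 : P * conj P = ((‖P‖ ^ 2 : ℝ) : ℂ) := by rw [Complex.mul_conj, Complex.normSq_eq_norm_sq]
    have h3 : ((t ^ 2 : ℝ) : ℂ) = ((‖P‖ ^ 2 + t ^ 2 : ℝ) : ℂ) - P * conj P := by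
      rw [h2]; push_cast; ring
    rw [h3]
    generalize ((‖P‖ ^ 2 + t ^ 2 : ℝ) : ℂ) = D at hne
    field_simp
    ring
  rw [e, norm_mul, norm_neg]
  refine mul_le_mul (norm_lgr_le hb z) ?_ (norm_nonneg _) (by positivity)
  rw [norm_div, norm_mul, RCLike.norm_conj, Complex.norm_real, Complex.norm_real,
    Real.norm_eq_abs, Real.norm_eq_abs, abs_of_pos (by positivity), abs_of_pos (by positivity),
    div_le_iff₀ (by positivity)]
  nlinarith [mul_nonneg ht.le (sq_nonneg (‖P‖ - t)), norm_nonneg P, mul_nonneg ht.le (sq_nonneg ‖P‖), pow_pos ht 3]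

end

end Landis

/-! ### Approximation by holomorphic functions, and the choice of densities -/

namespace Landis
open MeasureTheory Filter Topology Set
open scoped ContDiff ComplexConjugate Convolution ENNReal

lemma continuous_dbar {f : ℂ → ℂ} (hf : ContDiff ℝ 1 f) : Continuous (dbar f) := by
  have h := hf.continuous_fderiv (by norm_num)
  unfold dbar
  fun_prop

/-- A function whose `∂̄`-derivative is, up to a part with small Cauchy transform, supported off `Ω`
is close to a function which is holomorphic in `Ω`. -/
lemma approx_holo {ρ ϑ : ℝ} (hρ : 0 < ρ) {H D : ℂ → ℂ} {b : ℂ → ℝ} {Ω : Set ℂ} (hΩ : IsOpen Ω)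
    (hΩρ : Ω ⊆ ball 0 (16 / 5 * ρ)) (hH : ContDiff ℝ 1 H) (hD : Continuous D)
    (hDΩ : ∀ z ∈ Ω, D z = 0) (hb0 : ∀ ζ, 0 ≤ b ζ)
    (hb : ∀ ζ, ‖ζ‖ ≤ 7 / 2 * ρ → ‖dbar H ζ - D ζ‖ ≤ b ζ)
    (hbi : ∀ z, Integrable fun ζ => b ζ * ‖z - ζ‖⁻¹)
    (hbϑ : ∀ z, ‖z‖ ≤ 3 * ρ → ∫ ζ, b ζ * ‖z - ζ‖⁻¹ ≤ cc * ϑ) :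
    ∃ H₁ : ℂ → ℂ, DifferentiableOn ℂ H₁ Ω ∧ ∀ z, ‖z‖ ≤ 3 * ρ → ‖H z - H₁ z‖ ≤ ϑ := by
  obtain ⟨χ, hχ, hχ01, hχ1, hχ0⟩ := exists_cutoff (a := 16 / 5 * ρ) (b := 17 / 5 * ρ) (by linarith)
    (by linarith)
  have hχd := hχ.differentiable (by norm_num)
  set X : ℂ → ℂ := fun z => (χ z : ℂ) with hX
  have hXc : ContDiff ℝ 1 X := Complex.ofRealCLM.contDiff.comp (hχ.of_le (by norm_num))
  -- The product `X H` is the Cauchy transform of `∂̄(X H)`. Keeping only `X D + H ∂̄X`, which vanishes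
  -- in `Ω`, gives the holomorphic function; the rest is dominated by `b`.
  set g₂ : ℂ → ℂ := fun z => X z * D z + H z * dbar X z with hg₂
  have hXH : ContDiff ℝ 1 fun z => X z * H z := hXc.mul hH
  have hX0 : ∀ z, 17 / 5 * ρ ≤ ‖z‖ → X z = 0 := fun z hz => by simp [hX, hχ0 z hz]
  have hdX : ∀ z, 7 / 2 * ρ ≤ ‖z‖ → dbar X z = 0 := fun z hz => by
    have hev : χ =ᶠ[𝓝 z] fun _ => 0 := by
      filter_upwards [continuous_norm.continuousAt.eventually (lt_mem_nhds (show 17 / 5 * ρ < ‖z‖ by linarith))]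
        with w hw using hχ0 w hw.le
    rw [hX, dbar_ofReal (hχd z)]
    simp [gr, hev.fderiv_eq]
  have hdX1 : ∀ z, ‖z‖ < 16 / 5 * ρ → dbar X z = 0 := fun z hz => by
    have hev : χ =ᶠ[𝓝 z] fun _ => 1 := by
      filter_upwards [continuous_norm.continuousAt.eventually (gt_mem_nhds hz)]
        with w hw using hχ1 w hw.le
    rw [hX, dbar_ofReal (hχd z)]
    simp [gr, hev.fderiv_eq]
  have hg₂c : Continuous g₂ := (hXc.continuous.mul hD).add (hH.continuous.mul (continuous_dbar hXc))
  have hg₂s : HasCompactSupport g₂ := hcs_of_zero (R := 7 / 2 * ρ) fun z hz => by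
    simp only [hg₂]
    rw [hX0 z (by linarith), hdX z hz]; simp
  have hXHs : HasCompactSupport fun z => X z * H z := hcs_of_zero (R := 17 / 5 * ρ) fun z hz => by
    simp only [hX0 z hz, zero_mul]
  have hdm : ∀ z, dbar (fun z => X z * H z) z = X z * dbar H z + dbar X z * H z := fun z =>
    dbar_mul (hXc.differentiable (by norm_num) z) (hH.differentiable (by norm_num) z)
  have hdXHc := continuous_dbar hXH
  have hdXHs : HasCompactSupport (dbar fun z => X z * H z) := hcs_of_zero (R := 7 / 2 * ρ) fun z hz => by
    rw [hdm, hX0 z (by linarith), hdX z hz]; simp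
  refine ⟨fun z => (cc : ℂ)⁻¹ * T g₂ z, ?_, fun z hz => ?_⟩
  · refine (T_holo hg₂c hg₂s hΩ fun z hz => ?_).const_mul _
    simp only [hg₂]
    have := hΩρ hz
    rw [mem_ball_zero_iff] at this
    rw [hDΩ z hz, hdX1 z this]; simp
  · have hcc : (cc : ℂ) ≠ 0 := by
      rw [Ne, Complex.ofReal_eq_zero]; exact cc_pos.ne'
    have e1 := T_dbar hXH hXHs z
    have e2 : T (dbar fun z => X z * H z) z - T g₂ z =
        ∫ ζ, X ζ * (dbar H ζ - D ζ) * (z - ζ)⁻¹ := by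
      unfold T
      rw [← integral_sub (T_integrable hdXHc hdXHs z) (T_integrable hg₂c hg₂s z)]
      congr 1; ext ζ
      rw [hdm]
      simp only [hg₂]
      ring
    have hX1 : X z = 1 := by simp [hX, hχ1 z (by linarith)]
    rw [hX1, one_mul] at e1
    have e3 : H z - (cc : ℂ)⁻¹ * T g₂ z = (cc : ℂ)⁻¹ * ∫ ζ, X ζ * (dbar H ζ - D ζ) * (z - ζ)⁻¹ := by
      rw [← e2, e1, mul_sub, inv_mul_cancel_left₀ hcc]
    rw [e3, norm_mul, norm_inv, Complex.norm_real, Real.norm_of_nonneg cc_pos.le,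
      inv_mul_le_iff₀ cc_pos]
    refine le_trans ?_ (hbϑ z hz)
    refine norm_integral_le_of_norm_le (hbi z) (Eventually.of_forall fun ζ => ?_)
    rw [norm_mul, norm_inv]
    gcongr
    by_cases hζ : ‖ζ‖ ≤ 7 / 2 * ρ
    · rw [norm_mul]
      calc _ ≤ 1 * b ζ := by
            gcongr
            · rw [hX, Complex.norm_real, Real.norm_of_nonneg (hχ01 ζ).1]; exact (hχ01 ζ).2
            · exact hb ζ hζ
        _ = _ := one_mul _
    · rw [hX0 ζ (by linarith), zero_mul, norm_zero]; exact hb0 ζ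

/-- A bound on unit-scale oscillation gives linear growth. -/
lemma chain_bound {S : ℂ → ℝ} {R : ℝ} (h0 : S 0 = 0)
    (h : ∀ z z', ‖z‖ ≤ R → ‖z - z'‖ ≤ 10 → |S z - S z'| ≤ 1) {z : ℂ} (hz : ‖z‖ ≤ R) :
    |S z| ≤ ‖z‖ / 10 + 1 := by
  have key : ∀ n : ℕ, ∀ z, ‖z‖ ≤ R → ‖z‖ ≤ 10 * n → |S z| ≤ n := by
    intro n
    induction n with
    | zero =>
      intro z _ hz
      have : z = 0 := norm_le_zero_iff.1 (by simpa using hz)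
      simp [this, h0]
    | succ n ih =>
      intro z hzR hz
      push_cast at hz ⊢
      by_cases hn : n = 0
      · subst hn
        have := h z 0 hzR (by simpa using hz)
        rw [h0, sub_zero] at this
        simpa using this
      have hn1 : (0 : ℝ) < n := by positivity
      set t : ℝ := n / (n + 1) with ht
      have ht1 : t ≤ 1 := by rw [ht, div_le_one (by positivity)]; linarith
      have ht0 : 0 ≤ t := by positivity
      have hn' : ‖(t : ℂ) * z‖ = t * ‖z‖ := by
        rw [norm_mul, Complex.norm_real, Real.norm_of_nonneg ht0]
      have h1 := ih (t * z) (by rw [hn']; nlinarith [norm_nonneg z]) (by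
        rw [hn', ht, div_mul_eq_mul_div, div_le_iff₀ (by positivity)]; nlinarith)
      have h2 := h z (t * z) hzR (by
        have : z - t * z = ((1 - t : ℝ) : ℂ) * z := by push_cast; ring
        rw [this, norm_mul, Complex.norm_real, Real.norm_of_nonneg (by linarith)]
        have h3 : 1 - t = 1 / (n + 1) := by rw [ht]; field_simp; ring
        rw [h3, div_mul_eq_mul_div, div_le_iff₀ (by positivity)]; linarith)
      have h3 := abs_le.1 h1
      have h4 := abs_le.1 h2
      rw [abs_le]
      constructor <;> linarith
  have := key ⌈‖z‖ / 10⌉₊ z hz (by have := Nat.le_ceil (‖z‖ / 10); linarith)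
  linarith [Nat.ceil_lt_add_one (show 0 ≤ ‖z‖ / 10 by positivity)]

/-- The lattice points whose compensating density does not sit on zeros of `U`: the origin, the
points near or beyond the circle of radius `3ρ`, and those near which `U` has no zero. -/
def Hole (U : ℂ → ℝ) (ρ : ℝ) (m : ℤ × ℤ) : Prop :=
  m = 0 ∨ 3 * ρ - 50 ≤ ‖ctr m‖ ∨ ∀ z ∈ ball (ctr m) 11, U z ≠ 0

/-- Compensating data adapted to `U`: at the holes the densities are unit-size bumps, elsewhere they
sit on zeros of `U`. -/
lemma exists_net : ∃ C₀ : ℝ, 0 < C₀ ∧ ∀ (U : ℂ → ℝ) (δ ρ t : ℝ), ContDiff ℝ 2 U → δ < 1 →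
    (∀ z, |lap U z| ≤ δ * |U z|) → 0 < t → ∃ X : Comp C₀ ρ,
      (∀ m, Hole U ρ m → ∀ ξ, 1 < ‖ξ - ctr m‖ → X.n m ξ = 0) ∧
      ∀ m, ¬ Hole U ρ m → ∀ z, ∫ ξ, X.n m ξ * |U ξ| * ‖z - ξ‖⁻¹ ≤ t := by
  obtain ⟨C₀, hC₀, h1, h2⟩ := exists_dens
  refine ⟨C₀, hC₀, fun U δ ρ t hU hδ hl ht => ?_⟩
  have : ∀ m, ∃ n, Dens C₀ (ctr m) n ∧ (Hole U ρ m → ∀ ξ, 1 < ‖ξ - ctr m‖ → n ξ = 0) ∧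
      (¬ Hole U ρ m → ∀ z, ∫ ξ, n ξ * |U ξ| * ‖z - ξ‖⁻¹ ≤ t) := by
    intro m
    by_cases hm : Hole U ρ m
    · obtain ⟨n, hn, hs⟩ := h1 (ctr m)
      exact ⟨n, hn, fun _ => hs, fun h => absurd hm h⟩
    · have hz : ∃ z₀ ∈ ball (ctr m) 11, U z₀ = 0 := by
        by_contra hcon
        push Not at hcon
        exact hm (Or.inr (Or.inr hcon))
      obtain ⟨z₀, hz₀, hU0⟩ := hz
      obtain ⟨n, hn, hs⟩ := h2 U δ hU hδ hl (ctr m) z₀ hz₀ hU0 t ht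
      exact ⟨n, hn, fun h => absurd h hm, fun _ => hs⟩
  choose n hn hn1 hn2 using this
  obtain ⟨X, rfl⟩ := exists_comp n hn ρ
  exact ⟨X, hn1, hn2⟩

end Landis

/-! ### Reduction to an almost holomorphic function -/

namespace Landis
open MeasureTheory Filter Topology Set
open scoped ContDiff ComplexConjugate Convolution ENNReal

/-- The centres of the lattice cells that are holes. -/
def holes (U : ℂ → ℝ) (ρ : ℝ) : Set ℂ := ctr '' {m | Hole U ρ m}

lemma ctr_sub (m m' : ℤ × ℤ) (h : ‖ctr m - ctr m'‖ < 100) : m = m' := by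
  have h1 := (Complex.abs_re_le_norm (ctr m - ctr m')).trans_lt h
  have h2 := (Complex.abs_im_le_norm (ctr m - ctr m')).trans_lt h
  simp only [ctr, Complex.sub_re, Complex.sub_im] at h1 h2
  rw [abs_lt] at h1 h2
  have a1 : (m.1 : ℝ) - m'.1 < 1 := by linarith
  have a2 : (-1 : ℝ) < (m.1 : ℝ) - m'.1 := by linarith
  have a3 : (m.2 : ℝ) - m'.2 < 1 := by linarith
  have a4 : (-1 : ℝ) < (m.2 : ℝ) - m'.2 := by linarith
  norm_cast at a1 a2 a3 a4
  ext <;> omega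

lemma pot_le_one {C₀ : ℝ} {c : ℂ} {n : ℂ → ℝ} (D : Dens C₀ c n) {z : ℂ}
    (h : ∀ ξ, n ξ ≠ 0 → 1 ≤ ‖z - ξ‖) : pot n z ≤ 1 := by
  rw [← D.mass, pot]
  refine integral_mono (D.integrable_inv z) D.integrable fun ξ => ?_
  by_cases h0 : n ξ = 0
  · simp [h0]
  · exact mul_le_of_le_one_right (D.nonneg ξ) (inv_le_one_of_one_le₀ (h ξ h0))

/-- On the boundary of the perforated disc the compensating densities are at distance at least `1`,
so the Cauchy potentials are bounded. -/
lemma B_le_of_far {C₀ ρ : ℝ} (X : Comp C₀ ρ) {U : ℂ → ℝ} {N : ℕ}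
    (hN : ∀ (F : Finset (ℤ × ℤ)) (z : ℂ), (F.filter fun q => ‖z - ctr q‖ ≤ 1500).card ≤ N)
    (hX : ∀ m, Hole U ρ m → ∀ ξ, 1 < ‖ξ - ctr m‖ → X.n m ξ = 0) {z : ℂ}
    (hz : ∀ q ∈ holes U ρ, 2 ≤ ‖z - q‖)
    (hz' : ‖z‖ = 3 * ρ ∨ ∃ q ∈ holes U ρ, ‖z - q‖ ≤ 3) : X.B z ≤ N := by
  have h1 : ∀ q, pot (X.n q) z ≤ 1 := by
    intro q
    refine pot_le_one (X.dens q) fun ξ hξ => ?_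
    by_cases hq : Hole U ρ q
    · have h2 := hz (ctr q) ⟨q, hq, rfl⟩
      have h3 : ‖ξ - ctr q‖ ≤ 1 := by
        by_contra hcon
        exact hξ (hX q hq ξ (lt_of_not_ge hcon))
      have h4 := norm_sub_le (z - ctr q) (ξ - ctr q)
      have h5 := norm_add_le (z - ξ) (ξ - ctr q)
      rw [sub_add_sub_cancel] at h5
      linarith
    · have h3 : ‖ξ - ctr q‖ ≤ 13 := by
        by_contra hcon
        exact hξ ((X.dens q).supp ξ (lt_of_not_ge hcon))
      rcases hz' with hz' | ⟨q', ⟨m, hm, rfl⟩, hq'⟩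
      · have h6 : ‖ctr q‖ < 3 * ρ - 50 := by
          by_contra hcon
          exact hq (Or.inr (Or.inl (le_of_not_gt hcon)))
        have h7 := norm_add_le (z - ξ) ξ
        have h8 := norm_add_le (ξ - ctr q) (ctr q)
        rw [sub_add_cancel] at h7 h8
        linarith
      · have hne : q ≠ m := fun h => hq (h ▸ hm)
        have h6 : 100 ≤ ‖ctr q - ctr m‖ := by
          by_contra hcon
          exact hne (ctr_sub q m (lt_of_not_ge hcon))
        have h7 : ctr q - ctr m = (z - ctr m) - (z - ξ) - (ξ - ctr q) := by ring
        have h8 := norm_sub_le ((z - ctr m) - (z - ξ)) (ξ - ctr q)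
        have h9 := norm_sub_le (z - ctr m) (z - ξ)
        rw [← h7] at h8
        linarith
  calc X.B z ≤ ∑ q ∈ X.F.filter (fun q => ‖z - ctr q‖ ≤ 1500), (1 : ℝ) :=
        Finset.sum_le_sum fun q _ => h1 q
    _ = ((X.F.filter fun q => ‖z - ctr q‖ ≤ 1500).card : ℝ) := by simp
    _ ≤ N := by exact_mod_cast hN X.F z

set_option maxHeartbeats 4000000 in
open Classical in
/-- Reduction of the differential inequality to an almost holomorphic function: off the holes, the
gradient of `U / φ` is `exp S` times a function close to a holomorphic one, where the weight
`S` varies by at most `1` at unit scale. -/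
lemma reduction : ∃ c C : ℝ, 0 < c ∧ 0 < C ∧ ∀ (U : ℂ → ℝ) (δ ρ ϑ : ℝ), ContDiff ℝ 2 U → 0 < δ →
    δ ≤ 1 / 100 → (∀ z, |lap U z| ≤ δ * |U z|) → 1000 ≤ ρ → δ * Real.log ρ ≤ c → 0 < ϑ →
    ∃ (φ f S : ℂ → ℝ) (H₁ : ℂ → ℂ), (∀ z, 1 / 2 ≤ φ z ∧ φ z ≤ 3 / 2) ∧ (∀ z, U z = φ z * f z) ∧
      Differentiable ℝ f ∧ S 0 = 0 ∧
      (∀ z z', ‖z‖ ≤ 4 * ρ → ‖z - z'‖ ≤ 10 → |S z - S z'| ≤ 1) ∧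
      DifferentiableOn ℂ H₁ {z | ‖z‖ < 16 / 5 * ρ ∧ 3 / 2 < infDist z (holes U ρ)} ∧
      (∀ z, ‖z‖ ≤ 3 * ρ → ‖fderiv ℝ f z‖ ≤ 4 * Real.exp (S z) * (‖H₁ z‖ + ϑ)) ∧
      ∀ z, ‖z‖ ≤ 3 * ρ → (∀ q ∈ holes U ρ, 2 ≤ ‖z - q‖) →
        (‖z‖ = 3 * ρ ∨ ∃ q ∈ holes U ρ, ‖z - q‖ ≤ 3) →
        ‖H₁ z‖ ≤ C * Real.exp (-S z) * (|U z| + ‖gr U z‖) + ϑ := by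
  obtain ⟨C₀, hC₀, hnet⟩ := exists_net
  obtain ⟨c, C, hc, hC, hmult⟩ := exists_mult C₀ hC₀.le
  obtain ⟨CT, hCT, hosc⟩ := T_osc C₀
  obtain ⟨N₁, hN₁⟩ := lattice_card 1500
  have hccp := cc_pos
  refine ⟨min c (cc / (CT * (2 * C))), 1 + 2 * (C * (1 + N₁)), by positivity, by positivity, ?_⟩
  intro U δ ρ ϑ hU hδ hδ1 hl hρ hδρ hϑ
  obtain ⟨N₂, hN₂⟩ := lattice_card (3 * ρ)
  set E := Real.exp ρ with hE
  have hE0 : 0 < E := Real.exp_pos _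
  -- The compensating densities off the holes contribute at most a third of the final error.
  set t := cc * ϑ / (3 * (E * (C * δ) * N₂ + 1)) with ht
  have ht0 : 0 < t := by positivity
  obtain ⟨X, hX1, hX2⟩ := hnet U δ ρ t hU (by linarith) hl ht0
  have hK : IsCompact (closedBall (0 : ℂ) (4 * ρ)) := isCompact_closedBall _ _
  obtain ⟨m₀, hm₀⟩ := hK.exists_bound_of_continuousOn hU.continuous.continuousOn
  set m := |m₀| with hm
  have hm' : ∀ z, ‖z‖ ≤ 4 * ρ → |U z| ≤ m := fun z hz =>
    (hm₀ z (by simpa using hz)).trans (le_abs_self _)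
  have hm0 : 0 ≤ m := abs_nonneg _
  obtain ⟨κ, hκ, hκ01, hκ1, hκ0⟩ := exists_cutoff (a := 7 / 2 * ρ) (b := 4 * ρ) (by linarith)
    (by linarith)
  have hκs : HasCompactSupport κ := hcs_of_zero hκ0
  -- the Cauchy potential of a disc, used to absorb all uniformly small errors
  set k : ℂ → ℝ := (ball (0 : ℂ) (8 * ρ)).indicator fun z => ‖z‖⁻¹ with hk
  have hki : Integrable k := by
    rw [hk, integrable_indicator_iff measurableSet_ball]
    exact (locInt_norm_inv.integrableOn_isCompact (isCompact_closedBall 0 (8 * ρ))).mono_set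
      ball_subset_closedBall
  have hk0 : ∀ z, 0 ≤ k z := fun z => indicator_nonneg (fun _ _ => by positivity) z
  set I₀ : ℝ := ∫ z, k z with hI₀
  have hI₀p : 0 ≤ I₀ := integral_nonneg hk0
  have hκI : ∀ z, ‖z‖ ≤ 3 * ρ → ∫ ζ, κ ζ * ‖z - ζ‖⁻¹ ≤ I₀ := by
    intro z hz
    rw [hI₀, ← integral_sub_left_eq_self k _ z]
    refine integral_mono (conv_integrable hκ.continuous hκs locInt_norm_inv z)
      (hki.comp_sub_left z) fun ζ => ?_
    by_cases hζ : 4 * ρ ≤ ‖ζ‖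
    · simp only [hκ0 ζ hζ, zero_mul]; exact hk0 _
    · have : z - ζ ∈ ball (0 : ℂ) (8 * ρ) := by
        rw [mem_ball_zero_iff]; linarith [norm_sub_le z ζ]
      simp only [hk, indicator_of_mem this]
      exact mul_le_of_le_one_left (by positivity) (hκ01 ζ).2
  set s := cc * ϑ / (9 * E * (I₀ + 1)) with hs
  have hs0 : 0 < s := by positivity
  -- A `C¹` substitute for the coefficient `ΔU / U`, and the corresponding multiplier `1 + η`.
  obtain ⟨V, hV, hVb, hVU⟩ := exists_potential hU hδ hs0 hl hK
  set τ := s / (2 * m + 1) with hτ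
  obtain ⟨η, A, hη, hηb, hA, hgη, hlη⟩ := hmult X V δ τ hρ hδ.le (hδρ.trans (min_le_left _ _))
    (by positivity) hV hVb
  obtain ⟨G₀, hG₀⟩ := hK.exists_bound_of_continuousOn (contDiff_gr hη).continuous.continuousOn
  set G := |G₀| with hG
  have hG' : ∀ z, ‖z‖ ≤ 4 * ρ → ‖gr η z‖ ≤ G := fun z hz =>
    (hG₀ z (by simpa using hz)).trans (le_abs_self _)
  have hGp : 0 ≤ G := abs_nonneg _
  set t₂ := s / (2 * G + 1) with ht₂
  have ht₂0 : 0 < t₂ := by positivity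
  -- The function to be conjugated, and the cut-off coefficient of its equation.
  set P := rgr U η with hP
  have hPd : ContDiff ℝ 1 P := contDiff_rgr hU hη hηb
  set g : ℂ → ℂ := fun z => (κ z : ℂ) * twist U η t₂ z with hg
  have hgd : ContDiff ℝ 1 g := (Complex.ofRealCLM.contDiff.comp (hκ.of_le (by norm_num))).mul
    (contDiff_twist hU hη hηb ht₂0)
  have hg0 : ∀ ζ, 4 * ρ ≤ ‖ζ‖ → g ζ = 0 := fun ζ h => by simp [hg, hκ0 ζ h]
  have hgs : HasCompactSupport g := hcs_of_zero hg0
  have hgB : ∀ ζ, ‖g ζ‖ ≤ (2 * (C * δ)) * (1 + X.B ζ) := fun ζ => by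
    rw [hg, norm_mul, Complex.norm_real, Real.norm_of_nonneg (hκ01 ζ).1]
    calc _ ≤ 1 * (2 * (C * δ * (1 + X.B ζ))) := by
          gcongr
          · exact (hκ01 ζ).2
          · exact (norm_twist_le hηb ht₂0 ζ).trans (by gcongr; exact hgη ζ)
      _ = _ := by ring
  -- Normalised to vanish at the origin, so that its real part does.
  set ω' : ℂ → ℂ := fun z => (cc : ℂ)⁻¹ * (T g z - T g 0) with hω
  have hcc : (cc : ℂ) ≠ 0 := by rw [Ne, Complex.ofReal_eq_zero]; exact hccp.ne'
  have hTd := contDiff_T hgd hgs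
  have hωd : ContDiff ℝ 1 ω' := contDiff_const.mul (hTd.sub contDiff_const)
  have hωdbar : ∀ z, dbar ω' z = g z := fun z => by
    have hd := hTd.differentiable (by norm_num) z
    rw [hω, dbar_const_mul (hd.sub_const _), dbar_sub hd (differentiableAt_const _), dbar_T hgd hgs]
    simp [dbar, hcc]
  set S : ℂ → ℝ := fun z => (ω' z).re with hS
  have hS0 : S 0 = 0 := by simp [hS, hω]
  have hSosc : ∀ z z', ‖z‖ ≤ 4 * ρ → ‖z - z'‖ ≤ 10 → |S z - S z'| ≤ 1 := by
    intro z z' hz hzz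
    have h1 := hosc X g (2 * (C * δ)) hρ (by positivity) hgd.continuous hg0 hgB z z' hz hzz
    have h2 : S z - S z' = ((cc : ℂ)⁻¹ * (T g z - T g z')).re := by
      simp only [hS, hω]
      rw [← Complex.sub_re]
      congr 1; ring
    rw [h2]
    refine (Complex.abs_re_le_norm _).trans ?_
    rw [norm_mul, norm_inv, Complex.norm_real, Real.norm_of_nonneg hccp.le, inv_mul_le_iff₀ hccp,
      mul_one]
    refine h1.trans ?_
    have h3 := hδρ.trans (min_le_right _ _)
    rw [le_div_iff₀ (by positivity)] at h3
    linarith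
  have hSρ : ∀ z, ‖z‖ ≤ 4 * ρ → Real.exp (-S z) ≤ E := fun z hz => by
    refine Real.exp_le_exp.2 ?_
    have := abs_le.1 (chain_bound hS0 hSosc hz)
    linarith
  have hexp : ∀ z, ‖Complex.exp (-ω' z)‖ = Real.exp (-S z) := fun z => by
    rw [Complex.norm_exp, Complex.neg_re]
  set H : ℂ → ℂ := fun z => Complex.exp (-ω' z) * P z with hH
  have hHd : ContDiff ℝ 1 H := hωd.neg.cexp.mul hPd
  have hHdbar : ∀ z, dbar H z = Complex.exp (-ω' z) * (dbar P z - g z * P z) := fun z => by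
    have hd := hωd.differentiable (by norm_num)
    have h1 : DifferentiableAt ℝ (fun w => Complex.exp (-ω' w)) z := (hd z).neg.cexp
    rw [hH, dbar_mul h1 (hPd.differentiable (by norm_num) z), dbar_exp_neg (hd z), hωdbar]
    ring
  have hφ : ∀ z, 0 < 1 + η z := fun z => by linarith [(one_add_pos hηb z).1]
  -- `R` collects the densities at the holes and `L` indexes the others. `D` is the part of `∂̄H`
  -- coming from `R`, hence supported in the holes, and `b` dominates what remains of `∂̄H`.
  set R : ℂ → ℝ := fun z => ∑ q ∈ X.F.filter (Hole U ρ), A q * X.n q z with hR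
  have hRc : Continuous R := continuous_finsetSum _ fun q _ =>
    continuous_const.mul (X.dens q).contDiff.continuous
  set L := X.F.filter fun q => ¬ Hole U ρ q with hL
  set D : ℂ → ℂ := fun z => Complex.exp (-ω' z) * ((U z / (1 + η z) * R z : ℝ) : ℂ) / 4 with hD
  have hDc : Continuous D := by
    have h1 := (contDiff_quot hU hη hηb).continuous
    have h2 : Continuous fun z => ((U z / (1 + η z) * R z : ℝ) : ℂ) :=
      Complex.continuous_ofReal.comp (h1.mul hRc)
    exact (hωd.continuous.neg.cexp.mul h2).div_const 4
  set b : ℂ → ℝ := fun ζ => 3 * E * s * κ ζ + ∑ q ∈ L, E * (C * δ) * (X.n q ζ * |U ζ|) with hb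
  have hbi0 : ∀ q z, Integrable fun ζ => X.n q ζ * |U ζ| * ‖z - ζ‖⁻¹ := fun q z =>
    conv_integrable ((X.dens q).contDiff.continuous.mul hU.continuous.abs)
      (X.dens q).hcs.mul_right locInt_norm_inv z
  have hbe : ∀ z, (fun ζ => b ζ * ‖z - ζ‖⁻¹) = fun ζ => 3 * E * s * (κ ζ * ‖z - ζ‖⁻¹) +
      ∑ q ∈ L, E * (C * δ) * (X.n q ζ * |U ζ| * ‖z - ζ‖⁻¹) := fun z => by
    ext ζ
    simp only [hb, add_mul, Finset.sum_mul]
    congr 1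
    · ring
    · exact Finset.sum_congr rfl fun q _ => by ring
  have hi1 : ∀ z, Integrable fun ζ => 3 * E * s * (κ ζ * ‖z - ζ‖⁻¹) := fun z =>
    (conv_integrable hκ.continuous hκs locInt_norm_inv z).const_mul _
  have hi2 : ∀ z, ∀ q ∈ L, Integrable fun ζ => E * (C * δ) * (X.n q ζ * |U ζ| * ‖z - ζ‖⁻¹) :=
    fun z q _ => (hbi0 q z).const_mul _
  have hLcard : (L.card : ℝ) ≤ N₂ := by
    have h1 : L ⊆ X.F.filter fun q => ‖(0 : ℂ) - ctr q‖ ≤ 3 * ρ := by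
      intro q hq
      rw [hL, Finset.mem_filter] at hq
      refine Finset.mem_filter.2 ⟨hq.1, ?_⟩
      rw [zero_sub, norm_neg]
      by_contra hcon
      exact hq.2 (Or.inr (Or.inl (by linarith)))
    exact_mod_cast (Finset.card_le_card h1).trans (hN₂ X.F 0)
  obtain ⟨H₁, hH₁, hHH₁⟩ := approx_holo (ρ := ρ) (ϑ := ϑ) (H := H) (D := D) (b := b)
    (Ω := {z | ‖z‖ < 16 / 5 * ρ ∧ 3 / 2 < infDist z (holes U ρ)}) (by linarith)
    ((isOpen_lt continuous_norm continuous_const).inter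
      (isOpen_lt continuous_const (continuous_infDist_pt _)))
    (fun z hz => by rw [mem_ball_zero_iff]; exact hz.1) hHd hDc
    (by
      intro z hz
      have hR0 : R z = 0 := Finset.sum_eq_zero fun q hq => by
        have hq' := (Finset.mem_filter.1 hq).2
        have h1 := infDist_le_dist_of_mem (x := z) (show ctr q ∈ holes U ρ from ⟨q, hq', rfl⟩)
        rw [dist_eq_norm] at h1
        rw [hX1 q hq' z (by linarith [hz.2]), mul_zero]
      simp [hD, hR0])
    (by
      intro ζ
      have := (hκ01 ζ).1
      refine add_nonneg (by positivity) (Finset.sum_nonneg fun q _ => ?_)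
      have := (X.dens q).nonneg ζ
      positivity)
    (by
      intro ζ hζ
      have hζ4 : ‖ζ‖ ≤ 4 * ρ := by linarith
      have hκζ : κ ζ = 1 := hκ1 ζ hζ
      have hgζ : g ζ = twist U η t₂ ζ := by simp [hg, hκζ]
      set Q := lap η ζ - (V ζ * (1 + η ζ) - ∑ q ∈ X.F, A q * X.n q ζ) with hQ
      set RL := ∑ q ∈ L, A q * X.n q ζ with hRL
      have hsum : ∑ q ∈ X.F, A q * X.n q ζ = R ζ + RL :=
        (Finset.sum_filter_add_sum_filter_not X.F (Hole U ρ) _).symm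
      have e1 : lap U ζ - U ζ * lap η ζ / (1 + η ζ) - U ζ / (1 + η ζ) * R ζ =
          (lap U ζ - V ζ * U ζ) - U ζ / (1 + η ζ) * Q + U ζ / (1 + η ζ) * RL := by
        rw [hQ, hsum]
        have := (hφ ζ).ne'
        field_simp
        ring
      have e2 : dbar H ζ - D ζ = Complex.exp (-ω' ζ) *
          ((-lgr η ζ * conj (P ζ) - twist U η t₂ ζ * P ζ) +
            (((lap U ζ - V ζ * U ζ) - U ζ / (1 + η ζ) * Q + U ζ / (1 + η ζ) * RL : ℝ) : ℂ) / 4) := by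
        rw [hHdbar, hP, dbar_rgr hU hη hηb, ← e1, hgζ]
        simp only [hD]
        push_cast
        ring
      have hq : |U ζ / (1 + η ζ)| ≤ 2 * |U ζ| := by
        rw [abs_div, abs_of_pos (hφ ζ), div_le_iff₀ (hφ ζ)]
        nlinarith [(one_add_pos hηb ζ).1, abs_nonneg (U ζ)]
      have n1 : ‖-lgr η ζ * conj (P ζ) - twist U η t₂ ζ * P ζ‖ ≤ s := by
        refine (twist_err hηb ht₂0 ζ).trans ?_
        calc _ ≤ 2 * G * t₂ := by gcongr; exact hG' ζ hζ4
          _ ≤ (2 * G + 1) * t₂ := by gcongr; linarith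
          _ = s := by rw [ht₂]; field_simp
      have n2 : |lap U ζ - V ζ * U ζ| ≤ s := hVU ζ (by simpa using hζ4)
      have n3 : |U ζ / (1 + η ζ) * Q| ≤ s := by
        rw [abs_mul]
        calc _ ≤ 2 * m * τ := by
              gcongr
              · exact hq.trans (by gcongr; exact hm' ζ hζ4)
              · exact hlη ζ hζ
          _ ≤ (2 * m + 1) * τ := by gcongr; linarith
          _ = s := by rw [hτ]; field_simp
      have n4 : |U ζ / (1 + η ζ) * RL| ≤ 2 * ∑ q ∈ L, C * δ * (X.n q ζ * |U ζ|) := by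
        rw [abs_mul]
        have h5 : |RL| ≤ ∑ q ∈ L, C * δ * X.n q ζ := by
          refine (Finset.abs_sum_le_sum_abs _ _).trans (Finset.sum_le_sum fun q hq => ?_)
          rw [abs_mul, abs_of_nonneg ((X.dens q).nonneg ζ)]
          exact mul_le_mul_of_nonneg_right (hA q (Finset.mem_filter.1 hq).1) ((X.dens q).nonneg ζ)
        calc _ ≤ (2 * |U ζ|) * ∑ q ∈ L, C * δ * X.n q ζ := by gcongr
          _ = _ := by
            rw [mul_assoc, Finset.mul_sum]
            congr 1
            exact Finset.sum_congr rfl fun q _ => by ring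
      set W := ∑ q ∈ L, C * δ * (X.n q ζ * |U ζ|) with hW
      have hW0 : 0 ≤ W := Finset.sum_nonneg fun q _ => by
        have := (X.dens q).nonneg ζ
        positivity
      have n5 : ‖(((lap U ζ - V ζ * U ζ) - U ζ / (1 + η ζ) * Q + U ζ / (1 + η ζ) * RL : ℝ) : ℂ) / 4‖ ≤
          2 * s + W := by
        rw [norm_div, Complex.norm_real, Real.norm_eq_abs]
        norm_num
        have h6 := abs_add_le ((lap U ζ - V ζ * U ζ) - U ζ / (1 + η ζ) * Q) (U ζ / (1 + η ζ) * RL)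
        have h7 := abs_sub (lap U ζ - V ζ * U ζ) (U ζ / (1 + η ζ) * Q)
        linarith
      rw [e2, norm_mul, hexp]
      have hbW : b ζ = E * (3 * s + W) := by
        simp only [hb, hκζ, hW, mul_add, Finset.mul_sum]
        congr 1
        · ring
        · exact Finset.sum_congr rfl fun q _ => by ring
      rw [hbW]
      have := norm_add_le (-lgr η ζ * conj (P ζ) - twist U η t₂ ζ * P ζ)
        ((((lap U ζ - V ζ * U ζ) - U ζ / (1 + η ζ) * Q + U ζ / (1 + η ζ) * RL : ℝ) : ℂ) / 4)
      exact mul_le_mul (hSρ ζ hζ4) (by linarith) (norm_nonneg _) hE0.le)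
    (by
      intro z
      rw [hbe]
      exact (hi1 z).add (integrable_finsetSum L (hi2 z)))
    (by
      intro z hz
      rw [hbe, integral_add (hi1 z) (integrable_finsetSum L (hi2 z)), integral_finsetSum L (hi2 z)]
      have p1 : ∫ ζ, 3 * E * s * (κ ζ * ‖z - ζ‖⁻¹) ≤ cc * ϑ / 3 := by
        rw [integral_const_mul]
        calc _ ≤ 3 * E * s * (I₀ + 1) := by
              gcongr
              linarith [hκI z hz]
          _ = _ := by rw [hs]; field_simp; ring
      have p2 : ∑ q ∈ L, ∫ ζ, E * (C * δ) * (X.n q ζ * |U ζ| * ‖z - ζ‖⁻¹) ≤ cc * ϑ / 3 := by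
        calc _ ≤ ∑ q ∈ L, E * (C * δ) * t := by
              refine Finset.sum_le_sum fun q hq => ?_
              rw [integral_const_mul]
              gcongr
              exact hX2 q (Finset.mem_filter.1 hq).2 z
          _ = L.card * (E * (C * δ) * t) := by rw [Finset.sum_const, nsmul_eq_mul]
          _ ≤ N₂ * (E * (C * δ) * t) := by gcongr
          _ ≤ (E * (C * δ) * N₂ + 1) * t := by nlinarith
          _ = _ := by rw [ht]; field_simp
      have : 0 < cc * ϑ := by positivity
      linarith)
  have hPH : ∀ z, ‖P z‖ = Real.exp (S z) * ‖H z‖ := fun z => by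
    rw [hH, norm_mul, hexp, ← mul_assoc, ← Real.exp_add]; simp
  refine ⟨fun z => 1 + η z, fun z => U z / (1 + η z), S, H₁, one_add_pos hηb,
    fun z => (mul_div_cancel₀ _ (hφ z).ne').symm, (contDiff_quot hU hη hηb).differentiable (by norm_num),
    hS0, hSosc, hH₁, fun z hz => ?_, fun z hz hzq hz' => ?_⟩
  · refine (norm_fderiv_le_gr _ z).trans ?_
    rw [gr_quot hU hη hηb, norm_div, Complex.norm_real, Real.norm_of_nonneg (hφ z).le, ← hP]
    have h1 : ‖P z‖ / (1 + η z) ≤ 2 * ‖P z‖ := by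
      rw [div_le_iff₀ (hφ z)]
      nlinarith [(one_add_pos hηb z).1, norm_nonneg (P z)]
    have h2 : ‖H z‖ ≤ ‖H₁ z‖ + ϑ := by
      have := norm_sub_norm_le (H z) (H₁ z)
      linarith [hHH₁ z hz]
    calc _ ≤ 2 * (2 * ‖P z‖) := by gcongr
      _ = 4 * Real.exp (S z) * ‖H z‖ := by rw [hPH]; ring
      _ ≤ _ := by gcongr
  · have h2 : ‖H₁ z‖ ≤ ‖H z‖ + ϑ := by
      have := norm_sub_norm_le (H₁ z) (H z)
      rw [norm_sub_rev] at this
      linarith [hHH₁ z hz]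
    have hBz := B_le_of_far X hN₁ hX1 hzq hz'
    have h3 : ‖gr η z‖ ≤ C * (1 + N₁) := by
      refine (hgη z).trans ?_
      have := X.B_nonneg z
      calc _ ≤ C * 1 * (1 + N₁) := by gcongr; linarith
        _ = _ := by ring
    have h4 : ‖P z‖ ≤ (1 + 2 * (C * (1 + N₁))) * (|U z| + ‖gr U z‖) := by
      have h5 : ‖P z‖ ≤ ‖gr U z‖ + |U z| * ‖lgr η z‖ := by
        rw [hP, rgr]
        refine (norm_sub_le _ _).trans ?_
        rw [norm_mul, Complex.norm_real, Real.norm_eq_abs]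
      have h6 : ‖lgr η z‖ ≤ 2 * (C * (1 + N₁)) := (norm_lgr_le hηb z).trans (by gcongr)
      have h7 := mul_le_mul_of_nonneg_left h6 (abs_nonneg (U z))
      have h8 : 0 ≤ 2 * (C * (1 + N₁)) * ‖gr U z‖ := by positivity
      nlinarith [abs_nonneg (U z)]
    have h5 : ‖H z‖ = Real.exp (-S z) * ‖P z‖ := by rw [hH, norm_mul, hexp]
    rw [h5] at h2
    refine h2.trans (add_le_add_left (α := ℝ) ?_ ϑ)
    calc Real.exp (-S z) * ‖P z‖
        ≤ Real.exp (-S z) * ((1 + 2 * (C * (1 + N₁))) * (|U z| + ‖gr U z‖)) :=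
          mul_le_mul_of_nonneg_left h4 (Real.exp_pos _).le
      _ = (1 + 2 * (C * (1 + N₁))) * Real.exp (-S z) * (|U z| + ‖gr U z‖) := by ring

end Landis

/-! ### Maximum principle and descent -/

namespace Landis
open MeasureTheory Filter Topology Set
open scoped ContDiff ComplexConjugate Convolution ENNReal

lemma zero_mem_holes (U : ℂ → ℝ) (ρ : ℝ) : (0 : ℂ) ∈ holes U ρ :=
  ⟨0, Or.inl rfl, by simp [ctr, Complex.ext_iff]⟩

lemma holes_sep {U : ℂ → ℝ} {ρ : ℝ} {q q' : ℂ} (hq : q ∈ holes U ρ) (hq' : q' ∈ holes U ρ)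
    (h : ‖q - q'‖ < 100) : q = q' := by
  obtain ⟨m, -, rfl⟩ := hq
  obtain ⟨m', -, rfl⟩ := hq'
  rw [ctr_sub m m' h]

/-- A hole other than the central one and away from the outer circle has no zeros of `U` nearby. -/
lemma hole_ne {U : ℂ → ℝ} {ρ : ℝ} {q : ℂ} (hq : q ∈ holes U ρ) (h0 : q ≠ 0)
    (hρ : ‖q‖ < 3 * ρ - 50) : ∀ z ∈ ball q 11, U z ≠ 0 := by
  obtain ⟨m, hm, rfl⟩ := hq
  rcases hm with rfl | hm | hm
  · exact absurd (by simp [ctr, Complex.ext_iff]) h0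
  · linarith
  · exact hm

/-- Maximum principle for `H z / z ^ k` in the perforated disc. -/
lemma max_principle {U : ℂ → ℝ} {ρ : ℝ} {H : ℂ → ℂ} (hρ : 1000 ≤ ρ)
    (hH : DifferentiableOn ℂ H {z | ‖z‖ < 16 / 5 * ρ ∧ 3 / 2 < infDist z (holes U ρ)}) (k : ℕ) :
    ∃ (M : ℝ) (y : ℂ), 0 ≤ M ∧
      (∀ z, ‖z‖ ≤ 3 * ρ → 2 ≤ infDist z (holes U ρ) → ‖H z‖ ≤ M * ‖z‖ ^ k) ∧
      ‖y‖ ≤ 3 * ρ ∧ (∀ q ∈ holes U ρ, 2 ≤ ‖y - q‖) ∧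
      (‖y‖ = 3 * ρ ∨ ∃ q ∈ holes U ρ, ‖y - q‖ ≤ 2) ∧ M * ‖y‖ ^ k = ‖H y‖ := by
  set h := holes U ρ with hh
  have h0 : (0 : ℂ) ∈ h := zero_mem_holes U ρ
  have hne : h.Nonempty := ⟨0, h0⟩
  have hcd : Continuous fun z : ℂ => infDist z h := continuous_infDist_pt _
  set K : Set ℂ := {z | ‖z‖ ≤ 3 * ρ} ∩ {z | 2 ≤ infDist z h} with hK
  set Ω : Set ℂ := {z | ‖z‖ < 3 * ρ} ∩ {z | 2 < infDist z h} with hΩ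
  have hKc : IsClosed K :=
    (isClosed_le continuous_norm continuous_const).inter (isClosed_le continuous_const hcd)
  have hΩo : IsOpen Ω :=
    (isOpen_lt continuous_norm continuous_const).inter (isOpen_lt continuous_const hcd)
  have hΩK : Ω ⊆ K := fun z hz => ⟨le_of_lt (show ‖z‖ < 3 * ρ from hz.1),
    le_of_lt (show 2 < infDist z h from hz.2)⟩
  have hclK : closure Ω ⊆ K := hKc.closure_subset_iff.2 hΩK
  have hKb : K ⊆ closedBall 0 (3 * ρ) := fun z hz => by simpa using hz.1
  have hKn : ∀ z ∈ K, 2 ≤ ‖z‖ := fun z hz => by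
    have := infDist_le_dist_of_mem (x := z) h0
    rw [dist_zero_right] at this
    exact le_trans hz.2 this
  have hKcp : IsCompact K := (isCompact_closedBall 0 (3 * ρ)).of_isClosed_subset hKc hKb
  have hBcp : IsCompact (K \ Ω) := hKcp.diff hΩo
  have h2B : (2 : ℂ) ∈ K \ Ω := by
    have hle : infDist (2 : ℂ) h ≤ 2 := by
      have := infDist_le_dist_of_mem (x := (2 : ℂ)) h0
      simpa using this
    refine ⟨⟨?_, ?_⟩, fun hcon => ?_⟩
    · show ‖(2 : ℂ)‖ ≤ _
      norm_num; linarith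
    · show 2 ≤ infDist (2 : ℂ) h
      refine (le_infDist hne).2 fun q hq => ?_
      rw [dist_eq_norm]
      by_contra hcon
      push Not at hcon
      have h1 : ‖q - 0‖ < 100 := by
        have := norm_sub_le (2 : ℂ) (2 - q)
        rw [sub_sub_cancel] at this
        norm_num at this ⊢
        linarith
      rw [holes_sep hq h0 h1] at hcon
      norm_num at hcon
    · exact absurd hcon.2 (not_lt.2 hle)
  -- The maximum of `|F|` over the compact set `K` is attained on `K \ Ω`.
  set F : ℂ → ℂ := fun z => H z * (z ^ k)⁻¹ with hF
  have hKD : K ⊆ {z | ‖z‖ < 16 / 5 * ρ ∧ 3 / 2 < infDist z h} := fun z hz =>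
    ⟨by have := hz.1; simp only [mem_ofPred_eq] at this; linarith,
      by have := hz.2; simp only [mem_ofPred_eq] at this; linarith⟩
  have hFd : DifferentiableOn ℂ F K := by
    refine (hH.mono hKD).mul ?_
    refine (differentiable_id.pow k).differentiableOn.inv fun z hz => ?_
    have : z ≠ 0 := by
      intro h; have := hKn z hz; rw [h, norm_zero] at this; linarith
    exact pow_ne_zero _ this
  obtain ⟨y, hy, hmax⟩ := hBcp.exists_isMaxOn ⟨2, h2B⟩
    ((hFd.continuousOn.mono sdiff_subset).norm)
  have hFn : ∀ z ∈ K, ‖H z‖ = ‖F z‖ * ‖z‖ ^ k := fun z hz => by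
    have : 0 < ‖z‖ := by linarith [hKn z hz]
    rw [hF, norm_mul, norm_inv, norm_pow, mul_assoc, inv_mul_cancel₀ (by positivity), mul_one]
  have hle : ∀ z ∈ K, ‖F z‖ ≤ ‖F y‖ := by
    intro z hz
    by_cases hzΩ : z ∈ Ω
    · have hb : Bornology.IsBounded Ω :=
        (isBounded_closedBall (x := (0 : ℂ)) (r := 3 * ρ)).subset (hΩK.trans hKb)
      have hd : DiffContOnCl ℂ F Ω :=
        ⟨hFd.mono hΩK, hFd.continuousOn.mono hclK⟩
      refine Complex.norm_le_of_forall_mem_frontier_norm_le hb hd (fun w hw => ?_)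
        (subset_closure hzΩ)
      rw [hΩo.frontier_eq] at hw
      exact hmax ⟨hclK hw.1, hw.2⟩
    · exact hmax ⟨hz, hzΩ⟩
  have hyq : ∀ q ∈ h, 2 ≤ ‖y - q‖ := fun q hq => by
    rw [← dist_eq_norm]
    exact le_trans hy.1.2 (infDist_le_dist_of_mem hq)
  refine ⟨‖F y‖, y, norm_nonneg _, fun z h1 h2 => ?_, hy.1.1, hyq, ?_, (hFn y hy.1).symm⟩
  · rw [hFn z ⟨h1, h2⟩]
    exact mul_le_mul_of_nonneg_right (hle z ⟨h1, h2⟩) (by positivity)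
  · by_cases h3 : ‖y‖ = 3 * ρ
    · exact Or.inl h3
    · right
      have h4 : infDist y h ≤ 2 := by
        by_contra hcon
        exact hy.2 ⟨lt_of_le_of_ne hy.1.1 h3, lt_of_not_ge hcon⟩
      obtain ⟨q, hq, hyq'⟩ := (infDist_lt_iff hne).1 (lt_of_le_of_lt h4 (show (2 : ℝ) < 3 by norm_num))
      refine ⟨q, hq, ?_⟩
      by_contra hcon
      obtain ⟨q', hq', hlt⟩ := (infDist_lt_iff hne).1 (lt_of_le_of_lt h4 (lt_of_not_ge hcon))
      rw [dist_eq_norm] at hlt hyq'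
      have h5 : ‖q - q'‖ < 100 := by
        have := norm_sub_le (y - q') (y - q)
        rw [sub_sub_sub_cancel_left] at this
        linarith
      rw [holes_sep hq hq' h5] at hlt
      exact lt_irrefl _ hlt

lemma exp_neg_le_of_osc {a b : ℝ} (h : |a - b| ≤ 1) : Real.exp (-a) ≤ 3 * Real.exp (-b) := by
  have h1 : Real.exp (-a) ≤ Real.exp (1 + -b) := Real.exp_le_exp.2 (by linarith [(abs_le.1 h).1])
  rw [Real.exp_add] at h1
  have := Real.exp_one_lt_d9
  nlinarith [Real.exp_pos (-b)]

/-- One step of the descent towards the origin. -/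
lemma step {U φ f S : ℂ → ℝ} {H : ℂ → ℂ} {δ ρ ϑ M : ℝ} {k : ℕ} (hU : ContDiff ℝ 2 U) (hδ : 0 < δ)
    (hδ1 : δ ≤ 1 / 100) (hl : ∀ z, |lap U z| ≤ δ * |U z|) (hϑ : 0 < ϑ) (hM : 0 ≤ M)
    (hφ : ∀ z, 1 / 2 ≤ φ z ∧ φ z ≤ 3 / 2) (hUf : ∀ z, U z = φ z * f z) (hf : Differentiable ℝ f)
    (hS : ∀ z z', ‖z‖ ≤ 4 * ρ → ‖z - z'‖ ≤ 10 → |S z - S z'| ≤ 1)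
    (hH : ∀ z, ‖z‖ ≤ 3 * ρ → ‖fderiv ℝ f z‖ ≤ 4 * Real.exp (S z) * (‖H z‖ + ϑ))
    (hHM : ∀ z, ‖z‖ ≤ 3 * ρ → 2 ≤ infDist z (holes U ρ) → ‖H z‖ ≤ M * ‖z‖ ^ k)
    {z z' : ℂ} (hz : 5 ≤ ‖z‖) (hzρ : ‖z‖ ≤ 3 * ρ - 60) (hzz : ‖z - z'‖ ≤ 1) (hz' : ‖z'‖ ≤ ‖z‖) :
    |U z| * Real.exp (-S z) ≤
      30000 * (|U z'| * Real.exp (-S z') + M * ‖z‖ ^ k + ϑ) := by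
  have hseg : ∀ y ∈ segment ℝ z' z, ‖y‖ ≤ ‖z‖ ∧ ‖y - z‖ ≤ 1 ∧ ‖y - z'‖ ≤ 1 := by
    intro y hy
    have h1 := (convex_closedBall (0 : ℂ) ‖z‖).segment_subset (by simpa using hz') (by simp) hy
    have h2 := (convex_closedBall z 1).segment_subset
      (by rw [mem_closedBall, dist_eq_norm, norm_sub_rev]; exact hzz) (by simp) hy
    have h3 := (convex_closedBall z' 1).segment_subset (by simp)
      (by rw [mem_closedBall, dist_eq_norm]; exact hzz) hy
    rw [mem_closedBall, dist_eq_norm] at h1 h2 h3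
    rw [sub_zero] at h1
    exact ⟨h1, h2, h3⟩
  have hSz : Real.exp (-S z) ≤ 3 * Real.exp (-S z') :=
    exp_neg_le_of_osc (hS z z' (by linarith) (by linarith))
  have hMk : 0 ≤ M * ‖z‖ ^ k := by positivity
  have hE := Real.exp_pos (-S z')
  have hUz' := abs_nonneg (U z')
  -- Either the unit segment avoids the holes and the gradient of `f` can be integrated along it, or
  -- it meets a hole on which `U` has no zero and the Harnack inequality applies.
  by_cases hin : ∀ y ∈ segment ℝ z' z, 2 ≤ infDist y (holes U ρ)
  · have hb : ∀ y ∈ segment ℝ z' z,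
        ‖fderiv ℝ f y‖ ≤ 12 * Real.exp (S z) * (M * ‖z‖ ^ k + ϑ) := by
      intro y hy
      obtain ⟨h1, h2, h3⟩ := hseg y hy
      have h4 := exp_neg_le_of_osc (a := -S y) (b := -S z) (by
        rw [neg_sub_neg]
        exact hS z y (by linarith) (by rw [norm_sub_rev]; linarith))
      rw [neg_neg, neg_neg] at h4
      have h5 : ‖H y‖ ≤ M * ‖z‖ ^ k := (hHM y (by linarith) (hin y hy)).trans (by gcongr)
      calc _ ≤ 4 * Real.exp (S y) * (‖H y‖ + ϑ) := hH y (by linarith)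
        _ ≤ 4 * (3 * Real.exp (S z)) * (M * ‖z‖ ^ k + ϑ) := by gcongr
        _ = _ := by ring
    have h1 := (convex_segment z' z).norm_image_sub_le_of_norm_fderiv_le (𝕜 := ℝ)
      (fun y _ => hf y) hb (left_mem_segment ℝ z' z) (right_mem_segment ℝ z' z)
    have h2 : |f z| ≤ |f z'| + 12 * Real.exp (S z) * (M * ‖z‖ ^ k + ϑ) := by
      have h3 : 12 * Real.exp (S z) * (M * ‖z‖ ^ k + ϑ) * ‖z - z'‖ ≤
          12 * Real.exp (S z) * (M * ‖z‖ ^ k + ϑ) := mul_le_of_le_one_right (by positivity) hzz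
      rw [Real.norm_eq_abs] at h1
      have := abs_sub_abs_le_abs_sub (f z) (f z')
      linarith
    have h3 : |U z| ≤ 3 / 2 * |f z| := by
      rw [hUf z, abs_mul, abs_of_pos (show 0 < φ z by linarith [(hφ z).1])]
      exact mul_le_mul_of_nonneg_right (hφ z).2 (abs_nonneg _)
    have h4 : |f z'| ≤ 2 * |U z'| := by
      rw [hUf z', abs_mul, abs_of_pos (show 0 < φ z' by linarith [(hφ z').1])]
      nlinarith [(hφ z').1, abs_nonneg (f z')]
    have h5 : |U z| ≤ 3 * |U z'| + 18 * Real.exp (S z) * (M * ‖z‖ ^ k + ϑ) := by linarith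
    have h6 : Real.exp (S z) * Real.exp (-S z) = 1 := by rw [← Real.exp_add]; simp
    calc _ ≤ (3 * |U z'| + 18 * Real.exp (S z) * (M * ‖z‖ ^ k + ϑ)) * Real.exp (-S z) := by gcongr
      _ = 3 * |U z'| * Real.exp (-S z) + 18 * (M * ‖z‖ ^ k + ϑ) := by
        linear_combination 18 * (M * ‖z‖ ^ k + ϑ) * h6
      _ ≤ 3 * |U z'| * (3 * Real.exp (-S z')) + 18 * (M * ‖z‖ ^ k + ϑ) := by gcongr
      _ ≤ _ := by
        have : 0 ≤ |U z'| * Real.exp (-S z') := by positivity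
        linarith
  · push Not at hin
    obtain ⟨y, hy, hlt⟩ := hin
    obtain ⟨h1, h2, h3⟩ := hseg y hy
    obtain ⟨q, hq, hyq⟩ := (infDist_lt_iff ⟨0, zero_mem_holes U ρ⟩).1 hlt
    rw [dist_eq_norm] at hyq
    have hq0 : q ≠ 0 := by
      rintro rfl
      rw [sub_zero] at hyq
      have := norm_sub_le y (y - z)
      rw [sub_sub_cancel] at this
      linarith
    have hqn : ‖q‖ < 3 * ρ - 50 := by
      have := norm_sub_le y (y - q)
      rw [sub_sub_cancel] at this
      linarith
    have hmem : ∀ w, ‖y - w‖ ≤ 1 → w ∈ closedBall q 3 := fun w hw => by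
      rw [mem_closedBall, dist_eq_norm]
      have := norm_sub_le (y - q) (y - w)
      rw [sub_sub_sub_cancel_left] at this
      linarith
    have h4 := harnack hU hδ.le hδ1 hl (hole_ne hq hq0 hqn) (hmem z h2) (hmem z' h3)
    calc |U z| * Real.exp (-S z) ≤ (10000 * |U z'|) * (3 * Real.exp (-S z')) := by gcongr
      _ ≤ _ := by
        have : 0 ≤ |U z'| * Real.exp (-S z') := by positivity
        linarith

/-- The point at distance `1` from `z` on the segment from `z` to the origin. -/
lemma exists_inner {z : ℂ} (hz : 1 ≤ ‖z‖) : ∃ z', ‖z - z'‖ = 1 ∧ ‖z'‖ = ‖z‖ - 1 := by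
  have h0 : 0 < ‖z‖ := by linarith
  refine ⟨((1 - ‖z‖⁻¹ : ℝ) : ℂ) * z, ?_, ?_⟩
  · have : z - ((1 - ‖z‖⁻¹ : ℝ) : ℂ) * z = ((‖z‖⁻¹ : ℝ) : ℂ) * z := by push_cast; ring
    rw [this, norm_mul, Complex.norm_real, Real.norm_of_nonneg (by positivity),
      inv_mul_cancel₀ h0.ne']
  · have : ‖z‖⁻¹ ≤ 1 := inv_le_one_of_one_le₀ hz
    rw [norm_mul, Complex.norm_real, Real.norm_of_nonneg (by linarith), sub_mul,
      inv_mul_cancel₀ h0.ne', one_mul]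

/-- One unit step towards the origin gains the factor `e ^ (-K)` in `r ^ k`. -/
lemma pow_pred_le {r ρ K : ℝ} {k : ℕ} (hr : 1 ≤ r) (hrρ : r ≤ 3 * ρ) (hK : 0 ≤ K)
    (hk : 3 * K * ρ ≤ k) : (r - 1) ^ k ≤ Real.exp (-K) * r ^ k := by
  have h0 : 0 < r := by linarith
  have h1 : r - 1 ≤ r * Real.exp (-r⁻¹) := by
    have := Real.add_one_le_exp (-r⁻¹)
    calc r - 1 = r * (-r⁻¹ + 1) := by field_simp; ring
      _ ≤ _ := by gcongr
  calc (r - 1) ^ k ≤ (r * Real.exp (-r⁻¹)) ^ k := by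
        gcongr
    _ = Real.exp (-(k / r)) * r ^ k := by
        rw [mul_pow, ← Real.exp_nat_mul, mul_comm]
        congr 2
        ring
    _ ≤ _ := by
        gcongr
        rw [le_div_iff₀ h0]
        nlinarith

/-- Iterating `step`, the weighted values of `U` are controlled by those near the origin and the
size of the holomorphic function. -/
lemma descent {U φ f S : ℂ → ℝ} {H : ℂ → ℂ} {δ ρ ϑ M a K : ℝ} {k : ℕ} (hU : ContDiff ℝ 2 U)
    (hδ : 0 < δ)
    (hδ1 : δ ≤ 1 / 100) (hl : ∀ z, |lap U z| ≤ δ * |U z|) (hϑ : 0 < ϑ) (hM : 0 ≤ M)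
    (hφ : ∀ z, 1 / 2 ≤ φ z ∧ φ z ≤ 3 / 2) (hUf : ∀ z, U z = φ z * f z) (hf : Differentiable ℝ f)
    (hS : ∀ z z', ‖z‖ ≤ 4 * ρ → ‖z - z'‖ ≤ 10 → |S z - S z'| ≤ 1)
    (hH : ∀ z, ‖z‖ ≤ 3 * ρ → ‖fderiv ℝ f z‖ ≤ 4 * Real.exp (S z) * (‖H z‖ + ϑ))
    (hHM : ∀ z, ‖z‖ ≤ 3 * ρ → 2 ≤ infDist z (holes U ρ) → ‖H z‖ ≤ M * ‖z‖ ^ k)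
    (ha : ∀ z, ‖z‖ ≤ 5 → |U z| * Real.exp (-S z) ≤ a) (ha0 : 0 ≤ a) (hK0 : 0 ≤ K)
    (hK : 60000 ≤ Real.exp K) (hk : 3 * K * ρ ≤ k) (n : ℕ) :
    ∀ z, ‖z‖ ≤ 5 + n → ‖z‖ ≤ 3 * ρ - 60 →
      |U z| * Real.exp (-S z) ≤ 60000 ^ n * (a + ϑ) + 60000 * M * ‖z‖ ^ k := by
  have hsmall : ∀ (n : ℕ) (z : ℂ), ‖z‖ ≤ 5 →
      |U z| * Real.exp (-S z) ≤ 60000 ^ n * (a + ϑ) + 60000 * M * ‖z‖ ^ k := by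
    intro n z hz
    have h1 : (1 : ℝ) ≤ 60000 ^ n := one_le_pow₀ (by norm_num)
    have h2 : 0 ≤ 60000 * M * ‖z‖ ^ k := by positivity
    have := ha z hz
    nlinarith
  induction n with
  | zero => intro z hz _; exact hsmall 0 z (by simpa using hz)
  | succ n ih =>
    intro z hz hzρ
    by_cases h5 : ‖z‖ ≤ 5
    · exact hsmall _ z h5
    push Not at h5
    obtain ⟨z', h1, h2⟩ := exists_inner (z := z) (by linarith)
    have h3 := step hU hδ hδ1 hl hϑ hM hφ hUf hf hS hH hHM h5.le hzρ h1.le (by linarith)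
    push_cast at hz
    have h4 := ih z' (by linarith) (by linarith)
    have h6 : 60000 * ‖z'‖ ^ k ≤ ‖z‖ ^ k := by
      rw [h2]
      have := pow_pred_le (r := ‖z‖) (ρ := ρ) (by linarith) (by linarith) hK0 hk
      calc 60000 * (‖z‖ - 1) ^ k ≤ Real.exp K * (Real.exp (-K) * ‖z‖ ^ k) := by
            have h0 : 0 ≤ (‖z‖ - 1) ^ k := pow_nonneg (by linarith) _
            exact mul_le_mul hK this h0 (Real.exp_pos _).le
        _ = ‖z‖ ^ k := by rw [← mul_assoc, ← Real.exp_add]; simp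
    have h7 : M * (60000 * ‖z'‖ ^ k) ≤ M * ‖z‖ ^ k := by gcongr
    have h8 : (1 : ℝ) ≤ 60000 ^ n := one_le_pow₀ (by norm_num)
    have h9 : ϑ ≤ 60000 ^ n * (a + ϑ) := by nlinarith
    rw [pow_succ]
    linarith
end Landis

/-! ### The estimate at unit scale -/

namespace Landis
open MeasureTheory Filter Topology Set
open scoped ContDiff ComplexConjugate Convolution ENNReal

set_option maxHeartbeats 2000000 in
/-- The estimate at unit scale: a solution of a differential inequality with a coefficient of size
`1 / log ρ`, growing at most exponentially, is not too small near the origin. -/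
lemma unit_scale : ∃ c C ρ₀ : ℝ, 0 < c ∧ 0 < C ∧ 1000 ≤ ρ₀ ∧ ∀ (U : ℂ → ℝ) (δ ρ : ℝ) (z₁ : ℂ),
    ContDiff ℝ 2 U → 0 < δ → δ ≤ 1 / 100 → (∀ z, |lap U z| ≤ δ * |U z|) → ρ₀ ≤ ρ →
    δ * Real.log ρ ≤ c → (∀ z, ‖z‖ ≤ 4 * ρ → |U z| ≤ Real.exp ρ) → ‖z₁‖ = ρ → 1 ≤ |U z₁| →
    ∃ z ∈ ball (0 : ℂ) 20, Real.exp (-(C * (ρ * Real.log ρ))) ≤ |U z| := by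
  obtain ⟨c, C, hc, hC, hred⟩ := reduction
  obtain ⟨Cg, hCg, hgrad⟩ := gradient_bound
  set Q := 30000 * (C * (1 + Cg)) with hQ
  have hQ0 : 0 < Q := by positivity
  set K := Real.log (240000 * (Q + 1)) with hK
  have hKe : Real.exp K = 240000 * (Q + 1) := Real.exp_log (by positivity)
  have hK4 : 4 ≤ K := by
    rw [hK, Real.le_log_iff_exp_le (by positivity)]
    have h1 : Real.exp 4 = Real.exp 1 ^ 4 := by rw [← Real.exp_nat_mul]; norm_num
    have h2 : Real.exp 1 ^ 4 ≤ 3 ^ 4 := by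
      gcongr
      linarith [Real.exp_one_lt_d9]
    rw [h1]
    nlinarith
  refine ⟨c, 20 * K, 1000 + K, hc, by linarith, by linarith, ?_⟩
  intro U δ ρ z₁ hU hδ hδ1 hl hρ₀ hδρ hgr hz₁ hUz₁
  have hρ : 1000 ≤ ρ := by linarith
  have hKρ : K ≤ ρ := by linarith
  by_contra hcon
  push Not at hcon
  set b := Real.exp (-(20 * K * (ρ * Real.log ρ))) with hb
  have hb0 : 0 < b := Real.exp_pos _
  obtain ⟨φ, f, S, H, hφ, hUf, hf, hS0, hS, hHd, hHf, hHb⟩ :=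
    hred U δ ρ b hU hδ hδ1 hl hρ hδρ hb0
  set k := ⌈3 * K * ρ⌉₊ with hk
  have hk1 : 3 * K * ρ ≤ k := Nat.le_ceil _
  have hk2 : (k : ℝ) ≤ 4 * K * ρ := by
    have := (Nat.ceil_lt_add_one (show 0 ≤ 3 * K * ρ by nlinarith)).le
    rw [← hk] at this
    nlinarith
  obtain ⟨M, y, hM, hHM, hy, hyq, hyb, hMy⟩ := max_principle hρ hHd k
  -- weighted bounds near the origin
  have ha : ∀ z, ‖z‖ ≤ 5 → |U z| * Real.exp (-S z) ≤ 3 * b := by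
    intro z hz
    have h1 := (hcon z (by rw [mem_ball_zero_iff]; linarith)).le
    have h2 := exp_neg_le_of_osc (hS z 0 (by linarith) (by rw [sub_zero]; linarith))
    rw [hS0] at h2
    simp only [neg_zero, Real.exp_zero] at h2
    calc _ ≤ b * (3 * 1) := by gcongr
      _ = _ := by ring
  set n := ⌈3 * ρ⌉₊ with hn
  have hn1 : 3 * ρ ≤ n := Nat.le_ceil _
  have hn2 : (n : ℝ) ≤ 4 * ρ := by
    have := (Nat.ceil_lt_add_one (show 0 ≤ 3 * ρ by linarith)).le
    rw [← hn] at this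
    linarith
  have hdes := fun z (hz : ‖z‖ ≤ 3 * ρ - 60) => descent hU hδ hδ1 hl hb0 hM hφ hUf hf hS hHf hHM ha
    (by positivity) (by linarith) (by rw [hKe]; linarith) hk1 n z (by linarith) hz
  set Y := (60000 : ℝ) ^ n * (3 * b + b) with hY
  have hbY : b ≤ Y := by
    have : (1 : ℝ) ≤ 60000 ^ n := one_le_pow₀ (by norm_num)
    nlinarith
  have hlog1 : 1 ≤ Real.log ρ := by
    rw [Real.le_log_iff_exp_le (by linarith)]
    linarith [Real.exp_one_lt_d9]
  have hlog0 : 0 ≤ Real.log ρ := by linarith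
  have hYle : Y ≤ Real.exp (4 * K * ρ) * (4 * b) := by
    have h1 : (60000 : ℝ) ^ n ≤ Real.exp K ^ n := by
      gcongr
      rw [hKe]; linarith
    rw [← Real.exp_nat_mul] at h1
    have h2 : Real.exp (n * K) ≤ Real.exp (4 * K * ρ) := Real.exp_le_exp.2 (by nlinarith)
    have h3 : 3 * b + b = 4 * b := by ring
    rw [hY, h3]
    exact mul_le_mul_of_nonneg_right (h1.trans h2) (by positivity)
  have hρk : ρ ^ k ≤ Real.exp (4 * K * ρ * Real.log ρ) := by
    have h1 : ρ ^ k = Real.exp (k * Real.log ρ) := by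
      rw [Real.exp_nat_mul, Real.exp_log (by linarith)]
    rw [h1]
    exact Real.exp_le_exp.2 (by gcongr)
  set X := Real.exp K * (Real.exp (4 * K * ρ) * Real.exp (4 * K * ρ * Real.log ρ)) * (4 * b) with hX
  have hρL : ρ ≤ ρ * Real.log ρ := by nlinarith
  have hXs : 4 * X ≤ Real.exp (-ρ) := by
    have h4 : (16 : ℝ) ≤ Real.exp K := by rw [hKe]; linarith
    calc 4 * X = 16 * (Real.exp K * (Real.exp (4 * K * ρ) * Real.exp (4 * K * ρ * Real.log ρ)) * b) := by
          rw [hX]; ring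
      _ ≤ Real.exp K * (Real.exp K * (Real.exp (4 * K * ρ) * Real.exp (4 * K * ρ * Real.log ρ)) * b) := by
          gcongr
      _ = Real.exp (K + (K + (4 * K * ρ + 4 * K * ρ * Real.log ρ) + -(20 * K * (ρ * Real.log ρ)))) := by
          simp only [hb, Real.exp_add]
      _ ≤ Real.exp (-ρ) := by
          refine Real.exp_le_exp.2 ?_
          have h5 : K * ρ ≤ K * (ρ * Real.log ρ) := by gcongr
          have h6 : 1 * K ≤ ρ * K := by gcongr; linarith
          have h7 : 4 * ρ ≤ K * ρ := by gcongr
          nlinarith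
  have hX0 : 0 < X := by positivity
  have hE1 : (1 : ℝ) ≤ Real.exp (4 * K * ρ) := Real.one_le_exp (by positivity)
  have hE2 : (1 : ℝ) ≤ Real.exp (4 * K * ρ * Real.log ρ) := Real.one_le_exp (by positivity)
  have hYX : Y ≤ X := by
    refine hYle.trans ?_
    rw [hX]
    refine mul_le_mul_of_nonneg_right ?_ (by positivity)
    have h1 : (1 : ℝ) ≤ Real.exp K := Real.one_le_exp (by linarith)
    calc Real.exp (4 * K * ρ) = 1 * (Real.exp (4 * K * ρ) * 1) := by ring
      _ ≤ _ := by gcongr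
  have hSb : ∀ z, ‖z‖ ≤ 3 * ρ → Real.exp (-S z) ≤ Real.exp ρ := fun z hz => by
    refine Real.exp_le_exp.2 ?_
    have := abs_le.1 (chain_bound hS0 hS (show ‖z‖ ≤ 4 * ρ by linarith))
    linarith
  have hgU : ∀ z M', (∀ w ∈ ball z 1, |U w| ≤ M') → |U z| + ‖gr U z‖ ≤ (1 + Cg) * M' := by
    intro z M' h
    have h1 := h z (mem_ball_self one_pos)
    have h2 := hgrad U z M' hU fun w hw =>
      ⟨(hl w).trans (mul_le_of_le_one_left (abs_nonneg _) (by linarith)), h w hw⟩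
    linarith
  have hQC : C * (1 + Cg) ≤ Q := by
    have : 0 < C * (1 + Cg) := by positivity
    linarith
  have hyb' := hHb y hy hyq (hyb.imp_right fun ⟨q, hq, h⟩ => ⟨q, hq, by linarith⟩)
  rw [← hMy] at hyb'
  have hy2 : 2 ≤ ‖y‖ := by simpa using hyq 0 (zero_mem_holes U ρ)
  -- the size of the holomorphic function is controlled at the extremal boundary point
  have hmain : 60000 * M * ρ ^ k ≤ max (Real.exp (-ρ) / 4) X := by
    -- Near the outer circle `e ^ ρ` bounds `U` and `e ^ (-S)`, while `(‖y‖ / ρ) ^ k ≥ e ^ (6ρ)`.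
    by_cases hout : 3 * ρ - 60 < ‖y‖
    · refine le_max_of_le_left ?_
      have h1 := hgU y (Real.exp ρ) fun w hw => hgr w (by
        rw [mem_ball, dist_eq_norm] at hw
        have := norm_add_le (w - y) y
        rw [sub_add_cancel] at this
        linarith)
      have h2 : M * ‖y‖ ^ k ≤ (Q + 1) * (Real.exp ρ * Real.exp ρ) := by
        have hb1 : b ≤ Real.exp ρ * Real.exp ρ := by
          rw [hb, ← Real.exp_add]
          refine Real.exp_le_exp.2 ?_
          have : 0 ≤ 20 * K * (ρ * Real.log ρ) := by positivity
          linarith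
        calc _ ≤ C * Real.exp (-S y) * (|U y| + ‖gr U y‖) + b := hyb'
          _ ≤ C * Real.exp ρ * ((1 + Cg) * Real.exp ρ) + Real.exp ρ * Real.exp ρ := by
              gcongr
              exact Real.exp_le_exp.1 (hSb y hy)
          _ = (C * (1 + Cg) + 1) * (Real.exp ρ * Real.exp ρ) := by ring
          _ ≤ _ := by gcongr
      have h3 : ρ * Real.exp (1 / 2) ≤ ‖y‖ := by
        have : Real.exp (1 / 2) ≤ 2 := by
          have h4 : Real.exp (1 / 2) * Real.exp (1 / 2) = Real.exp 1 := by
            rw [← Real.exp_add]; norm_num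
          have := Real.exp_one_lt_d9
          nlinarith [Real.exp_pos (1 / 2)]
        nlinarith
      have h4 : ρ ^ k * Real.exp (6 * ρ) ≤ ‖y‖ ^ k := by
        calc _ ≤ ρ ^ k * Real.exp (1 / 2) ^ k := by
              gcongr
              rw [← Real.exp_nat_mul]
              refine Real.exp_le_exp.2 ?_
              nlinarith
          _ = (ρ * Real.exp (1 / 2)) ^ k := (mul_pow _ _ _).symm
          _ ≤ _ := by gcongr
      have h5 : M * ρ ^ k * Real.exp (6 * ρ) ≤ (Q + 1) * (Real.exp ρ * Real.exp ρ) := by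
        refine le_trans ?_ h2
        rw [mul_assoc]
        gcongr
      have h6 : 60000 * M * ρ ^ k * Real.exp (6 * ρ) ≤ Real.exp (-ρ) / 4 * Real.exp (6 * ρ) := by
        calc _ = 60000 * (M * ρ ^ k * Real.exp (6 * ρ)) := by ring
          _ ≤ 60000 * ((Q + 1) * (Real.exp ρ * Real.exp ρ)) := by gcongr
          _ = Real.exp K * (Real.exp ρ * Real.exp ρ) / 4 := by rw [hKe]; ring
          _ ≤ Real.exp (-ρ) * Real.exp (6 * ρ) / 4 := by
              rw [← Real.exp_add, ← Real.exp_add, ← Real.exp_add]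
              exact div_le_div_of_nonneg_right (Real.exp_le_exp.2 (by linarith)) (by norm_num)
          _ = _ := by ring
      exact le_of_mul_le_mul_right h6 (Real.exp_pos _)
    · push Not at hout
      refine le_max_of_le_right ?_
      have hfin : M ≤ 4 * (Q + 1) * Y → 60000 * M * ρ ^ k ≤ X := by
        intro h
        calc 60000 * M * ρ ^ k ≤ 60000 * (4 * (Q + 1) * Y) * Real.exp (4 * K * ρ * Real.log ρ) := by
              gcongr
          _ = Real.exp K * Y * Real.exp (4 * K * ρ * Real.log ρ) := by rw [hKe]; ring
          _ ≤ Real.exp K * (Real.exp (4 * K * ρ) * (4 * b)) * Real.exp (4 * K * ρ * Real.log ρ) := by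
              gcongr
          _ = X := by rw [hX]; ring
      refine hfin ?_
      have hyk : M ≤ M * ‖y‖ ^ k := le_mul_of_one_le_right hM (one_le_pow₀ (by linarith))
      obtain ⟨q, hq, hyq2⟩ : ∃ q ∈ holes U ρ, ‖y - q‖ ≤ 2 := by
        rcases hyb with h | h
        · linarith
        · exact h
      -- Next to the hole at the origin `U` is at most `b` by assumption.
      by_cases hq0 : q = 0
      · rw [hq0, sub_zero] at hyq2
        have h1 := hgU y b fun w hw => (hcon w (by
          rw [mem_ball, dist_eq_norm] at hw
          rw [mem_ball_zero_iff]
          have := norm_add_le (w - y) y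
          rw [sub_add_cancel] at this
          linarith)).le
        have h2 := exp_neg_le_of_osc (hS y 0 (by linarith) (by rw [sub_zero]; linarith))
        rw [hS0] at h2
        simp only [neg_zero, Real.exp_zero, mul_one] at h2
        have h3 : M ≤ (Q + 1) * b := by
          calc M ≤ _ := hyk
            _ ≤ C * Real.exp (-S y) * (|U y| + ‖gr U y‖) + b := hyb'
            _ ≤ C * 3 * ((1 + Cg) * b) + b := by gcongr
            _ ≤ _ := by
              have : 0 ≤ C * (1 + Cg) * b := by positivity
              rw [hQ]
              nlinarith
        have h4 : (Q + 1) * b ≤ (Q + 1) * Y := by gcongr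
        have h5 : 0 < (Q + 1) * Y := by positivity
        linarith
      · have hqn : ‖q‖ < 3 * ρ - 50 := by
          have := norm_sub_le y (y - q)
          rw [sub_sub_cancel] at this
          linarith
        -- The point `w` is one unit step closer to the origin, which gains the factor `e ^ (-K)` and allows
        -- absorbing the term with `M`; Harnack compares `U` near `y` with `U w`.
        obtain ⟨w, hw1, hw2⟩ := exists_inner (z := y) (by linarith)
        have hwq : w ∈ closedBall q 3 := by
          rw [mem_closedBall, dist_eq_norm]
          have := norm_sub_le (y - q) (y - w)
          rw [sub_sub_sub_cancel_left] at this
          linarith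
        have h1 := hgU y (10000 * |U w|) fun x hx => harnack hU hδ.le hδ1 hl (hole_ne hq hq0 hqn) (by
          rw [mem_ball, dist_eq_norm] at hx
          rw [mem_closedBall, dist_eq_norm]
          have := norm_add_le (x - y) (y - q)
          rw [sub_add_sub_cancel] at this
          linarith) hwq
        have h2 := exp_neg_le_of_osc (hS y w (by linarith) (by linarith))
        have h3 := hdes w (by linarith)
        rw [hw2] at h3
        have h4 := pow_pred_le (r := ‖y‖) (ρ := ρ) (by linarith) hy (by linarith) hk1
        have h5 : M * ‖y‖ ^ k ≤ Q * (Y + 60000 * M * (Real.exp (-K) * ‖y‖ ^ k)) + b := by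
          calc _ ≤ C * Real.exp (-S y) * (|U y| + ‖gr U y‖) + b := hyb'
            _ ≤ C * (3 * Real.exp (-S w)) * ((1 + Cg) * (10000 * |U w|)) + b := by gcongr
            _ = Q * (|U w| * Real.exp (-S w)) + b := by rw [hQ]; ring
            _ ≤ Q * (Y + 60000 * M * (‖y‖ - 1) ^ k) + b := by gcongr
            _ ≤ _ := by gcongr
        have h6 : Q * (60000 * M * (Real.exp (-K) * ‖y‖ ^ k)) ≤ M * ‖y‖ ^ k / 4 := by
          rw [Real.exp_neg, hKe]
          have h7 : Q * 60000 * (240000 * (Q + 1))⁻¹ ≤ 1 / 4 := by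
            rw [mul_inv_le_iff₀ (by positivity)]
            linarith
          have h8 : 0 ≤ M * ‖y‖ ^ k := by positivity
          calc _ = Q * 60000 * (240000 * (Q + 1))⁻¹ * (M * ‖y‖ ^ k) := by ring
            _ ≤ 1 / 4 * (M * ‖y‖ ^ k) := by gcongr
            _ = _ := by ring
        have h9 : 0 < Q * Y := by positivity
        nlinarith
  have hz := hdes z₁ (by linarith)
  rw [hz₁] at hz
  have hlow : Real.exp (-(ρ / 10 + 1)) ≤ |U z₁| * Real.exp (-S z₁) := by
    have h1 := abs_le.1 (chain_bound hS0 hS (show ‖z₁‖ ≤ 4 * ρ by linarith))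
    rw [hz₁] at h1
    have h2 : Real.exp (-(ρ / 10 + 1)) ≤ Real.exp (-S z₁) := Real.exp_le_exp.2 (by linarith)
    exact h2.trans (le_mul_of_one_le_left (Real.exp_pos _).le hUz₁)
  have hlow2 : Real.exp (-ρ) ≤ Real.exp (-(ρ / 10 + 1)) := Real.exp_le_exp.2 (by linarith)
  have hpos := Real.exp_pos (-ρ)
  have hmax : max (Real.exp (-ρ) / 4) X ≤ Real.exp (-ρ) / 4 := max_le le_rfl (by linarith)
  linarith

end Landis

/-! ### Rescaling -/

namespace Landis
open MeasureTheory Filter Topology Set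
open scoped ContDiff ComplexConjugate Convolution ENNReal

lemma fderiv_scale {u : ℂ → ℝ} (hu : Differentiable ℝ u) (x : ℂ) (ε : ℝ) (y v : ℂ) :
    fderiv ℝ (fun z => u (x + ε * z)) y v = ε * fderiv ℝ u (x + ε * y) v := by
  have h1 : HasFDerivAt (fun z : ℂ => x + ε * z) ((ε : ℂ) • ContinuousLinearMap.id ℝ ℂ) y :=
    ((hasFDerivAt_id y).const_mul (ε : ℂ)).const_add x
  have h2 := HasFDerivAt.comp (g := u) y (hu (x + ε * y)).hasFDerivAt h1
  rw [show (fun z => u (x + ε * z)) = u ∘ fun z : ℂ => x + ε * z from rfl, h2.fderiv]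
  have h3 : (ε : ℂ) * v = ε • v := by simp
  change fderiv ℝ u (x + ε * y) ((ε : ℂ) * v) = _
  rw [h3, map_smul, smul_eq_mul]

lemma lap_scale {u : ℂ → ℝ} (hu : ContDiff ℝ 2 u) (x : ℂ) (ε : ℝ) (y : ℂ) :
    lap (fun z => u (x + ε * z)) y = ε ^ 2 * lap u (x + ε * y) := by
  have hd : ∀ v, Differentiable ℝ fun w => fderiv ℝ u w v := fun v =>
    ((hu.fderiv_right (m := 1) (by norm_num)).clm_apply contDiff_const).differentiable (by norm_num)
  have h1 : ∀ v, fderiv ℝ (fun w => fderiv ℝ (fun z => u (x + ε * z)) w v) y v =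
      ε ^ 2 * fderiv ℝ (fun w => fderiv ℝ u w v) (x + ε * y) v := by
    intro v
    have h2 : (fun w => fderiv ℝ (fun z => u (x + ε * z)) w v) =
        fun w : ℂ => ε * (fun z => fderiv ℝ u z v) (x + ε * w) :=
      funext fun w => fderiv_scale (hu.differentiable (by norm_num)) x ε w v
    have h3 : DifferentiableAt ℝ (fun w : ℂ => (fun z => fderiv ℝ u z v) (x + ε * w)) y :=
      ((hd v) _).comp y (by fun_prop)
    rw [h2, fderiv_const_mul h3]
    change ε * fderiv ℝ (fun w : ℂ => (fun z => fderiv ℝ u z v) (x + ε * w)) y v = _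
    rw [fderiv_scale (hd v)]
    ring
  unfold lap
  rw [h1, h1]
  ring

/-- The radii for which the rescaling produces admissible parameters. -/
lemma radii (σ B : ℝ) (hσ : 0 < σ) : ∃ R₀ > (0 : ℝ), ∀ R, R₀ ≤ R →
    B ≤ R ∧ 1 ≤ R ∧ B ^ 2 ≤ Real.log R ∧ B ≤ Real.log R ∧ 900 ≤ Real.log R ∧
      Real.log R ≤ σ * R := by
  have hlog := Real.tendsto_log_atTop
  have h6 : ∀ᶠ R in atTop, Real.log R ≤ σ * R := by
    have := Real.isLittleO_log_id_atTop.bound hσ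
    filter_upwards [this, eventually_ge_atTop (0 : ℝ)] with R hR hR0
    rw [Real.norm_eq_abs, Real.norm_eq_abs, id, abs_of_nonneg hR0] at hR
    exact (le_abs_self _).trans hR
  obtain ⟨R₀, h⟩ := eventually_atTop.1 ((eventually_ge_atTop B).and ((eventually_ge_atTop 1).and
    ((hlog.eventually_ge_atTop (B ^ 2)).and ((hlog.eventually_ge_atTop B).and
      ((hlog.eventually_ge_atTop 900).and h6)))))
  exact ⟨max R₀ 1, by positivity, fun R hR => h R ((le_max_left _ _).trans hR)⟩

end Landis

set_option maxHeartbeats 1000000 in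
/-- Quantitative Landis theorem of Logunov–Malinnikova–Nadirashvili–Nazarov (bounded
potentials): if `|V| ≤ a₀²`, `u` solves `-Δu + Vu = 0` in `ℝ²`, `|u 0| = 1` and
`|u w| ≤ exp (c₀ |w|)`, then there are `C₀ = C₀(a₀, c₀) > 0` and `R₀ > 0` such that for
all `R ≥ R₀` and every `w₀` with `|w₀| = R`,
`sup_{B₁(w₀)} |u| ≥ exp (-C₀ R (log R)^{3/2})`. -/
theorem landis_bounded_potential (a₀ c₀ : ℝ) (ha₀ : 0 < a₀) :
    ∃ C₀ > (0 : ℝ), ∃ R₀ > (0 : ℝ),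
      ∀ (V u : ℂ → ℝ),
        (∀ w : ℂ, |V w| ≤ a₀ ^ 2) →
        ContDiff ℝ 2 u →
        (∀ z : ℂ, -lap u z + V z * u z = 0) →
        |u 0| = 1 →
        (∀ w : ℂ, |u w| ≤ Real.exp (c₀ * ‖w‖)) →
        ∀ R : ℝ, R₀ ≤ R → ∀ w₀ : ℂ, ‖w₀‖ = R →
          Real.exp (-(C₀ * R * Real.log R ^ ((3 : ℝ) / 2))) ≤
            sSup ((fun z => |u z|) '' ball w₀ 1) := by
  obtain ⟨c, C, ρ₀, hc, hC, hρ₀, hunit⟩ := Landis.unit_scale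
  -- the length scale is `σ / √(log R)`
  set σ := min 1 (c / (2 * a₀ ^ 2)) with hσ
  have hσ0 : 0 < σ := by positivity
  have hσ1 : σ ≤ 1 := min_le_left _ _
  have hσc : 2 * (a₀ ^ 2 * σ) ≤ c := by
    have := min_le_right 1 (c / (2 * a₀ ^ 2))
    rw [← hσ, le_div_iff₀ (by positivity)] at this
    linarith
  obtain ⟨R₀, hR₀, hrad⟩ := Landis.radii σ (max ρ₀ (max (50 * c) (5 * |c₀|))) hσ0
  refine ⟨2 * C / σ, by positivity, R₀, hR₀, ?_⟩
  intro V u hV hu hsol hu0 hgrow R hR w₀ hw₀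
  obtain ⟨hR1, hR2, hR3, hR4, hR5, hR6⟩ := hrad R hR
  set B := max ρ₀ (max (50 * c) (5 * |c₀|)) with hB
  have hB1 : ρ₀ ≤ B := le_max_left _ _
  have hB2 : 50 * c ≤ B := (le_max_left _ _).trans (le_max_right _ _)
  have hB3 : 5 * |c₀| ≤ B := (le_max_right _ _).trans (le_max_right _ _)
  set L := Real.log R with hL
  have hL0 : 0 < L := by linarith
  set s := Real.sqrt L with hs
  have hs0 : 0 < s := Real.sqrt_pos.2 hL0
  have hss : s * s = L := Real.mul_self_sqrt hL0.le
  have hs30 : 30 ≤ s := Real.le_sqrt_of_sq_le (by norm_num; exact hR5)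
  have hsB : B ≤ s := Real.le_sqrt_of_sq_le hR3
  set ε := σ / s with hε
  have hε0 : 0 < ε := by positivity
  have hε20 : ε * 20 < 1 := by
    rw [hε, div_mul_eq_mul_div, div_lt_one hs0]
    linarith
  set ρ := R / ε with hρ
  have hR0 : 0 < R := by linarith
  have hρe : ρ = R * s / σ := by rw [hρ, hε]; field_simp
  have hερ : ε * ρ = R := by rw [hρ]; field_simp
  have hρR : R * s ≤ ρ := by
    rw [hρe, le_div_iff₀ hσ0]
    exact mul_le_of_le_one_right (by positivity) hσ1
  have hρ0 : 0 < ρ := by positivity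
  have hlogρ : Real.log ρ ≤ 2 * L := by
    have h1 : ρ ≤ R ^ 2 := by
      rw [hρe, div_le_iff₀ hσ0]
      have h0 : s ≤ L := by nlinarith
      calc R * s ≤ R * (σ * R) := by gcongr; linarith
        _ = R ^ 2 * σ := by ring
    have h2 := Real.log_le_log hρ0 h1
    rw [Real.log_pow] at h2
    exact_mod_cast h2
  set δ := a₀ ^ 2 * ε ^ 2 with hδ
  have hδ0 : 0 < δ := by positivity
  have hδL : δ * (2 * L) ≤ c := by
    have h1 : ε ^ 2 * L = σ ^ 2 := by
      rw [hε, div_pow, ← hss]; field_simp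
    have h2 : σ ^ 2 ≤ σ := by nlinarith
    calc δ * (2 * L) = 2 * (a₀ ^ 2 * (ε ^ 2 * L)) := by rw [hδ]; ring
      _ ≤ 2 * (a₀ ^ 2 * σ) := by rw [h1]; gcongr
      _ ≤ c := hσc
  have hδ1 : δ ≤ 1 / 100 := by
    by_contra hcon
    push Not at hcon
    have h1 : 1 / 100 * (2 * L) < δ * (2 * L) := by gcongr
    linarith
  obtain ⟨z, hz, hzU⟩ := hunit (fun z => u (w₀ + ε * z)) δ ρ (-(w₀ / ε)) (hu.comp (by fun_prop)) hδ0 hδ1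
    (fun z => by
      rw [Landis.lap_scale hu, abs_mul, abs_of_nonneg (sq_nonneg ε)]
      have h1 : lap u (w₀ + ε * z) = V (w₀ + ε * z) * u (w₀ + ε * z) := by
        linarith [hsol (w₀ + ε * z)]
      rw [h1, abs_mul]
      calc _ ≤ ε ^ 2 * (a₀ ^ 2 * |u (w₀ + ε * z)|) := by gcongr; exact hV _
        _ = _ := by rw [hδ]; ring)
    (by linarith [le_mul_of_one_le_right hR0.le (show 1 ≤ s by linarith)])
    ((mul_le_mul_of_nonneg_left hlogρ hδ0.le).trans hδL)
    (fun z hz => by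
      refine (hgrow _).trans (Real.exp_le_exp.2 ?_)
      have h1 : ‖w₀ + ε * z‖ ≤ 5 * R := by
        have h2 := norm_add_le w₀ (ε * z)
        rw [norm_mul, Complex.norm_real, Real.norm_of_nonneg hε0.le] at h2
        have h3 : ε * ‖z‖ ≤ ε * (4 * ρ) := by gcongr
        linarith
      calc c₀ * ‖w₀ + ε * z‖ ≤ |c₀| * (5 * R) :=
            mul_le_mul (le_abs_self _) h1 (norm_nonneg _) (abs_nonneg _)
        _ = R * (5 * |c₀|) := by ring
        _ ≤ R * s := by gcongr; linarith
        _ ≤ ρ := hρR)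
    (by
      rw [norm_neg, norm_div, Complex.norm_real, Real.norm_of_nonneg hε0.le, hw₀])
    (by
      have : w₀ + ε * -(w₀ / ε) = 0 := by
        have : (ε : ℂ) ≠ 0 := by rw [Ne, Complex.ofReal_eq_zero]; exact hε0.ne'
        field_simp
        ring
      simp only [this]
      exact hu0.ge)
  rw [mem_ball_zero_iff] at hz
  have hmem : w₀ + ε * z ∈ ball w₀ 1 := by
    rw [mem_ball, dist_eq_norm, add_sub_cancel_left, norm_mul, Complex.norm_real,
      Real.norm_of_nonneg hε0.le]
    nlinarith
  have hbdd : BddAbove ((fun z => |u z|) '' ball w₀ 1) :=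
    (((isCompact_closedBall w₀ 1).image hu.continuous.abs).bddAbove).mono
      (Set.image_mono ball_subset_closedBall)
  refine le_trans ?_ (le_csSup hbdd ⟨_, hmem, rfl⟩)
  refine le_trans (Real.exp_le_exp.2 (neg_le_neg ?_)) hzU
  have h32 : L ^ ((3 : ℝ) / 2) = L * s := by
    rw [hs, Real.sqrt_eq_rpow, show (3 : ℝ) / 2 = 1 + 1 / 2 by norm_num, Real.rpow_add hL0,
      Real.rpow_one]
  rw [h32]
  calc C * (ρ * Real.log ρ) ≤ C * (ρ * (2 * L)) := by gcongr
    _ = _ := by rw [hρe]; ring
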